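/- In the limiting case p = 1 the VSI theorem reduces to: a vector field ℓ on an n-dimensional Lorentzian spacetime (M, g) is VSI (all scalar polynomial invariants constructed from the 1-form ℓ_a and its covariant derivatives of arbitrary order vanish) if and only if ℓ is a Kundt null vector field which is affinely parameterized, and g is a degenerate Kundt metric with respect to ℓ. -/

import Mathlib

open scoped BigOperators

noncomputable section

namespace VSI

/-! ### Basic setup: tensor fields on an `n`-dimensional coordinate chart -/

/-- A point of an `n`-dimensional coordinate chart. -/
abbrev Pt (n : ℕ) := Fin n → ℝ

/-- A covariant tensor field of rank `k`, given by its components. -/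
abbrev TensorField (n k : ℕ) := Pt n → (Fin k → Fin n) → ℝ

/-- A vector field, given by its components. -/
abbrev VecField (n : ℕ) := Pt n → Fin n → ℝ

/-- A field of `n × n` matrices (e.g. a metric). -/
abbrev MetricField (n : ℕ) := Pt n → Matrix (Fin n) (Fin n) ℝ

/-- Partial derivative of a scalar function along the `a`-th coordinate. -/
def pd {n : ℕ} (f : Pt n → ℝ) (a : Fin n) (x : Pt n) : ℝ :=
  fderiv ℝ f x (Pi.single a 1)

/-- Partial derivative masked to the transverse directions (coordinates `≥ 2`). -/
def pdT {n : ℕ} (f : Pt n → ℝ) (a : Fin n) (x : Pt n) : ℝ :=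
  if 2 ≤ (a : ℕ) then pd f a x else 0

/-- A function on the chart is independent of the coordinate `r` (coordinate number 1). -/
def IndepOfR {n : ℕ} {α : Type*} (f : Pt n → α) : Prop :=
  ∀ x x' : Pt n, (∀ i : Fin n, (i : ℕ) ≠ 1 → x i = x' i) → f x = f x'

/-- A smooth symmetric metric of Lorentzian signature `(-,+,…,+)`. -/
def IsLorentzMetric {n : ℕ} (g : MetricField n) : Prop :=
  (∀ a b, ContDiff ℝ (⊤ : ℕ∞) fun x => g x a b) ∧ (∀ x, (g x).IsSymm) ∧
  (∀ x, ∃ P : Matrix (Fin n) (Fin n) ℝ, IsUnit P.det ∧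
    P.transpose * g x * P = Matrix.diagonal fun i : Fin n => if (i : ℕ) = 0 then (-1 : ℝ) else 1)

/-- Metric pairing of two vectors at a point. -/
def gdot {n : ℕ} (g : MetricField n) (x : Pt n) (X Y : Fin n → ℝ) : ℝ :=
  ∑ a, ∑ b, g x a b * X a * Y b

/-- Index lowering of a vector field. -/
def lower {n : ℕ} (g : MetricField n) (ℓ : VecField n) (x : Pt n) (a : Fin n) : ℝ :=
  ∑ b, g x a b * ℓ x b

/-- The 1-form (rank-1 covariant tensor field) associated with a vector field. -/
def lowerField {n : ℕ} (g : MetricField n) (ℓ : VecField n) : TensorField n 1 :=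
  fun x idx => lower g ℓ x (idx 0)

/-- Christoffel symbols `Γ^a_{bc}` of the Levi-Civita connection of `g`. -/
def christoffel {n : ℕ} (g : MetricField n) (x : Pt n) (a b c : Fin n) : ℝ :=
  (1/2) * ∑ d, (g x)⁻¹ a d *
    (pd (fun y => g y d c) b x + pd (fun y => g y b d) c x - pd (fun y => g y b c) d x)

/-- Covariant derivative of a covariant tensor field; the new (derivative) index is
the first index of the result. -/
def covD {n k : ℕ} (g : MetricField n) (T : TensorField n k) : TensorField n (k+1) :=
  fun x idx =>
    pd (fun y => T y fun m => idx m.succ) (idx 0) x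
    - ∑ m : Fin k, ∑ e : Fin n,
        christoffel g x e (idx 0) (idx m.succ) * T x (Function.update (fun m' => idx m'.succ) m e)

/-- Iterated covariant derivative. -/
def covDIter {n k : ℕ} (g : MetricField n) (T : TensorField n k) : (I : ℕ) → TensorField n (k + I)
  | 0 => T
  | I + 1 => covD g (covDIter g T I)

/-! ### Scalar polynomial invariants and tensor concomitants -/

/-- A scheme describing a polynomial concomitant of a rank-`k` tensor field: a full
metric contraction of a tensor product of covariant derivatives (of orders `ord j`)
of the field, with `r` free indices left over.  `m` is the number of contracted
index pairs; `slots` enumerates all index slots of the tensor product. -/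
structure ConcomScheme (k r : ℕ) where
  N : ℕ
  hN : 0 < N
  ord : Fin N → ℕ
  m : ℕ
  slots : ((Fin m × Bool) ⊕ Fin r) ≃ (Σ j : Fin N, Fin (k + ord j))

/-- The value of a concomitant scheme: all contracted index pairs are contracted with
the inverse metric. -/
def ConcomScheme.value {k r : ℕ} (S : ConcomScheme k r) {n : ℕ} (g : MetricField n)
    (T : TensorField n k) : TensorField n r := fun x free =>
  ∑ φ : Fin S.m × Bool → Fin n,
    (∏ i : Fin S.m, (g x)⁻¹ (φ (i, false)) (φ (i, true))) *
    ∏ j : Fin S.N, covDIter g T (S.ord j) x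
      (fun s => Sum.elim φ free (S.slots.symm ⟨j, s⟩))

/-- All scalar polynomial invariants constructed from `T` and its covariant
derivatives up to order `I` vanish. -/
def IsVSIUpTo {n k : ℕ} (g : MetricField n) (T : TensorField n k) (I : ℕ) : Prop :=
  ∀ S : ConcomScheme k 0, (∀ j, S.ord j ≤ I) → ∀ x v, S.value g T x v = 0

/-- All scalar polynomial invariants of arbitrary order vanish. -/
def IsVSI {n k : ℕ} (g : MetricField n) (T : TensorField n k) : Prop :=
  ∀ I : ℕ, IsVSIUpTo g T I

/-- All zeroth order scalar polynomial invariants of `T` vanish at the point `x`. -/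
def IsVSI0At {n k : ℕ} (g : MetricField n) (T : TensorField n k) (x : Pt n) : Prop :=
  ∀ S : ConcomScheme k 0, (∀ j, S.ord j = 0) → ∀ v, S.value g T x v = 0

/-- A rank-`r` tensor field `G` is (polynomially) constructed from `T`, its covariant
derivatives of arbitrary order and the metric. -/
def IsConstructedFrom {n k r : ℕ} (g : MetricField n) (T : TensorField n k)
    (G : TensorField n r) : Prop :=
  G ∈ Submodule.span ℝ {G' : TensorField n r | ∃ S : ConcomScheme k r, G' = S.value g T}

/-- A symmetric-2-tensor "correction" to the standard electromagnetic energy-momentum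
tensor: constructed from `T` and its covariant derivatives, where each monomial either
contains at least three factors of the field or at least one covariant derivative
(i.e. it comes from a non-Maxwellian term of a generalized electrodynamics). -/
def IsCorrectionTensor {n k : ℕ} (g : MetricField n) (T : TensorField n k)
    (Tc : TensorField n 2) : Prop :=
  Tc ∈ Submodule.span ℝ {G : TensorField n 2 |
    ∃ S : ConcomScheme k 2, (3 ≤ S.N ∨ ∃ j, 1 ≤ S.ord j) ∧ G = S.value g T}

/-! ### p-forms, type N, Lie derivative -/

def IsAlternating {n k : ℕ} (T : TensorField n k) : Prop :=
  ∀ (x : Pt n) (idx : Fin k → Fin n) (σ : Equiv.Perm (Fin k)),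
    T x (idx ∘ σ) = ((Equiv.Perm.sign σ : ℤ) : ℝ) * T x idx

def IsSmoothT {n k : ℕ} (T : TensorField n k) : Prop :=
  ∀ idx, ContDiff ℝ (⊤ : ℕ∞) fun x => T x idx

/-- A smooth differential form (totally antisymmetric covariant tensor field). -/
def IsFormField {n k : ℕ} (T : TensorField n k) : Prop :=
  IsSmoothT T ∧ IsAlternating T

def IsSmoothVec {n : ℕ} (ℓ : VecField n) : Prop :=
  ∀ a, ContDiff ℝ (⊤ : ℕ∞) fun x => ℓ x a

/-- A (nowhere vanishing, smooth) null vector field. -/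
def IsNullField {n : ℕ} (g : MetricField n) (ℓ : VecField n) : Prop :=
  IsSmoothVec ℓ ∧ (∀ x, ℓ x ≠ 0) ∧ ∀ x, gdot g x (ℓ x) (ℓ x) = 0

/-- `ℓ^a F_{a b₁ … b_{p-1}} = 0`. -/
def ContractsFirstZero {n p : ℕ} [NeZero p] (ℓ : VecField n) (F : TensorField n p) : Prop :=
  ∀ (x : Pt n) (v : Fin p → Fin n), (∑ a, ℓ x a * F x (Function.update v 0 a)) = 0

/-- `ℓ_{[a} F_{b₁ … b_p]} = 0`. -/
def WedgeWithZero {n p : ℕ} (g : MetricField n) (ℓ : VecField n) (F : TensorField n p) : Prop :=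
  ∀ (x : Pt n) (idx : Fin (p+1) → Fin n),
    (∑ σ : Equiv.Perm (Fin (p+1)), ((Equiv.Perm.sign σ : ℤ) : ℝ) *
      (lower g ℓ x (idx (σ 0)) * F x (fun m => idx (σ m.succ)))) = 0

/-- The `p`-form `F` is of type N with multiple null direction `ℓ`. -/
def IsTypeN {n p : ℕ} [NeZero p] (g : MetricField n) (F : TensorField n p)
    (ℓ : VecField n) : Prop :=
  IsNullField g ℓ ∧ ContractsFirstZero ℓ F ∧ WedgeWithZero g ℓ F

/-- Lie derivative of a covariant tensor field along a vector field. -/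
def lieD {n k : ℕ} (ℓ : VecField n) (T : TensorField n k) : TensorField n k :=
  fun x idx =>
    (∑ a, ℓ x a * pd (fun y => T y idx) a x)
    + ∑ m : Fin k, ∑ a, pd (fun y => ℓ y a) (idx m) x * T x (Function.update idx m a)

/-! ### Optical properties: geodesic, Kundt -/

/-- `∇_b ℓ_a` (first index is the derivative index). -/
def nablaLow {n : ℕ} (g : MetricField n) (ℓ : VecField n) (x : Pt n) (b a : Fin n) : ℝ :=
  covD g (lowerField g ℓ) x ![b, a]

/-- `ℓ` is geodesic: `ℓ^b ∇_b ℓ_a ∝ ℓ_a`. -/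
def IsGeodesicField {n : ℕ} (g : MetricField n) (ℓ : VecField n) : Prop :=
  ∀ x, ∃ c : ℝ, ∀ a, (∑ b, ℓ x b * nablaLow g ℓ x b a) = c * lower g ℓ x a

/-- `ℓ` is affinely parameterized: `ℓ^b ∇_b ℓ_a = 0`. -/
def IsAffinelyParam {n : ℕ} (g : MetricField n) (ℓ : VecField n) : Prop :=
  ∀ x a, (∑ b, ℓ x b * nablaLow g ℓ x b a) = 0

/-- `ℓ` is a Kundt null vector field: null, geodesic and with vanishing optical matrix
(expansion-free, shear-free and twist-free). -/
def IsKundt {n : ℕ} (g : MetricField n) (ℓ : VecField n) : Prop :=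
  IsNullField g ℓ ∧ IsGeodesicField g ℓ ∧
  ∀ (x : Pt n) (X Y : Fin n → ℝ), gdot g x X (ℓ x) = 0 → gdot g x Y (ℓ x) = 0 →
    (∑ a, ∑ b, X a * Y b * nablaLow g ℓ x b a) = 0

/-! ### Curvature -/

/-- Fully lowered Riemann tensor `R_{abcd}`. -/
def riemann {n : ℕ} (g : MetricField n) : TensorField n 4 := fun x idx =>
  ∑ e, g x (idx 0) e *
    (pd (fun y => christoffel g y e (idx 3) (idx 1)) (idx 2) x
     - pd (fun y => christoffel g y e (idx 2) (idx 1)) (idx 3) x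
     + ∑ f', (christoffel g x e (idx 2) f' * christoffel g x f' (idx 3) (idx 1)
            - christoffel g x e (idx 3) f' * christoffel g x f' (idx 2) (idx 1)))

def ricci {n : ℕ} (g : MetricField n) (x : Pt n) (b d : Fin n) : ℝ :=
  ∑ a, ∑ c, (g x)⁻¹ a c * riemann g x ![a, b, c, d]

def ricciScalar {n : ℕ} (g : MetricField n) (x : Pt n) : ℝ :=
  ∑ b, ∑ d, (g x)⁻¹ b d * ricci g x b d

def tracelessRicci {n : ℕ} (g : MetricField n) : TensorField n 2 := fun x idx =>
  ricci g x (idx 0) (idx 1) - ricciScalar g x / (n : ℝ) * g x (idx 0) (idx 1)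

/-- Weyl tensor `C_{abcd}` (for `n ≥ 3`). -/
def weyl {n : ℕ} (g : MetricField n) : TensorField n 4 := fun x idx =>
  riemann g x idx
  - (1 / ((n : ℝ) - 2)) *
      (g x (idx 0) (idx 2) * ricci g x (idx 3) (idx 1)
       - g x (idx 0) (idx 3) * ricci g x (idx 2) (idx 1)
       - g x (idx 1) (idx 2) * ricci g x (idx 3) (idx 0)
       + g x (idx 1) (idx 3) * ricci g x (idx 2) (idx 0))
  + (1 / (((n : ℝ) - 1) * ((n : ℝ) - 2))) * ricciScalar g x *
      (g x (idx 0) (idx 2) * g x (idx 3) (idx 1) - g x (idx 0) (idx 3) * g x (idx 2) (idx 1))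

/-! ### Null frames, boost weights, algebraic types -/

/-- A null frame at a point: two null vectors `e 0 = ℓ`, `e 1 = n` with `ℓ·n = 1`, and
orthonormal spacelike vectors `e i`, `i ≥ 2`, orthogonal to both. -/
structure NullFrameAt {n : ℕ} [NeZero n] (g : MetricField n) (x : Pt n) where
  e : Fin n → Fin n → ℝ
  h00 : gdot g x (e 0) (e 0) = 0
  h11 : gdot g x (e 1) (e 1) = 0
  h01 : gdot g x (e 0) (e 1) = 1
  h0i : ∀ i : Fin n, 2 ≤ (i : ℕ) → gdot g x (e 0) (e i) = 0
  h1i : ∀ i : Fin n, 2 ≤ (i : ℕ) → gdot g x (e 1) (e i) = 0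
  hij : ∀ i j : Fin n, 2 ≤ (i : ℕ) → 2 ≤ (j : ℕ) →
    gdot g x (e i) (e j) = (if i = j then 1 else 0)

/-- Boost weight of a frame multi-index: `+1` for each contraction with `ℓ = e 0`,
`-1` for each contraction with `n = e 1`. -/
def bw {n k : ℕ} (a : Fin k → Fin n) : ℤ :=
  ((Finset.univ.filter fun m => (a m : ℕ) = 0).card : ℤ)
  - ((Finset.univ.filter fun m => (a m : ℕ) = 1).card : ℤ)

/-- Frame components of a covariant tensor. -/
def frameComp {n k : ℕ} (T : TensorField n k) (e : Fin n → Fin n → ℝ) (x : Pt n)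
    (a : Fin k → Fin n) : ℝ :=
  ∑ idx : Fin k → Fin n, T x idx * ∏ m, e (a m) (idx m)

/-- The tensor field `T` has boost order at most `b` with respect to the null
direction `ℓ`: in any null frame containing `ℓ`, all frame components of boost
weight `> b` vanish.  `b = 0` is the aligned type II condition, `b = -1` type III. -/
def BoostOrderLE {n k : ℕ} [NeZero n] (g : MetricField n) (ℓ : VecField n)
    (T : TensorField n k) (b : ℤ) : Prop :=
  ∀ (x : Pt n) (fr : NullFrameAt g x), fr.e 0 = ℓ x →
    ∀ a : Fin k → Fin n, b < bw a → frameComp T fr.e x a = 0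

/-- `g` is a degenerate Kundt metric with Kundt null direction `ℓ`: `ℓ` is Kundt and
the Riemann tensor together with its covariant derivatives of all orders is of aligned
type II with respect to `ℓ`. -/
def IsDegenerateKundt {n : ℕ} [NeZero n] (g : MetricField n) (ℓ : VecField n) : Prop :=
  IsKundt g ℓ ∧ ∀ I : ℕ, BoostOrderLE g ℓ (covDIter g (riemann g) I) 0

/-! ### Exterior derivative, Hodge dual, Maxwell equations -/

/-- Exterior derivative (components, no normalization factor). -/
def extD {n k : ℕ} (F : TensorField n k) : TensorField n (k+1) := fun x idx =>
  ∑ m : Fin (k+1), (-1 : ℝ) ^ (m : ℕ) *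
    pd (fun y => F y fun i => idx (m.succAbove i)) (idx m) x

/-- Sign of a self-map of `Fin k` (0 if not bijective). -/
def permSign {k : ℕ} (f : Fin k → Fin k) : ℤ :=
  if h : Function.Bijective f then Equiv.Perm.sign (Equiv.ofBijective f h) else 0

/-- Raise all indices of a covariant tensor with the inverse metric. -/
def raiseAll {n k : ℕ} (g : MetricField n) (T : TensorField n k) : TensorField n k :=
  fun x idx => ∑ jdx : Fin k → Fin n, (∏ m, (g x)⁻¹ (idx m) (jdx m)) * T x jdx

/-- Hodge dual of a `p`-form (`p + q = n`), via the metric volume element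
`√|det g| ε_{a₁…aₙ}`. -/
def hodge {n p q : ℕ} (h : p + q = n) (g : MetricField n) (F : TensorField n p) :
    TensorField n q := fun x idx =>
  (1 / (Nat.factorial p : ℝ)) *
    ∑ a : Fin p → Fin n, raiseAll g F x a *
      (Real.sqrt |(g x).det| *
        ((permSign fun i => Fin.append a idx (Fin.cast h.symm i) : ℤ) : ℝ))

/-- Source-free Maxwell equations `dF = 0 = d*F` for a `p`-form (`p + q = n`). -/
def MaxwellEqs {n p q : ℕ} (h : p + q = n) (g : MetricField n) (F : TensorField n p) : Prop :=
  (∀ x idx, extD F x idx = 0) ∧ (∀ x idx, extD (hodge h g F) x idx = 0)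

/-! ### Wedge products -/

def wedgeP {n a b : ℕ} (F : TensorField n a) (G : TensorField n b) : TensorField n (a+b) :=
  fun x idx => ∑ σ : Equiv.Perm (Fin (a+b)), ((Equiv.Perm.sign σ : ℤ) : ℝ) *
    (F x fun i => idx (σ (Fin.castAdd b i))) * (G x fun j => idx (σ (Fin.natAdd a j)))

def wedgePow {n p : ℕ} (F : TensorField n p) : (k : ℕ) → TensorField n (p * k)
  | 0 => fun _ _ => 1
  | k + 1 => wedgeP (wedgePow F k) F

def castT {n a b : ℕ} (h : a = b) (T : TensorField n a) : TensorField n b :=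
  fun x idx => T x fun i => idx (Fin.cast h i)

/-! ### Degenerate Kundt metrics in adapted coordinates -/

/-- The Kundt metric `ds² = 2 du (dr + H du + W_α dx^α) + g_{αβ} dx^α dx^β` in
coordinates `(u, r, x^α) = (x⁰, x¹, x^{α≥2})`. -/
def kundtMetric {n : ℕ} (H : Pt n → ℝ) (W : Pt n → Fin n → ℝ) (hT : MetricField n) :
    MetricField n := fun x => Matrix.of fun a b =>
  if (a : ℕ) = 0 ∧ (b : ℕ) = 0 then 2 * H x
  else if ((a : ℕ) = 0 ∧ (b : ℕ) = 1) ∨ ((a : ℕ) = 1 ∧ (b : ℕ) = 0) then 1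
  else if (a : ℕ) = 0 then W x b
  else if (b : ℕ) = 0 then W x a
  else if (a : ℕ) = 1 ∨ (b : ℕ) = 1 then 0
  else hT x a b

/-- A transverse (Riemannian) metric `g_{αβ}(u,x)`, stored as an `n×n` matrix padded
by the identity on the coordinates `u, r`. -/
def IsTransverseMetric {n : ℕ} (hT : MetricField n) : Prop :=
  (∀ (x : Pt n) (a b : Fin n), ((a : ℕ) < 2 ∨ (b : ℕ) < 2) → hT x a b = (if a = b then 1 else 0)) ∧
  (∀ x, (hT x).IsSymm) ∧ (∀ a b, ContDiff ℝ (⊤ : ℕ∞) fun x => hT x a b) ∧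
  IndepOfR hT ∧ (∀ x, (hT x).PosDef)

/-- Data of a degenerate Kundt metric: `W_α = r W¹_α + W⁰_α`,
`H = r² H² + r H¹ + H⁰`, transverse metric `hT`. -/
structure DegKundtData (n : ℕ) where
  H2 : Pt n → ℝ
  H1 : Pt n → ℝ
  H0 : Pt n → ℝ
  W1 : Pt n → Fin n → ℝ
  W0 : Pt n → Fin n → ℝ
  hT : MetricField n

def DegKundtData.Hfun {n : ℕ} [NeZero n] (D : DegKundtData n) : Pt n → ℝ :=
  fun z => (z 1)^2 * D.H2 z + z 1 * D.H1 z + D.H0 z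

def DegKundtData.Wfun {n : ℕ} [NeZero n] (D : DegKundtData n) : Pt n → Fin n → ℝ :=
  fun z b => z 1 * D.W1 z b + D.W0 z b

/-- The degenerate Kundt metric built from the data. -/
def DegKundtData.metric {n : ℕ} [NeZero n] (D : DegKundtData n) : MetricField n :=
  kundtMetric D.Hfun D.Wfun D.hT

/-- Regularity and shape conditions on the degenerate Kundt data: the metric functions
depend only on `(u, x^α)` and are smooth, `W`'s are transverse. -/
def DegKundtData.Regular {n : ℕ} (D : DegKundtData n) : Prop :=
  IsTransverseMetric D.hT ∧
  IndepOfR D.H2 ∧ IndepOfR D.H1 ∧ IndepOfR D.H0 ∧ IndepOfR D.W1 ∧ IndepOfR D.W0 ∧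
  ContDiff ℝ (⊤ : ℕ∞) D.H2 ∧ ContDiff ℝ (⊤ : ℕ∞) D.H1 ∧ ContDiff ℝ (⊤ : ℕ∞) D.H0 ∧
  (∀ a, ContDiff ℝ (⊤ : ℕ∞) fun x => D.W1 x a) ∧ (∀ a, ContDiff ℝ (⊤ : ℕ∞) fun x => D.W0 x a) ∧
  (∀ (x : Pt n) (a : Fin n), (a : ℕ) < 2 → D.W1 x a = 0) ∧ (∀ (x : Pt n) (a : Fin n), (a : ℕ) < 2 → D.W0 x a = 0)

/-- The `(q+1)`-form `du ∧ f` built from a transverse `q`-form `f`. -/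
def duWedge {n q : ℕ} (f : TensorField n q) : TensorField n (q+1) := fun x idx =>
  ∑ m : Fin (q+1), (-1 : ℝ) ^ (m : ℕ) * (if (idx m : ℕ) = 0 then 1 else 0) *
    f x (fun i => idx (m.succAbove i))

/-- `f_{[α₂…α_p , α₁]} = 0`: `f` is closed in the transverse geometry. -/
def TransClosed {n q : ℕ} (f : TensorField n q) : Prop :=
  ∀ (x : Pt n) (v : Fin (q+1) → Fin n), (∀ i, 2 ≤ (v i : ℕ)) →
    (∑ m : Fin (q+1), (-1 : ℝ) ^ (m : ℕ) *
      pd (fun y => f y fun i => v (m.succAbove i)) (v m) x) = 0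

/-- `(√g̃ f^{β α₁…α_{p-2}})_{,β} = 0`: `f` is co-closed in the transverse geometry. -/
def TransCoclosed {n q : ℕ} [NeZero q] (hT : MetricField n) (f : TensorField n q) : Prop :=
  ∀ (x : Pt n) (v : Fin q → Fin n),
    (∑ b : Fin n, pd (fun y =>
      Real.sqrt (hT y).det * raiseAll hT f y (Function.update v 0 b)) b x) = 0

/-! ### Transverse curvature -/

def christoffelT {n : ℕ} (h : MetricField n) (x : Pt n) (a b c : Fin n) : ℝ :=
  (1/2) * ∑ d, (h x)⁻¹ a d *
    (pdT (fun y => h y d c) b x + pdT (fun y => h y b d) c x - pdT (fun y => h y b c) d x)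

def covDT {n k : ℕ} (h : MetricField n) (T : TensorField n k) : TensorField n (k+1) :=
  fun x idx =>
    pdT (fun y => T y fun m => idx m.succ) (idx 0) x
    - ∑ m : Fin k, ∑ e : Fin n,
        christoffelT h x e (idx 0) (idx m.succ) * T x (Function.update (fun m' => idx m'.succ) m e)

def riemannT {n : ℕ} (h : MetricField n) : TensorField n 4 := fun x idx =>
  ∑ e, h x (idx 0) e *
    (pdT (fun y => christoffelT h y e (idx 3) (idx 1)) (idx 2) x
     - pdT (fun y => christoffelT h y e (idx 2) (idx 1)) (idx 3) x
     + ∑ f', (christoffelT h x e (idx 2) f' * christoffelT h x f' (idx 3) (idx 1)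
            - christoffelT h x e (idx 3) f' * christoffelT h x f' (idx 2) (idx 1)))

def ricciT {n : ℕ} (h : MetricField n) (x : Pt n) (b d : Fin n) : ℝ :=
  ∑ a, ∑ c, (h x)⁻¹ a c * riemannT h x ![a, b, c, d]

def ricciScalarT {n : ℕ} (h : MetricField n) (x : Pt n) : ℝ :=
  ∑ b, ∑ d, (h x)⁻¹ b d * ricciT h x b d

/-- A covector field as a rank-1 tensor field. -/
def oneForm {n : ℕ} (W : Pt n → Fin n → ℝ) : TensorField n 1 := fun x idx => W x (idx 0)

/-- Transverse covariant derivative `∇̃_b V_a` (`= V_{a||b}`). -/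
def nablaT {n : ℕ} (h : MetricField n) (V : TensorField n 1) (x : Pt n) (b a : Fin n) : ℝ :=
  covDT h V x ![b, a]

/-- Second transverse covariant derivative `∇̃_c ∇̃_b V_a`. -/
def nablaT2 {n : ℕ} (h : MetricField n) (V : TensorField n 1) (x : Pt n) (c b a : Fin n) : ℝ :=
  covDT h (covDT h V) x ![c, b, a]

/-- Transverse divergence `V^{α}{}_{||α}`. -/
def divT {n : ℕ} (h : MetricField n) (V : TensorField n 1) (x : Pt n) : ℝ :=
  ∑ b, ∑ c, (h x)⁻¹ b c * nablaT h V x b c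

def gradT {n : ℕ} (f : Pt n → ℝ) : TensorField n 1 := fun x idx => pdT f (idx 0) x

/-- Transverse Laplacian. -/
def laplaceT {n : ℕ} (h : MetricField n) (f : Pt n → ℝ) (x : Pt n) : ℝ :=
  ∑ a, ∑ b, (h x)⁻¹ a b * covDT h (gradT f) x ![a, b]

def lnSqrtDet {n : ℕ} (h : MetricField n) (y : Pt n) : ℝ :=
  Real.log (Real.sqrt (h y).det)

/-! ### Electromagnetic energy-momentum tensor -/

/-- Standard energy-momentum tensor of a `(q+1)`-form Maxwell field:
`T_{ab} = (1/q!) (F_{a c⃗} F_b{}^{c⃗} - (1/(2(q+1))) g_{ab} F_{c⃗}F^{c⃗})`. -/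
def emTensor {n q : ℕ} (g : MetricField n) (F : TensorField n (q+1)) (x : Pt n)
    (a b : Fin n) : ℝ :=
  (1 / (Nat.factorial q : ℝ)) *
    ((∑ v : Fin q → Fin n, F x (Fin.cons a v) *
        ∑ w : Fin q → Fin n, (∏ i, (g x)⁻¹ (v i) (w i)) * F x (Fin.cons b w))
     - (1 / (2 * ((q : ℝ) + 1))) * g x a b *
        ∑ v : Fin (q+1) → Fin n, F x v * raiseAll g F x v)

/-! ### Coordinate transformations (for adapted coordinates) -/

/-- Jacobian `∂ψ^a/∂y^b` of a coordinate change. -/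
def jac {n : ℕ} (ψ : Pt n → Pt n) (y : Pt n) (a b : Fin n) : ℝ :=
  pd (fun z => ψ z a) b y

/-- Pullback of the metric along the coordinate change `ψ` (from new to old coords). -/
def pullMetric {n : ℕ} (g : MetricField n) (ψ : Pt n → Pt n) : MetricField n :=
  fun y => Matrix.of fun μ ν => ∑ a, ∑ b, jac ψ y a μ * jac ψ y b ν * g (ψ y) a b

/-- Pullback of a covariant tensor field along `ψ`. -/
def pullForm {n p : ℕ} (F : TensorField n p) (ψ : Pt n → Pt n) : TensorField n p :=
  fun y idx => ∑ jdx : Fin p → Fin n, (∏ m, jac ψ y (jdx m) (idx m)) * F (ψ y) jdx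

/-! ### Parallelly transported adapted frames -/

/-- A null frame field containing `ℓ`, parallelly transported along `ℓ` and adapted
(`M^i_{jk} = 0`). -/
structure AdaptedPTFrame {n : ℕ} [NeZero n] (g : MetricField n) (ℓ : VecField n) where
  fr : ∀ x : Pt n, NullFrameAt g x
  aligned : ∀ x, (fr x).e 0 = ℓ x
  parallel : ∀ (x : Pt n) (a c : Fin n),
    (∑ b, ℓ x b * (pd (fun y => (fr y).e a c) b x
      + ∑ d, christoffel g x c b d * (fr x).e a d)) = 0
  adapted : ∀ (x : Pt n) (i j k : Fin n), 2 ≤ (i : ℕ) → 2 ≤ (j : ℕ) → 2 ≤ (k : ℕ) →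
    (∑ a, ∑ b, covD g (lowerField g fun z => (fr z).e j) x ![b, a]
      * (fr x).e i a * (fr x).e k b) = 0

/-! ### Explicit Petrov type III solutions -/

/-- The type III vacuum metric of Petrov,
`ds² = 2 du (dr + ½(xr − x eˣ) du) + eˣ(dx² + e^{2u} dy²)`, in coordinates
`(u,r,x,y)`. -/
def petrovG : MetricField 4 := fun z => Matrix.of fun a b =>
  if a = 0 ∧ b = 0 then z 2 * z 1 - z 2 * Real.exp (z 2)
  else if (a = 0 ∧ b = 1) ∨ (a = 1 ∧ b = 0) then 1
  else if a = 2 ∧ b = 2 then Real.exp (z 2)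
  else if a = 3 ∧ b = 3 then Real.exp (z 2 + 2 * z 0)
  else 0

/-- The same metric with the electromagnetic backreaction term
`−2κ₀ eˣ c(u)²` included in `2H`. -/
def petrovEM (κ₀ : ℝ) (c : ℝ → ℝ) : MetricField 4 := fun z => Matrix.of fun a b =>
  if a = 0 ∧ b = 0 then z 2 * z 1 - z 2 * Real.exp (z 2) - 2 * κ₀ * Real.exp (z 2) * (c (z 0))^2
  else if (a = 0 ∧ b = 1) ∨ (a = 1 ∧ b = 0) then 1
  else if a = 2 ∧ b = 2 then Real.exp (z 2)
  else if a = 3 ∧ b = 3 then Real.exp (z 2 + 2 * z 0)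
  else 0

/-- The null direction `ℓ = ∂_r`. -/
def ellR : VecField 4 := fun _ a => if a = 1 then 1 else 0

/-- The transverse covector of the VSI Maxwell field (4). -/
def petrovA (c : ℝ → ℝ) (z : Pt 4) : Fin 4 → ℝ := fun a =>
  if a = 2 then -(Real.exp (z 2 / 2) * c (z 0) * Real.cos (z 3 * Real.exp (z 0) / 2))
  else if a = 3 then Real.exp (z 2 / 2) * c (z 0) * Real.exp (z 0) * Real.sin (z 3 * Real.exp (z 0) / 2)
  else 0

/-- The Maxwell 2-form
`F = e^{x/2} c(u) du ∧ (−cos(y eᵘ/2) dx + eᵘ sin(y eᵘ/2) dy)`. -/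
def petrovF (c : ℝ → ℝ) : TensorField 4 2 := fun z idx =>
  (if idx 0 = 0 then petrovA c z (idx 1) else 0)
  - (if idx 1 = 0 then petrovA c z (idx 0) else 0)

/-! ## Part 1: calculus of partial derivatives -/

/-- Tensor fields with an arbitrary finite type of index slots. -/
abbrev TF (n : ℕ) (ι : Type) := Pt n → (ι → Fin n) → ℝ

/-- Smooth scalar functions. -/
abbrev Cs {n : ℕ} (f : Pt n → ℝ) : Prop := ContDiff ℝ (⊤ : ℕ∞) f

/-- Smooth tensor fields. -/
def Sm {n : ℕ} {ι : Type} (T : TF n ι) : Prop := ∀ idx, Cs fun x => T x idx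

section pdcalc
variable {n : ℕ}

lemma Cs.da {f : Pt n → ℝ} (hf : Cs f) (x : Pt n) : DifferentiableAt ℝ f x :=
  (hf.differentiable (by simp)) x

lemma Cs.pd {f : Pt n → ℝ} (hf : Cs f) (a : Fin n) : Cs (pd f a) := by
  unfold VSI.pd
  have h : ContDiff ℝ (⊤ : ℕ∞) (fderiv ℝ f) := hf.fderiv_right (by simp)
  exact h.clm_apply contDiff_const

lemma pd_add {f h : Pt n → ℝ} (hf : Cs f) (hh : Cs h) (a : Fin n) (x : Pt n) :
    pd (fun y => f y + h y) a x = pd f a x + pd h a x := by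
  unfold pd
  rw [fderiv_fun_add (hf.da x) (hh.da x)]; rfl

lemma pd_sub {f h : Pt n → ℝ} (hf : Cs f) (hh : Cs h) (a : Fin n) (x : Pt n) :
    pd (fun y => f y - h y) a x = pd f a x - pd h a x := by
  unfold pd
  rw [fderiv_fun_sub (hf.da x) (hh.da x)]; rfl

lemma pd_neg {f : Pt n → ℝ} (a : Fin n) (x : Pt n) :
    pd (fun y => - f y) a x = - pd f a x := by
  unfold pd
  rw [fderiv_fun_neg]; rfl

lemma pd_mul {f h : Pt n → ℝ} (hf : Cs f) (hh : Cs h) (a : Fin n) (x : Pt n) :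
    pd (fun y => f y * h y) a x = pd f a x * h x + f x * pd h a x := by
  unfold pd
  rw [fderiv_fun_mul (hf.da x) (hh.da x)]
  simp; ring

lemma pd_const (c : ℝ) (a : Fin n) (x : Pt n) : pd (fun _ => c) a x = 0 := by
  unfold pd; simp

lemma pd_sum {κ : Type*} (s : Finset κ) {f : κ → Pt n → ℝ} (hf : ∀ i, Cs (f i))
    (a : Fin n) (x : Pt n) :
    pd (fun y => ∑ i ∈ s, f i y) a x = ∑ i ∈ s, pd (f i) a x := by
  unfold pd
  rw [fderiv_fun_sum (fun i _ => (hf i).da x)]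
  simp

lemma pd_const_mul (c : ℝ) {f : Pt n → ℝ} (hf : Cs f) (a : Fin n) (x : Pt n) :
    pd (fun y => c * f y) a x = c * pd f a x := by
  rw [pd_mul contDiff_const hf, pd_const]; ring

lemma pd_comm {f : Pt n → ℝ} (hf : Cs f) (a b : Fin n) (x : Pt n) :
    pd (fun y => pd f a y) b x = pd (fun y => pd f b y) a x := by
  have key : ∀ c d : Fin n, pd (fun y => pd f c y) d x
      = fderiv ℝ (fderiv ℝ f) x (Pi.single d 1) (Pi.single c 1) := by
    intro c d
    unfold pd
    have hd : DifferentiableAt ℝ (fderiv ℝ f) x := by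
      have h : ContDiff ℝ (⊤ : ℕ∞) (fderiv ℝ f) := hf.fderiv_right (by simp)
      exact (h.differentiable (by simp)) x
    rw [fderiv_clm_apply hd (differentiableAt_const _)]
    simp
  rw [key, key]
  have hs : IsSymmSndFDerivAt ℝ f x := by
    apply (hf.contDiffAt (x := x)).isSymmSndFDerivAt
    simp only [minSmoothness_of_isRCLikeNormedField]
    exact WithTop.coe_le_coe.2 le_top
  exact hs.eq _ _

lemma Cs.sum {κ : Type*} {s : Finset κ} {f : κ → Pt n → ℝ} (hf : ∀ i, Cs (f i)) :
    Cs (fun y => ∑ i ∈ s, f i y) := ContDiff.sum fun i _ => hf i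

lemma Cs.prod {κ : Type*} {s : Finset κ} {f : κ → Pt n → ℝ} (hf : ∀ i, Cs (f i)) :
    Cs (fun y => ∏ i ∈ s, f i y) := contDiff_prod fun i _ => hf i

lemma pd_prod {κ : Type*} [DecidableEq κ] (s : Finset κ) {f : κ → Pt n → ℝ} (hf : ∀ i, Cs (f i))
    (a : Fin n) (x : Pt n) :
    pd (fun y => ∏ i ∈ s, f i y) a x
      = ∑ i ∈ s, (∏ j ∈ s.erase i, f j x) * pd (f i) a x := by
  induction s using Finset.induction_on with
  | empty => simp [pd_const]
  | insert k s hk ih =>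
    simp only [Finset.prod_insert hk]
    rw [pd_mul (hf k) (Cs.prod hf), ih, Finset.sum_insert hk, Finset.erase_insert hk, Finset.mul_sum]
    congr 1
    · ring
    · refine Finset.sum_congr rfl fun i hi => ?_
      have hne : k ≠ i := fun h => hk (h ▸ hi)
      rw [Finset.erase_insert_of_ne hne, Finset.prod_insert (by simp [hk])]
      ring

end pdcalc

/-! ## Part 2: metric, inverse metric, Christoffel symbols -/

section metric
variable {n : ℕ} {g : MetricField n}

lemma detne (hg : IsLorentzMetric g) (x : Pt n) : (g x).det ≠ 0 := by
  obtain ⟨P, hP, h⟩ := hg.2.2 x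
  have h1 := congrArg Matrix.det h
  rw [Matrix.det_mul, Matrix.det_mul, Matrix.det_diagonal] at h1
  intro h0
  rw [h0] at h1
  have : (∏ i : Fin n, if (i : ℕ) = 0 then (-1 : ℝ) else 1) ≠ 0 := by
    rw [Finset.prod_ne_zero_iff]
    intro i _
    split_ifs <;> norm_num
  apply this
  rw [← h1]; ring

lemma gsym (hg : IsLorentzMetric g) (x : Pt n) (a b : Fin n) : g x a b = g x b a :=
  (hg.2.1 x).apply b a

lemma ginv_mul (hg : IsLorentzMetric g) (x : Pt n) : (g x)⁻¹ * g x = 1 :=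
  Matrix.nonsing_inv_mul _ (isUnit_iff_ne_zero.2 (detne hg x))

lemma mul_ginv (hg : IsLorentzMetric g) (x : Pt n) : g x * (g x)⁻¹ = 1 :=
  Matrix.mul_nonsing_inv _ (isUnit_iff_ne_zero.2 (detne hg x))

lemma ginv_sym (hg : IsLorentzMetric g) (x : Pt n) (a b : Fin n) : (g x)⁻¹ a b = (g x)⁻¹ b a := by
  have h : ((g x)⁻¹).transpose = (g x)⁻¹ := by
    rw [Matrix.transpose_nonsing_inv, (hg.2.1 x).eq]
  exact (congrFun (congrFun h b) a)

lemma sum_ginv_g (hg : IsLorentzMetric g) (x : Pt n) (a b : Fin n) :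
    ∑ c, (g x)⁻¹ a c * g x c b = if a = b then 1 else 0 := by
  have := congrFun (congrFun (ginv_mul hg x) a) b
  rw [Matrix.mul_apply, Matrix.one_apply] at this
  exact this

lemma sum_g_ginv (hg : IsLorentzMetric g) (x : Pt n) (a b : Fin n) :
    ∑ c, g x a c * (g x)⁻¹ c b = if a = b then 1 else 0 := by
  have := congrFun (congrFun (mul_ginv hg x) a) b
  rw [Matrix.mul_apply, Matrix.one_apply] at this
  exact this

lemma cs_det {M : Pt n → Matrix (Fin n) (Fin n) ℝ} (hM : ∀ a b, Cs fun x => M x a b) :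
    Cs fun x => (M x).det := by
  simp only [Matrix.det_apply]
  refine Cs.sum fun σ => ?_
  exact (Cs.prod fun i => hM _ _).const_smul _

lemma cs_ginv (hg : IsLorentzMetric g) (a b : Fin n) : Cs fun x => (g x)⁻¹ a b := by
  have : (fun x => (g x)⁻¹ a b) = fun x => ((g x).det)⁻¹ * ((g x).adjugate a b) := by
    funext x
    rw [Matrix.inv_def, Matrix.smul_apply, Ring.inverse_eq_inv', smul_eq_mul]
  rw [this]
  refine ContDiff.mul (ContDiff.inv (cs_det hg.1) (detne hg)) ?_
  simp only [Matrix.adjugate_apply]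
  apply cs_det
  intro c d
  by_cases h : c = b
  · subst h; simp only [Matrix.updateRow_self]; exact contDiff_const
  · simp only [Matrix.updateRow_ne h]; exact hg.1 c d

lemma cs_g (hg : IsLorentzMetric g) (a b : Fin n) : Cs fun x => g x a b := hg.1 a b

lemma cs_chr (hg : IsLorentzMetric g) (a b c : Fin n) : Cs fun x => christoffel g x a b c := by
  unfold christoffel
  refine contDiff_const.mul (Cs.sum fun d => (cs_ginv hg a d).mul ?_)
  exact (((cs_g hg d c).pd b).add ((cs_g hg b d).pd c)).sub ((cs_g hg b c).pd d)

lemma chr_sym (hg : IsLorentzMetric g) (x : Pt n) (a b c : Fin n) :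
    christoffel g x a b c = christoffel g x a c b := by
  unfold christoffel
  congr 1
  refine Finset.sum_congr rfl fun d _ => ?_
  have e1 : (fun y => g y d c) = fun y => g y c d := by funext y; exact gsym hg y _ _
  have e2 : (fun y => g y b d) = fun y => g y d b := by funext y; exact gsym hg y _ _
  have e3 : (fun y => g y b c) = fun y => g y c b := by funext y; exact gsym hg y _ _
  rw [e1, e2, e3]; ring

lemma low_chr (hg : IsLorentzMetric g) (x : Pt n) (e b c : Fin n) :
    ∑ a, g x e a * christoffel g x a b c = (1/2) *
      (pd (fun y => g y e c) b x + pd (fun y => g y b e) c x - pd (fun y => g y b c) e x) := by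
  unfold christoffel
  set F : Fin n → ℝ := fun d =>
    pd (fun y => g y d c) b x + pd (fun y => g y b d) c x - pd (fun y => g y b c) d x with hF
  have : ∑ a, g x e a * ((1/2) * ∑ d, (g x)⁻¹ a d * F d)
      = (1/2) * ∑ d, (∑ a, g x e a * (g x)⁻¹ a d) * F d := by
    simp only [Finset.mul_sum, Finset.sum_mul]
    rw [Finset.sum_comm]
    refine Finset.sum_congr rfl fun d _ => Finset.sum_congr rfl fun a _ => by ring
  rw [this]
  simp only [sum_g_ginv hg, ite_mul, one_mul, zero_mul, Finset.sum_ite_eq, Finset.mem_univ, if_true]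
  rfl

/-- Metric compatibility. -/
lemma pd_g (hg : IsLorentzMetric g) (x : Pt n) (a b c : Fin n) :
    pd (fun y => g y b c) a x
      = ∑ e, g x e c * christoffel g x e a b + ∑ e, g x b e * christoffel g x e a c := by
  have e0 : ∑ e, g x e c * christoffel g x e a b = ∑ e, g x c e * christoffel g x e a b :=
    Finset.sum_congr rfl fun e _ => by rw [gsym hg]
  rw [e0, low_chr hg, low_chr hg]
  have e1 : (fun y => g y c b) = fun y => g y b c := by funext y; exact gsym hg y _ _
  have e2 : (fun y => g y a c) = fun y => g y c a := by funext y; exact gsym hg y _ _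
  have e3 : (fun y => g y a b) = fun y => g y b a := by funext y; exact gsym hg y _ _
  rw [e1, e2, e3]; ring

lemma pd_ginv (hg : IsLorentzMetric g) (x : Pt n) (a b c : Fin n) :
    pd (fun y => (g y)⁻¹ b c) a x
      = - ∑ e, christoffel g x b a e * (g x)⁻¹ e c - ∑ e, (g x)⁻¹ b e * christoffel g x c a e := by
  -- matrices
  set G := g x
  set I := (g x)⁻¹
  let dG : Matrix (Fin n) (Fin n) ℝ := Matrix.of fun b c => pd (fun y => g y b c) a x
  let dI : Matrix (Fin n) (Fin n) ℝ := Matrix.of fun b c => pd (fun y => (g y)⁻¹ b c) a x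
  let Γ : Matrix (Fin n) (Fin n) ℝ := Matrix.of fun b c => christoffel g x b a c
  have h1 : dI * G + I * dG = 0 := by
    ext b c
    have : pd (fun y => ∑ d, (g y)⁻¹ b d * g y d c) a x = 0 := by
      have : (fun y => ∑ d, (g y)⁻¹ b d * g y d c) = fun _ => if b = c then 1 else 0 := by
        funext y; exact sum_ginv_g hg y b c
      rw [this, pd_const]
    rw [pd_sum _ (fun d => (cs_ginv hg b d).mul (cs_g hg d c))] at this
    simp only [pd_mul (cs_ginv hg _ _) (cs_g hg _ _), Finset.sum_add_distrib] at this
    simpa [Matrix.add_apply, Matrix.mul_apply, dI, dG, G, I] using this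
  have h2 : dG = Γ.transpose * G + G * Γ := by
    ext b c
    simp only [dG, Matrix.add_apply, Matrix.mul_apply, Matrix.of_apply, pd_g hg, Γ,
      Matrix.transpose_apply, G]
    congr 1
    exact Finset.sum_congr rfl fun e _ => by ring
  have hGI : G * I = 1 := mul_ginv hg x
  have hIG : I * G = 1 := ginv_mul hg x
  have h3 : dI = - (Γ * I) - I * Γ.transpose := by
    have : dI * G * I + I * dG * I = 0 := by rw [← Matrix.add_mul, h1, Matrix.zero_mul]
    rw [Matrix.mul_assoc dI, hGI, Matrix.mul_one, h2] at this
    have e : I * (Γ.transpose * G + G * Γ) * I = I * Γ.transpose * (G * I) + (I * G) * Γ * I := by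
      noncomm_ring
    rw [e, hGI, hIG, Matrix.mul_one, Matrix.one_mul] at this
    rw [eq_neg_of_add_eq_zero_left this]; abel
  have := congrFun (congrFun h3 b) c
  simpa [dI, Matrix.sub_apply, Matrix.neg_apply, Matrix.mul_apply, Γ, I] using this

end metric

set_option linter.unusedSectionVars false
/-! ## Part 3: matrices acting on tensors, covariant derivative in a coordinate direction -/

section action
variable {n : ℕ} {ι κ : Type} [Fintype ι] [DecidableEq ι] [Fintype κ] [DecidableEq κ]

/-- A matrix acting as a derivation on a covariant tensor. -/
def act (M : Fin n → Fin n → ℝ) (t : (ι → Fin n) → ℝ) (idx : ι → Fin n) : ℝ :=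
  ∑ m, ∑ e, M e (idx m) * t (Function.update idx m e)

/-- Covariant derivative in the coordinate direction `a`. -/
def nab (g : MetricField n) (a : Fin n) (T : TF n ι) : TF n ι := fun x idx =>
  pd (fun y => T y idx) a x - act (fun e c => christoffel g x e a c) (T x) idx

lemma covD_eq {k : ℕ} (g : MetricField n) (T : TensorField n k) (x : Pt n) (idx : Fin (k+1) → Fin n) :
    covD g T x idx = nab g (idx 0) T x (fun m => idx m.succ) := rfl

lemma act_act (M N : Fin n → Fin n → ℝ) (t : (ι → Fin n) → ℝ) (idx : ι → Fin n) :
    act M (act N t) idx - act N (act M t) idx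
      = act (fun e c => ∑ h, (N e h * M h c - M e h * N h c)) t idx := by
  let X : (Fin n → Fin n → ℝ) → (Fin n → Fin n → ℝ) → ι → ι → ℝ := fun M N m m' =>
    ∑ e, ∑ f, M e (idx m) * (N f (Function.update idx m e m') *
      t (Function.update (Function.update idx m e) m' f))
  have hX : ∀ M N : Fin n → Fin n → ℝ, act M (act N t) idx = ∑ m, ∑ m', X M N m m' := by
    intro M N
    unfold act
    refine Finset.sum_congr rfl fun m _ => ?_
    simp only [X, Finset.mul_sum]
    rw [Finset.sum_comm]
  rw [hX M N, hX N M, Finset.sum_comm (f := fun m m' => X N M m m'), ← Finset.sum_sub_distrib]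
  unfold act
  refine Finset.sum_congr rfl fun m _ => ?_
  rw [← Finset.sum_sub_distrib, Finset.sum_eq_single m]
  · have : ∀ M N, X M N m m = ∑ f, (∑ e, N f e * M e (idx m)) * t (Function.update idx m f) := by
      intro M N
      simp only [X, Function.update_self, Function.update_idem, Finset.sum_mul]
      rw [Finset.sum_comm]
      exact Finset.sum_congr rfl fun _ _ => Finset.sum_congr rfl fun _ _ => by ring
    rw [this, this, ← Finset.sum_sub_distrib]
    refine Finset.sum_congr rfl fun f _ => ?_
    rw [← sub_mul, ← Finset.sum_sub_distrib]
  · intro m' _ hne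
    simp only [X]
    rw [sub_eq_zero, Finset.sum_comm]
    refine Finset.sum_congr rfl fun f _ => Finset.sum_congr rfl fun e _ => ?_
    rw [Function.update_of_ne hne, Function.update_of_ne hne.symm, Function.update_comm hne]
    ring
  · simp

lemma Sm.actG {g : MetricField n} (hg : IsLorentzMetric g) (a : Fin n) {T : TF n ι} (hT : Sm T) :
    Sm (fun x idx => act (fun e c => christoffel g x e a c) (T x) idx) := by
  intro idx
  exact Cs.sum fun m => Cs.sum fun e => (cs_chr hg _ _ _).mul (hT _)

lemma Sm.nab {g : MetricField n} (hg : IsLorentzMetric g) (a : Fin n) {T : TF n ι} (hT : Sm T) :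
    Sm (nab g a T) := by
  intro idx
  exact ((hT idx).pd a).sub (Sm.actG hg a hT idx)

lemma Sm.covD {g : MetricField n} (hg : IsLorentzMetric g) {k : ℕ} {T : TensorField n k}
    (hT : Sm (n := n) (ι := Fin k) T) : Sm (n := n) (ι := Fin (k+1)) (covD g T) := by
  intro idx
  exact Sm.nab hg (idx 0) hT _

lemma act_sub (M : Fin n → Fin n → ℝ) (t u : (ι → Fin n) → ℝ) (idx : ι → Fin n) :
    act M (fun i => t i - u i) idx = act M t idx - act M u idx := by
  simp only [act, mul_sub, Finset.sum_sub_distrib]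

lemma act_add (M : Fin n → Fin n → ℝ) (t u : (ι → Fin n) → ℝ) (idx : ι → Fin n) :
    act M (fun i => t i + u i) idx = act M t idx + act M u idx := by
  simp only [act, mul_add, Finset.sum_add_distrib]

lemma act_neg (M : Fin n → Fin n → ℝ) (t : (ι → Fin n) → ℝ) (idx : ι → Fin n) :
    act M (fun i => - t i) idx = - act M t idx := by
  simp only [act, mul_neg, Finset.sum_neg_distrib]

lemma act_sum {ξ : Type} (s : Finset ξ) (M : Fin n → Fin n → ℝ) (t : ξ → (ι → Fin n) → ℝ) (idx : ι → Fin n) :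
    act M (fun i => ∑ z ∈ s, t z i) idx = ∑ z ∈ s, act M (t z) idx := by
  simp only [act, Finset.mul_sum]
  conv_rhs => rw [Finset.sum_comm]
  refine Finset.sum_congr rfl fun m _ => ?_
  rw [Finset.sum_comm]

lemma nab_add {g : MetricField n} (a : Fin n) {T U : TF n ι} (hT : Sm T) (hU : Sm U) (x : Pt n)
    (idx : ι → Fin n) :
    nab g a (fun y i => T y i + U y i) x idx = nab g a T x idx + nab g a U x idx := by
  simp only [nab, act_add, pd_add (hT _) (hU _)]; ring

lemma nab_neg {g : MetricField n} (a : Fin n) {T : TF n ι} (x : Pt n)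
    (idx : ι → Fin n) :
    nab g a (fun y i => - T y i) x idx = - nab g a T x idx := by
  simp only [nab, act_neg, pd_neg]; ring

lemma pd_act {g : MetricField n} (hg : IsLorentzMetric g) (a b : Fin n) {T : TF n ι} (hT : Sm T)
    (x : Pt n) (idx : ι → Fin n) :
    pd (fun y => act (fun e c => christoffel g y e b c) (T y) idx) a x
      = act (fun e c => pd (fun y => christoffel g y e b c) a x) (T x) idx
        + act (fun e c => christoffel g x e b c) (fun i => pd (fun y => T y i) a x) idx := by
  unfold act
  rw [pd_sum _ (fun m => Cs.sum fun e => (cs_chr hg _ _ _).mul (hT _)), ← Finset.sum_add_distrib]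
  refine Finset.sum_congr rfl fun m _ => ?_
  rw [pd_sum _ (fun e => (cs_chr hg _ _ _).mul (hT _)), ← Finset.sum_add_distrib]
  refine Finset.sum_congr rfl fun e _ => ?_
  rw [pd_mul (cs_chr hg _ _ _) (hT _)]

/-- Curvature matrices `R_{ab}{}^e{}_c`. -/
def Rm (g : MetricField n) (x : Pt n) (a b e c : Fin n) : ℝ :=
  pd (fun y => christoffel g y e b c) a x - pd (fun y => christoffel g y e a c) b x
  + ∑ h, (christoffel g x e a h * christoffel g x h b c
          - christoffel g x e b h * christoffel g x h a c)

lemma act_add_mat (M N : Fin n → Fin n → ℝ) (t : (ι → Fin n) → ℝ) (idx : ι → Fin n) :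
    act (fun e c => M e c + N e c) t idx = act M t idx + act N t idx := by
  simp only [act, add_mul, Finset.sum_add_distrib]

lemma act_neg_mat (M : Fin n → Fin n → ℝ) (t : (ι → Fin n) → ℝ) (idx : ι → Fin n) :
    act (fun e c => - M e c) t idx = - act M t idx := by
  simp only [act, neg_mul, Finset.sum_neg_distrib]

/-- Ricci identity, in the form of the commutator of coordinate covariant derivatives. -/
lemma nab_comm {g : MetricField n} (hg : IsLorentzMetric g) (a b : Fin n) {T : TF n ι} (hT : Sm T)
    (x : Pt n) (idx : ι → Fin n) :
    nab g a (nab g b T) x idx - nab g b (nab g a T) x idx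
      = - act (fun e c => Rm g x a b e c) (T x) idx := by
  have h1 : ∀ a b : Fin n, nab g a (nab g b T) x idx
      = pd (fun y => pd (fun z => T z idx) b y) a x
        - act (fun e c => pd (fun y => christoffel g y e b c) a x) (T x) idx
        - act (fun e c => christoffel g x e b c) (fun i => pd (fun y => T y i) a x) idx
        - act (fun e c => christoffel g x e a c) (fun i => pd (fun y => T y i) b x) idx
        + act (fun e c => christoffel g x e a c) (act (fun e c => christoffel g x e b c) (T x)) idx := by
    intro a b
    have e1 : pd (fun y => nab g b T y idx) a x = pd (fun y => pd (fun z => T z idx) b y) a x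
        - pd (fun y => act (fun e c => christoffel g y e b c) (T y) idx) a x := by
      unfold nab
      exact pd_sub ((hT idx).pd b) (Sm.actG hg b hT idx) a x
    have e2 : act (fun e c => christoffel g x e a c) (nab g b T x) idx
        = act (fun e c => christoffel g x e a c) (fun i => pd (fun y => T y i) b x) idx
          - act (fun e c => christoffel g x e a c)
              (act (fun e c => christoffel g x e b c) (T x)) idx := by
      rw [← act_sub]; rfl
    conv_lhs => unfold nab
    change pd (fun y => nab g b T y idx) a x - act (fun e c => christoffel g x e a c) (nab g b T x) idx = _
    rw [e1, e2, pd_act hg a b hT]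
    ring
  rw [h1 a b, h1 b a, pd_comm (hT idx)]
  have h2 := act_act (fun e c => christoffel g x e a c) (fun e c => christoffel g x e b c) (T x) idx
  have h3 : act (fun e c => Rm g x a b e c) (T x) idx
      = act (fun e c => pd (fun y => christoffel g y e b c) a x) (T x) idx
       - act (fun e c => pd (fun y => christoffel g y e a c) b x) (T x) idx
       - act (fun e c => ∑ h, (christoffel g x e b h * christoffel g x h a c
          - christoffel g x e a h * christoffel g x h b c)) (T x) idx := by
    rw [sub_eq_add_neg, sub_eq_add_neg, ← act_neg_mat, ← act_neg_mat, ← act_add_mat, ← act_add_mat]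
    congr 1
    funext e c
    unfold Rm
    rw [← Finset.sum_neg_distrib, sub_eq_add_neg]
    congr 1
    exact Finset.sum_congr rfl fun _ _ => by ring
  rw [h3, ← h2]
  ring

/-- Splitting off the first slot in a coordinate covariant derivative. -/
lemma nab_cons {g : MetricField n} {k : ℕ} (a : Fin n) (U : TensorField n (k+1)) (x : Pt n)
    (idx : Fin (k+1) → Fin n) :
    nab g a U x idx = nab g a (fun y (i : Fin k → Fin n) => U y (Fin.cons (idx 0) i)) x (fun m => idx m.succ)
      - ∑ e, christoffel g x e a (idx 0) * U x (Fin.cons e (fun m => idx m.succ)) := by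
  have hidx : idx = Fin.cons (idx 0) (fun m => idx m.succ) := (Fin.cons_self_tail idx).symm
  unfold nab act
  rw [Fin.sum_univ_succ]
  have e0 : ∀ e, Function.update idx 0 e = Fin.cons e (fun m => idx m.succ) := by
    intro e
    conv_lhs => rw [hidx]
    exact Fin.update_cons_zero _ _ _
  have e1 : ∀ (m : Fin k) e, Function.update idx m.succ e
      = Fin.cons (idx 0) (Function.update (fun m => idx m.succ) m e) := by
    intro m e
    conv_lhs => rw [hidx]
    exact (Fin.cons_update _ _ _ _).symm
  simp only [e0, e1, ← hidx]
  ring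

lemma covD_covD {g : MetricField n} {k : ℕ} (T : TensorField n k) (x : Pt n)
    (a b : Fin n) (idx : Fin k → Fin n) :
    covD g (covD g T) x (Fin.cons a (Fin.cons b idx))
      = nab g a (nab g b T) x idx - ∑ e, christoffel g x e a b * nab g e T x idx := by
  rw [covD_eq, nab_cons]
  rfl

lemma covD_covD_comm {g : MetricField n} (hg : IsLorentzMetric g) {k : ℕ} {T : TensorField n k}
    (hT : Sm (n := n) (ι := Fin k) T) (x : Pt n) (a b : Fin n) (idx : Fin k → Fin n) :
    covD g (covD g T) x (Fin.cons a (Fin.cons b idx))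
      = covD g (covD g T) x (Fin.cons b (Fin.cons a idx))
        - act (fun e c => Rm g x a b e c) (T x) idx := by
  rw [covD_covD, covD_covD]
  have h := nab_comm hg a b hT x idx
  have : ∑ e, christoffel g x e a b * nab g e T x idx = ∑ e, christoffel g x e b a * nab g e T x idx :=
    Finset.sum_congr rfl fun e _ => by rw [chr_sym hg]
  rw [this]
  linarith

end action

/-! ## Part 4: evaluation of tensors on vectors -/

section evaluation
variable {n : ℕ} {ι κ : Type} [Fintype ι] [DecidableEq ι] [Fintype κ] [DecidableEq κ]

/-- Evaluation of a covariant tensor on a tuple of vectors. -/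
def ev (t : (ι → Fin n) → ℝ) (Y : ι → Fin n → ℝ) : ℝ := ∑ idx, t idx * ∏ m, Y m (idx m)

lemma prod_upd (Y : ι → Fin n → ℝ) (m : ι) (Z : Fin n → ℝ) (idx : ι → Fin n) :
    ∏ j, (Function.update Y m Z) j (idx j) = (∏ j ∈ Finset.univ.erase m, Y j (idx j)) * Z (idx m) := by
  rw [← Finset.prod_erase_mul _ _ (Finset.mem_univ m), Function.update_self]
  congr 1
  refine Finset.prod_congr rfl fun j hj => ?_
  rw [Function.update_of_ne (Finset.ne_of_mem_erase hj)]

lemma ev_upd_add (t : (ι → Fin n) → ℝ) (Y : ι → Fin n → ℝ) (m : ι) (Z W : Fin n → ℝ) :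
    ev t (Function.update Y m (fun e => Z e + W e))
      = ev t (Function.update Y m Z) + ev t (Function.update Y m W) := by
  simp only [ev, prod_upd, mul_add, Finset.sum_add_distrib]

lemma ev_upd_sum {ξ : Type} (s : Finset ξ) (t : (ι → Fin n) → ℝ) (Y : ι → Fin n → ℝ) (m : ι)
    (c : ξ → ℝ) (Z : ξ → Fin n → ℝ) :
    ev t (Function.update Y m (fun e => ∑ z ∈ s, c z * Z z e))
      = ∑ z ∈ s, c z * ev t (Function.update Y m (Z z)) := by
  simp only [ev, prod_upd, Finset.mul_sum]
  rw [Finset.sum_comm]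
  exact Finset.sum_congr rfl fun _ _ => Finset.sum_congr rfl fun _ _ => by ring

lemma swap_sum (m : ι) (F : (ι → Fin n) → Fin n → ℝ) :
    ∑ idx, ∑ e, F idx e = ∑ idx, ∑ e, F (Function.update idx m e) (idx m) := by
  let σ : ((ι → Fin n) × Fin n) → ((ι → Fin n) × Fin n) := fun p => (Function.update p.1 m p.2, p.1 m)
  have hσ : Function.Involutive σ := by
    rintro ⟨idx, e⟩
    simp [σ]
  have := Equiv.sum_comp hσ.toPerm (fun p => F p.1 p.2)
  rw [Fintype.sum_prod_type, Fintype.sum_prod_type] at this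
  exact this.symm

lemma ev_act (M : Fin n → Fin n → ℝ) (t : (ι → Fin n) → ℝ) (Y : ι → Fin n → ℝ) :
    ev (act M t) Y = ∑ m, ev t (Function.update Y m (fun e => ∑ c, M e c * Y m c)) := by
  unfold ev act
  simp only [Finset.sum_mul]
  rw [Finset.sum_comm]
  refine Finset.sum_congr rfl fun m _ => ?_
  rw [swap_sum m]
  refine Finset.sum_congr rfl fun idx _ => ?_
  rw [prod_upd, Finset.mul_sum, Finset.mul_sum]
  refine Finset.sum_congr rfl fun e _ => ?_
  rw [Function.update_self, Function.update_idem, Function.update_eq_self,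
    ← Finset.prod_erase_mul _ _ (Finset.mem_univ m), Function.update_self]
  have : ∏ j ∈ Finset.univ.erase m, Y j (Function.update idx m e j)
      = ∏ j ∈ Finset.univ.erase m, Y j (idx j) :=
    Finset.prod_congr rfl fun j hj => by rw [Function.update_of_ne (Finset.ne_of_mem_erase hj)]
  rw [this]
  ring

/-- Covariant derivative of a vector field in a coordinate direction. -/
def nabV (g : MetricField n) (a : Fin n) (Y : VecField n) (x : Pt n) (e : Fin n) : ℝ :=
  pd (fun y => Y y e) a x + ∑ c, christoffel g x e a c * Y x c

lemma ev_sub (t u : (ι → Fin n) → ℝ) (Y : ι → Fin n → ℝ) :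
    ev (fun i => t i - u i) Y = ev t Y - ev u Y := by
  simp only [ev, sub_mul, Finset.sum_sub_distrib]

lemma ev_add (t u : (ι → Fin n) → ℝ) (Y : ι → Fin n → ℝ) :
    ev (fun i => t i + u i) Y = ev t Y + ev u Y := by
  simp only [ev, add_mul, Finset.sum_add_distrib]

lemma ev_neg (t : (ι → Fin n) → ℝ) (Y : ι → Fin n → ℝ) :
    ev (fun i => - t i) Y = - ev t Y := by
  simp only [ev, neg_mul, Finset.sum_neg_distrib]

lemma ev_sum {ξ : Type} (s : Finset ξ) (c : ξ → ℝ) (t : ξ → (ι → Fin n) → ℝ) (Y : ι → Fin n → ℝ) :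
    ev (fun i => ∑ z ∈ s, c z * t z i) Y = ∑ z ∈ s, c z * ev (t z) Y := by
  simp only [ev, Finset.mul_sum, Finset.sum_mul]
  rw [Finset.sum_comm]
  exact Finset.sum_congr rfl fun _ _ => Finset.sum_congr rfl fun _ _ => by ring

/-- Leibniz rule. -/
lemma leibniz (g : MetricField n) (a : Fin n) {T : TF n ι} (hT : Sm T)
    {Y : ι → VecField n} (hY : ∀ m e, Cs fun y => Y m y e) (x : Pt n) :
    pd (fun y => ev (T y) (fun m => Y m y)) a x
      = ev (nab g a T x) (fun m => Y m x)
        + ∑ m, ev (T x) (Function.update (fun m => Y m x) m (nabV g a (Y m) x)) := by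
  have h1 : pd (fun y => ev (T y) (fun m => Y m y)) a x
      = ev (fun i => pd (fun y => T y i) a x) (fun m => Y m x)
        + ∑ m, ev (T x) (Function.update (fun m => Y m x) m (fun e => pd (fun y => Y m y e) a x)) := by
    unfold ev
    rw [pd_sum _ (fun idx => (hT idx).mul (Cs.prod fun m => hY _ _))]
    conv_rhs => rw [Finset.sum_comm]
    rw [← Finset.sum_add_distrib]
    refine Finset.sum_congr rfl fun idx _ => ?_
    rw [pd_mul (hT idx) (Cs.prod fun m => hY _ _), pd_prod _ (fun m => hY _ _)]
    simp only [prod_upd, Finset.mul_sum]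
  have h2 : ev (nab g a T x) (fun m => Y m x)
      = ev (fun i => pd (fun y => T y i) a x) (fun m => Y m x)
        - ev (act (fun e c => christoffel g x e a c) (T x)) (fun m => Y m x) := by
    rw [← ev_sub]; rfl
  rw [h1, h2, ev_act]
  unfold nabV
  simp only [ev_upd_add, Finset.sum_add_distrib]
  ring

end evaluation

/-! ## Part 5: tensor products, reindexing and contractions -/

section ops
variable {n : ℕ} {ι κ : Type} [Fintype ι] [DecidableEq ι] [Fintype κ] [DecidableEq κ]

/-- Tensor product. -/
def tens (T : TF n ι) (U : TF n κ) : TF n (ι ⊕ κ) := fun x idx =>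
  T x (fun i => idx (Sum.inl i)) * U x (fun k => idx (Sum.inr k))

/-- Renaming of slots. -/
def reix (e : ι ≃ κ) (T : TF n ι) : TF n κ := fun x idx => T x (fun i => idx (e i))

/-- Metric contraction of two slots. -/
def contr (g : MetricField n) (T : TF n (ι ⊕ Bool)) : TF n ι := fun x idx =>
  ∑ p, ∑ q, (g x)⁻¹ p q * T x (Sum.elim idx (fun b => cond b q p))

lemma Sm.tens {T : TF n ι} {U : TF n κ} (hT : Sm T) (hU : Sm U) : Sm (tens T U) :=
  fun _ => (hT _).mul (hU _)

lemma Sm.reix {T : TF n ι} (e : ι ≃ κ) (hT : Sm T) : Sm (reix e T) := fun _ => hT _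

lemma Sm.contr {g : MetricField n} (hg : IsLorentzMetric g) {T : TF n (ι ⊕ Bool)} (hT : Sm T) :
    Sm (contr g T) := fun _ => Cs.sum fun p => Cs.sum fun q => (cs_ginv hg p q).mul (hT _)

lemma nab_tens (g : MetricField n) (a : Fin n) {T : TF n ι} {U : TF n κ} (hT : Sm T) (hU : Sm U)
    (x : Pt n) (idx : ι ⊕ κ → Fin n) :
    nab g a (tens T U) x idx = tens (nab g a T) U x idx + tens T (nab g a U) x idx := by
  unfold nab tens act
  rw [pd_mul (hT _) (hU _), Fintype.sum_sum_type]
  have e1 : ∀ (m : ι) (e : Fin n), (fun i => Function.update idx (Sum.inl m) e (Sum.inl i))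
      = Function.update (fun i => idx (Sum.inl i)) m e := by
    intro m e; funext i
    by_cases h : i = m
    · subst h; simp
    · rw [Function.update_of_ne h, Function.update_of_ne (by simpa using h)]
  have e2 : ∀ (m : κ) (e : Fin n), (fun i => Function.update idx (Sum.inr m) e (Sum.inr i))
      = Function.update (fun i => idx (Sum.inr i)) m e := by
    intro m e; funext i
    by_cases h : i = m
    · subst h; simp
    · rw [Function.update_of_ne h, Function.update_of_ne (by simpa using h)]
  have e3 : ∀ (m : ι) (e : Fin n), (fun i => Function.update idx (Sum.inl m) e (Sum.inr i))
      = (fun i => idx (Sum.inr i)) := by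
    intro m e; funext i; rw [Function.update_of_ne (by simp)]
  have e4 : ∀ (m : κ) (e : Fin n), (fun i => Function.update idx (Sum.inr m) e (Sum.inl i))
      = (fun i => idx (Sum.inl i)) := by
    intro m e; funext i; rw [Function.update_of_ne (by simp)]
  simp only [e1, e2, e3, e4]
  simp only [sub_mul, mul_sub, Finset.sum_mul, Finset.mul_sum, mul_assoc, mul_left_comm]
  ring

lemma nab_reix (g : MetricField n) (a : Fin n) {T : TF n ι} (e : ι ≃ κ)
    (x : Pt n) (idx : κ → Fin n) :
    nab g a (reix e T) x idx = reix e (nab g a T) x idx := by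
  unfold nab reix act
  congr 1
  rw [← Equiv.sum_comp e]
  refine Finset.sum_congr rfl fun m _ => Finset.sum_congr rfl fun c _ => ?_
  congr 1
  show T x _ = T x _
  congr 1
  funext i
  by_cases h : i = m
  · subst h; simp
  · rw [Function.update_of_ne h, Function.update_of_ne (by simpa using h)]

lemma nab_contr {g : MetricField n} (hg : IsLorentzMetric g) (a : Fin n) {T : TF n (ι ⊕ Bool)}
    (hT : Sm T) (x : Pt n) (idx : ι → Fin n) :
    nab g a (contr g T) x idx = contr g (nab g a T) x idx := by
  let t : (ι → Fin n) → Fin n → Fin n → ℝ := fun idx p q => T x (Sum.elim idx (fun b => cond b q p))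
  let I := (g x)⁻¹
  let Γ : Fin n → Fin n → ℝ := fun e c => christoffel g x e a c
  have u1 : ∀ (p q : Fin n) (m : ι) (e : Fin n),
      Function.update (Sum.elim idx (fun b => cond b q p)) (Sum.inl m) e
        = Sum.elim (Function.update idx m e) (fun b => cond b q p) := by
    intro p q m e; rw [Sum.update_elim_inl]
  have u2 : ∀ (p q : Fin n) (e : Fin n),
      Function.update (Sum.elim idx (fun b => cond b q p)) (Sum.inr true) e
        = Sum.elim idx (fun b => cond b e p) := by
    intro p q e; rw [Sum.update_elim_inr]; congr 1; funext b; cases b <;> simp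
  have u3 : ∀ (p q : Fin n) (e : Fin n),
      Function.update (Sum.elim idx (fun b => cond b q p)) (Sum.inr false) e
        = Sum.elim idx (fun b => cond b q e) := by
    intro p q e; rw [Sum.update_elim_inr]; congr 1; funext b; cases b <;> simp
  have hL : nab g a (contr g T) x idx
      = (∑ p, ∑ q, I p q * pd (fun y => T y (Sum.elim idx (fun b => cond b q p))) a x)
        - (∑ m, ∑ e, ∑ p, ∑ q, Γ e (idx m) * (I p q * t (Function.update idx m e) p q))
        - (∑ p, ∑ q, (∑ e, Γ p e * I e q) * t idx p q)
        - (∑ p, ∑ q, (∑ e, I p e * Γ q e) * t idx p q) := by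
    unfold nab contr act
    rw [pd_sum _ (fun p => Cs.sum fun q => (cs_ginv hg p q).mul (hT _))]
    have : ∀ p, pd (fun y => ∑ q, (g y)⁻¹ p q * T y (Sum.elim idx (fun b => cond b q p))) a x
        = (∑ q, I p q * pd (fun y => T y (Sum.elim idx (fun b => cond b q p))) a x)
          - (∑ q, (∑ e, Γ p e * I e q) * t idx p q) - (∑ q, (∑ e, I p e * Γ q e) * t idx p q) := by
      intro p
      rw [pd_sum _ (fun q => (cs_ginv hg p q).mul (hT _)), ← Finset.sum_sub_distrib,
        ← Finset.sum_sub_distrib]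
      refine Finset.sum_congr rfl fun q _ => ?_
      rw [pd_mul (cs_ginv hg p q) (hT _), pd_ginv hg]
      simp only [I, Γ, t]
      ring
    simp only [this, Finset.sum_sub_distrib, Finset.mul_sum]
    simp only [I, Γ, t]
    ring
  have hR : contr g (nab g a T) x idx
      = (∑ p, ∑ q, I p q * pd (fun y => T y (Sum.elim idx (fun b => cond b q p))) a x)
        - (∑ p, ∑ q, ∑ m, ∑ e, Γ e (idx m) * (I p q * t (Function.update idx m e) p q))
        - (∑ p, ∑ q, ∑ e, I p q * (Γ e q * t idx p e))
        - (∑ p, ∑ q, ∑ e, I p q * (Γ e p * t idx e q)) := by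
    unfold nab contr act
    simp only [Fintype.sum_sum_type, Fintype.sum_bool, u1, u2, u3, Sum.elim_inl, Sum.elim_inr,
      cond_true, cond_false, mul_sub, mul_add, Finset.sum_sub_distrib, Finset.sum_add_distrib,
      Finset.mul_sum, Γ, I, t]
    simp only [mul_left_comm]
    ring
  rw [hL, hR]
  have k1 : (∑ m, ∑ e, ∑ p, ∑ q, Γ e (idx m) * (I p q * t (Function.update idx m e) p q))
      = ∑ p, ∑ q, ∑ m, ∑ e, Γ e (idx m) * (I p q * t (Function.update idx m e) p q) := by
    simp only [← Fintype.sum_prod_type' (f := fun (p q : Fin n) => _)]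
    simp only [← Finset.univ_product_univ]
    rw [Finset.sum_congr rfl fun m _ => Finset.sum_comm]
    rw [Finset.sum_comm]
  have k2 : (∑ p, ∑ q, (∑ e, Γ p e * I e q) * t idx p q)
      = ∑ p, ∑ q, ∑ e, I p q * (Γ e p * t idx e q) := by
    simp only [Finset.sum_mul]
    have : ∀ p : Fin n, ∑ q, ∑ e, I p q * (Γ e p * t idx e q) = ∑ e, ∑ q, I p q * (Γ e p * t idx e q) :=
      fun p => Finset.sum_comm
    simp only [this]
    rw [Finset.sum_comm (f := fun p e => ∑ q, I p q * (Γ e p * t idx e q))]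
    refine Finset.sum_congr rfl fun p _ => ?_
    rw [Finset.sum_comm]
    exact Finset.sum_congr rfl fun _ _ => Finset.sum_congr rfl fun _ _ => by ring
  have k3 : (∑ p, ∑ q, (∑ e, I p e * Γ q e) * t idx p q)
      = ∑ p, ∑ q, ∑ e, I p q * (Γ e q * t idx p e) := by
    simp only [Finset.sum_mul]
    refine Finset.sum_congr rfl fun p _ => ?_
    rw [Finset.sum_comm]
    exact Finset.sum_congr rfl fun _ _ => Finset.sum_congr rfl fun _ _ => by ring
  rw [k1, k2, k3]
  ring

end ops

/-! ## Part 6: curvature symmetries -/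

section curvature
variable {n : ℕ} {g : MetricField n}

lemma upd1 (a e : Fin n) : Function.update (![a] : Fin 1 → Fin n) 0 e = ![e] := by
  funext i; fin_cases i; rfl
lemma upd20 (a b e : Fin n) : Function.update (![a, b] : Fin 2 → Fin n) 0 e = ![e, b] := by
  funext i; fin_cases i <;> rfl
lemma upd21 (a b e : Fin n) : Function.update (![a, b] : Fin 2 → Fin n) 1 e = ![a, e] := by
  funext i; fin_cases i <;> rfl
lemma upd40 (a b c d e : Fin n) : Function.update (![a, b, c, d] : Fin 4 → Fin n) 0 e = ![e, b, c, d] := by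
  funext i; fin_cases i <;> rfl
lemma upd41 (a b c d e : Fin n) : Function.update (![a, b, c, d] : Fin 4 → Fin n) 1 e = ![a, e, c, d] := by
  funext i; fin_cases i <;> rfl
lemma upd42 (a b c d e : Fin n) : Function.update (![a, b, c, d] : Fin 4 → Fin n) 2 e = ![a, b, e, d] := by
  funext i; fin_cases i <;> rfl
lemma upd43 (a b c d e : Fin n) : Function.update (![a, b, c, d] : Fin 4 → Fin n) 3 e = ![a, b, c, e] := by
  funext i; fin_cases i <;> rfl

lemma riem_eq (x : Pt n) (a b c d : Fin n) :
    riemann g x ![a, b, c, d] = ∑ e, g x a e * Rm g x c d e b := rfl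

lemma cs_Rm (hg : IsLorentzMetric g) (a b e c : Fin n) : Cs fun x => Rm g x a b e c := by
  unfold Rm
  exact (((cs_chr hg _ _ _).pd _).sub ((cs_chr hg _ _ _).pd _)).add
    (Cs.sum fun h => ((cs_chr hg _ _ _).mul (cs_chr hg _ _ _)).sub
      ((cs_chr hg _ _ _).mul (cs_chr hg _ _ _)))

lemma sm_riem (hg : IsLorentzMetric g) : Sm (n := n) (ι := Fin 4) (riemann g) := fun idx =>
  Cs.sum fun e => (cs_g hg _ _).mul (cs_Rm hg (idx 2) (idx 3) e (idx 1))

lemma Rm_anti (x : Pt n) (a b e c : Fin n) : Rm g x a b e c = - Rm g x b a e c := by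
  unfold Rm
  rw [neg_add, ← Finset.sum_neg_distrib]
  congr 1
  · ring
  · exact Finset.sum_congr rfl fun _ _ => by ring

lemma Rm_bianchi (hg : IsLorentzMetric g) (x : Pt n) (a b e c : Fin n) :
    Rm g x a b e c + Rm g x b c e a + Rm g x c a e b = 0 := by
  unfold Rm
  have s : ∀ (p q r : Fin n), christoffel g x p q r = christoffel g x p r q := chr_sym hg x
  have s' : ∀ (p q r : Fin n), (fun y => christoffel g y p q r) = fun y => christoffel g y p r q :=
    fun p q r => funext fun y => chr_sym hg y p q r
  rw [s' e c b, s' e a c, s' e b a]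
  simp only [Finset.sum_sub_distrib]
  have t : ∀ p q r : Fin n, ∑ h, christoffel g x e p h * christoffel g x h q r
      = ∑ h, christoffel g x e p h * christoffel g x h r q :=
    fun p q r => Finset.sum_congr rfl fun h _ => by rw [s h q r]
  rw [t a b c, t b c a, t c a b]
  ring

lemma riem_last (x : Pt n) (a b c d : Fin n) :
    riemann g x ![a, b, c, d] = - riemann g x ![a, b, d, c] := by
  rw [riem_eq, riem_eq, ← Finset.sum_neg_distrib]
  exact Finset.sum_congr rfl fun e _ => by rw [Rm_anti]; ring

/-- The metric as a tensor field. -/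
def gT (g : MetricField n) : TF n (Fin 2) := fun x idx => g x (idx 0) (idx 1)

lemma nab_gT (hg : IsLorentzMetric g) (a : Fin n) (x : Pt n) (idx : Fin 2 → Fin n) :
    nab g a (gT g) x idx = 0 := by
  unfold nab act gT
  rw [pd_g hg]
  simp [Fin.sum_univ_two]
  rw [sub_eq_zero]
  congr 1 <;> exact Finset.sum_congr rfl fun _ _ => by ring

lemma riem_first (hg : IsLorentzMetric g) (x : Pt n) (a b c d : Fin n) :
    riemann g x ![a, b, c, d] = - riemann g x ![b, a, c, d] := by
  have h := nab_comm hg c d (T := gT g) (fun idx => cs_g hg _ _) x ![a, b]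
  have z : ∀ e, nab g e (gT g) = fun _ _ => 0 := fun e => funext fun y => funext fun i => nab_gT hg e y i
  rw [z, z] at h
  have z2 : ∀ e, nab g e (fun _ _ => 0 : TF n (Fin 2)) x ![a,b] = 0 := by
    intro e
    simp [nab, act, pd_const]
  rw [z2, z2] at h
  unfold act gT at h
  simp [Fin.sum_univ_two] at h
  rw [riem_eq, riem_eq]
  have e1 : ∑ e, Rm g x c d e a * g x e b = ∑ e, g x b e * Rm g x c d e a :=
    Finset.sum_congr rfl fun e _ => by rw [gsym hg]; ring
  have e2 : ∑ e, Rm g x c d e b * g x a e = ∑ e, g x a e * Rm g x c d e b :=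
    Finset.sum_congr rfl fun e _ => by ring
  linarith

lemma riem_bianchi (hg : IsLorentzMetric g) (x : Pt n) (a b c d : Fin n) :
    riemann g x ![a, b, c, d] + riemann g x ![a, c, d, b] + riemann g x ![a, d, b, c] = 0 := by
  rw [riem_eq, riem_eq, riem_eq, ← Finset.sum_add_distrib, ← Finset.sum_add_distrib]
  refine Finset.sum_eq_zero fun e _ => ?_
  have := Rm_bianchi hg x c d e b
  rw [← mul_add, ← mul_add, this, mul_zero]

lemma riem_pair (hg : IsLorentzMetric g) (x : Pt n) (a b c d : Fin n) :
    riemann g x ![a, b, c, d] = riemann g x ![c, d, a, b] := by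
  have F := riem_first hg x
  have L := riem_last (g := g) x
  have B := riem_bianchi hg x
  have b1 := B a b c d
  have b2 := B b c d a
  have b3 := B c d a b
  have b4 := B d a b c
  have := F a b c d; have := F a c d b; have := F a d b c
  have := F b c d a; have := F b d a c; have := F c d a b
  have := F c b d a; have := F c a b d; have := F d b c a; have := F d c a b
  have := F c d b a
  have := L a b c d; have := L a c d b; have := L a d b c; have := L b c d a; have := L b d a c
  have := L b a c d; have := L c d a b; have := L c a b d; have := L c b d a
  have := L d a b c; have := L d b c a; have := L d c a b
  linarith

/-- Second Bianchi identity, mixed form. -/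
lemma Rm_bianchi2 (hg : IsLorentzMetric g) (x : Pt n) (a b c f p : Fin n) :
    let Q : Fin n → Fin n → Fin n → ℝ := fun a b c =>
      pd (fun y => Rm g y b c f p) a x - (∑ e, Rm g x b c f e * christoffel g x e a p)
        + ∑ e, christoffel g x f a e * Rm g x b c e p
    Q a b c + Q b c a + Q c a b = 0 := by
  intro Q
  let T : TF n (Fin 1) := fun _ idx => if idx 0 = f then 1 else 0
  have hT : Sm T := fun idx => contDiff_const
  have hQ : ∀ a b c, nab g a (fun y i => nab g b (nab g c T) y i - nab g c (nab g b T) y i) x ![p]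
      - (nab g b (nab g c (nab g a T)) x ![p] - nab g c (nab g b (nab g a T)) x ![p]) = - Q a b c := by
    intro a b c
    rw [nab_comm hg b c (Sm.nab hg a hT) x ![p]]
    have e1 : (fun y i => nab g b (nab g c T) y i - nab g c (nab g b T) y i)
        = fun y (i : Fin 1 → Fin n) => - Rm g y b c f (i 0) := by
      funext y i
      rw [nab_comm hg b c hT]
      unfold act
      simp [T]
    have e2 : nab g a T x = fun i => - christoffel g x f a (i 0) := by
      funext i
      unfold nab act
      simp [T, pd_const]
    rw [e1, nab_neg]
    have e3 : nab g a (fun y (i : Fin 1 → Fin n) => Rm g y b c f (i 0)) x ![p]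
        = pd (fun y => Rm g y b c f p) a x - ∑ e, christoffel g x e a p * Rm g x b c f e := by
      unfold nab act
      simp
    have e4 : act (fun e c_1 => Rm g x b c e c_1) (nab g a T x) ![p]
        = - ∑ e, christoffel g x f a e * Rm g x b c e p := by
      rw [e2]
      unfold act
      simp [mul_comm]
    rw [e3, e4]
    have : ∑ e, christoffel g x e a p * Rm g x b c f e = ∑ e, Rm g x b c f e * christoffel g x e a p :=
      Finset.sum_congr rfl fun e _ => by ring
    rw [this]
    simp only [Q]
    ring
  have hn : ∀ a b c, nab g a (fun y i => nab g b (nab g c T) y i - nab g c (nab g b T) y i) x ![p]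
      = nab g a (nab g b (nab g c T)) x ![p] - nab g a (nab g c (nab g b T)) x ![p] := by
    intro a b c
    have := nab_add (g := g) a (T := nab g b (nab g c T)) (U := fun y i => - nab g c (nab g b T) y i)
      (Sm.nab hg _ (Sm.nab hg _ hT)) (fun i => (Sm.nab hg _ (Sm.nab hg _ hT) i).neg) x ![p]
    rw [nab_neg] at this
    simpa [sub_eq_add_neg] using this
  have h1 := hQ a b c
  have h2 := hQ b c a
  have h3 := hQ c a b
  rw [hn] at h1 h2 h3
  linarith

lemma nab_riem (hg : IsLorentzMetric g) (x : Pt n) (d f c b a : Fin n) :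
    nab g d (riemann g) x ![f, c, b, a]
      = (∑ h, g x f h * (pd (fun y => Rm g y b a h c) d x
          - (∑ e, Rm g x b a h e * christoffel g x e d c)
          + ∑ e, christoffel g x h d e * Rm g x b a e c))
        - (∑ e, christoffel g x e d b * riemann g x ![f, c, e, a])
        - (∑ e, christoffel g x e d a * riemann g x ![f, c, b, e]) := by
  unfold nab act
  rw [Fin.sum_univ_four]
  simp only [upd40, upd41, upd42, upd43]
  have e0 : pd (fun y => riemann g y ![f, c, b, a]) d x
      = (∑ h, g x f h * pd (fun y => Rm g y b a h c) d x)
        + (∑ h, (∑ e, g x e h * christoffel g x e d f) * Rm g x b a h c)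
        + (∑ h, (∑ e, g x f e * christoffel g x e d h) * Rm g x b a h c) := by
    have : (fun y => riemann g y ![f, c, b, a]) = fun y => ∑ h, g y f h * Rm g y b a h c := rfl
    rw [this, pd_sum _ (fun h => (cs_g hg _ _).mul (cs_Rm hg _ _ _ _)), ← Finset.sum_add_distrib,
      ← Finset.sum_add_distrib]
    refine Finset.sum_congr rfl fun h _ => ?_
    rw [pd_mul (cs_g hg _ _) (cs_Rm hg _ _ _ _), pd_g hg]
    ring
  have e1 : ∑ e, christoffel g x e d f * riemann g x ![e, c, b, a]
      = ∑ h, (∑ e, g x e h * christoffel g x e d f) * Rm g x b a h c := by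
    simp only [riem_eq, Finset.mul_sum, Finset.sum_mul]
    rw [Finset.sum_comm]
    exact Finset.sum_congr rfl fun _ _ => Finset.sum_congr rfl fun _ _ => by ring
  have e2 : ∑ e, christoffel g x e d c * riemann g x ![f, e, b, a]
      = ∑ h, g x f h * ∑ e, Rm g x b a h e * christoffel g x e d c := by
    simp only [riem_eq, Finset.mul_sum]
    rw [Finset.sum_comm]
    exact Finset.sum_congr rfl fun _ _ => Finset.sum_congr rfl fun _ _ => by ring
  have e3 : ∑ h, (∑ e, g x f e * christoffel g x e d h) * Rm g x b a h c
      = ∑ h, g x f h * ∑ e, christoffel g x h d e * Rm g x b a e c := by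
    simp only [Finset.mul_sum, Finset.sum_mul]
    rw [Finset.sum_comm]
    exact Finset.sum_congr rfl fun _ _ => Finset.sum_congr rfl fun _ _ => by ring
  have e4 : (![f, c, b, a] : Fin 4 → Fin n) 0 = f := rfl
  have e5 : (![f, c, b, a] : Fin 4 → Fin n) 1 = c := rfl
  have e6 : (![f, c, b, a] : Fin 4 → Fin n) 2 = b := rfl
  have e7 : (![f, c, b, a] : Fin 4 → Fin n) 3 = a := rfl
  rw [e4, e5, e6, e7, e0, e1, e2, e3]
  simp only [mul_add, mul_sub, Finset.sum_add_distrib, Finset.sum_sub_distrib]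
  ring

/-- Second Bianchi identity. -/
lemma riem_bianchi2 (hg : IsLorentzMetric g) (x : Pt n) (f c a b d : Fin n) :
    nab g a (riemann g) x ![f, c, b, d] + nab g b (riemann g) x ![f, c, d, a]
      + nab g d (riemann g) x ![f, c, a, b] = 0 := by
  rw [nab_riem hg, nab_riem hg, nab_riem hg]
  have s : ∀ (p q : Fin n) (F : Fin n → ℝ), ∑ e, christoffel g x e p q * F e
      = ∑ e, christoffel g x e q p * F e := fun p q F =>
    Finset.sum_congr rfl fun e _ => by rw [chr_sym hg]
  have l : ∀ (p q r : Fin n), ∑ e, christoffel g x e p q * riemann g x ![f, c, e, r]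
      = - ∑ e, christoffel g x e q p * riemann g x ![f, c, r, e] := fun p q r => by
    rw [← Finset.sum_neg_distrib]
    exact Finset.sum_congr rfl fun e _ => by rw [chr_sym hg, riem_last]; ring
  rw [l a b d, l b d a, l d a b]
  have := fun h => Rm_bianchi2 hg x a b d h c
  simp only at this
  have t : (∑ h, g x f h * (pd (fun y => Rm g y b d h c) a x
          - (∑ e, Rm g x b d h e * christoffel g x e a c)
          + ∑ e, christoffel g x h a e * Rm g x b d e c))
      + (∑ h, g x f h * (pd (fun y => Rm g y d a h c) b x
          - (∑ e, Rm g x d a h e * christoffel g x e b c)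
          + ∑ e, christoffel g x h b e * Rm g x d a e c))
      + (∑ h, g x f h * (pd (fun y => Rm g y a b h c) d x
          - (∑ e, Rm g x a b h e * christoffel g x e d c)
          + ∑ e, christoffel g x h d e * Rm g x a b e c)) = 0 := by
    rw [← Finset.sum_add_distrib, ← Finset.sum_add_distrib]
    refine Finset.sum_eq_zero fun h _ => ?_
    rw [← mul_add, ← mul_add, this, mul_zero]
  linarith

end curvature

set_option linter.unusedSectionVars false
/-! ## Part 7: null frames -/

section frames
variable {n : ℕ} [NeZero n] {g : MetricField n} {ℓ : VecField n}

/-- The background data: a Lorentzian metric and a smooth null vector field. -/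
structure Bg (g : MetricField n) (ℓ : VecField n) : Prop where
  hg : IsLorentzMetric g
  hsm : IsSmoothVec ℓ
  h0 : ∀ x, ℓ x ≠ 0
  null : ∀ x, gdot g x (ℓ x) (ℓ x) = 0

/-- The involution of frame indices exchanging the two null directions. -/
def bar : Equiv.Perm (Fin n) := Equiv.swap 0 1

/-- The weight of a frame index. -/
def wt (i : Fin n) : ℤ := if (i : ℕ) = 0 then 1 else if (i : ℕ) = 1 then -1 else 0

lemma bw_eq {k : ℕ} (a : Fin k → Fin n) : bw a = ∑ m, wt (a m) := by
  unfold bw wt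
  rw [Finset.card_filter, Finset.card_filter]
  push_cast
  rw [← Finset.sum_sub_distrib]
  refine Finset.sum_congr rfl fun m _ => ?_
  split_ifs <;> first | omega | rfl

/-- Adapted null frames at a point. -/
structure IsFr (g : MetricField n) (ℓ : VecField n) (x : Pt n) (E : Fin n → Fin n → ℝ) : Prop where
  e0 : E 0 = ℓ x
  h : ∀ a b, gdot g x (E a) (E b) = if b = bar a then 1 else 0

lemma bar_bar (a : Fin n) : bar (bar a) = a := by simp [bar]

lemma gdot_mat (x : Pt n) (P : Matrix (Fin n) (Fin n) ℝ) (u v : Fin n → ℝ) :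
    gdot g x (P.mulVec u) (P.mulVec v) = u ⬝ᵥ ((P.transpose * g x * P).mulVec v) := by
  have : ∀ X Y : Fin n → ℝ, gdot g x X Y = X ⬝ᵥ (g x).mulVec Y := by
    intro X Y
    simp only [gdot, dotProduct, Matrix.mulVec, Finset.mul_sum]
    exact Finset.sum_congr rfl fun _ _ => Finset.sum_congr rfl fun _ _ => by ring
  rw [this, ← Matrix.mulVec_mulVec, ← Matrix.mulVec_mulVec, Matrix.dotProduct_mulVec u P.transpose,
    Matrix.vecMul_transpose]

lemma Bg.frame_aux (H : Bg g ℓ) (x : Pt n) :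
    ((0 : Fin n) ≠ 1) ∧ ∃ E, IsFr g ℓ x E := by
  obtain ⟨P, hP, hd⟩ := H.hg.2.2 x
  set u : EuclideanSpace ℝ (Fin n) := WithLp.toLp 2 (P⁻¹.mulVec (ℓ x)) with hu
  have hPu : P.mulVec u.ofLp = ℓ x := by
    simp only [hu, Matrix.mulVec_mulVec, Matrix.mul_nonsing_inv _ hP, Matrix.one_mulVec]
  have gE : ∀ X Y : EuclideanSpace ℝ (Fin n), gdot g x (P.mulVec X.ofLp) (P.mulVec Y.ofLp)
      = inner ℝ X Y - 2 * (X 0 * Y 0) := by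
    intro X Y
    rw [gdot_mat, hd]
    simp only [dotProduct, Matrix.mulVec_diagonal, PiLp.inner_apply, RCLike.inner_apply, conj_trivial]
    have : ∀ i : Fin n, X i * ((if (i : ℕ) = 0 then (-1 : ℝ) else 1) * Y i)
        = Y i * X i - (if i = 0 then 2 * (X i * Y i) else 0) := by
      intro i
      have : (i : ℕ) = 0 ↔ i = 0 := by rw [Fin.ext_iff, Fin.val_zero]
      simp only [this]
      split_ifs <;> ring
    rw [Finset.sum_congr rfl fun i _ => this i, Finset.sum_sub_distrib]
    simp
  have hune : u ≠ 0 := by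
    intro h
    apply H.h0 x
    rw [← hPu, h]; simp
  have hnull : inner ℝ u u - 2 * (u 0 * u 0) = 0 := by
    rw [← gE, hPu, H.null]
  have hu0 : u 0 ≠ 0 := by
    intro h
    rw [h] at hnull
    have : inner ℝ u u = 0 := by linarith
    exact hune (inner_self_eq_zero.1 this)
  set b0 : EuclideanSpace ℝ (Fin n) := EuclideanSpace.single 0 1 with hb0
  set r : ℝ := |u 0| with hr
  have hr0 : r ≠ 0 := abs_ne_zero.2 hu0
  have hrr : r * r = u 0 * u 0 := abs_mul_abs_self _
  have i0 : ∀ X : EuclideanSpace ℝ (Fin n), inner ℝ b0 X = X 0 := by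
    intro X; simp [hb0, EuclideanSpace.inner_single_left]
  have i0' : ∀ X : EuclideanSpace ℝ (Fin n), inner ℝ X b0 = X 0 := by
    intro X; rw [real_inner_comm, i0]
  have b00 : b0 0 = 1 := by simp [hb0]
  set w : EuclideanSpace ℝ (Fin n) := r⁻¹ • (u - u 0 • b0) with hw
  have w0 : inner ℝ b0 w = 0 := by
    rw [i0]
    simp [hw, b00]
  have ww : inner ℝ w w = 1 := by
    rw [hw, inner_smul_left, inner_smul_right, inner_sub_left, inner_sub_right, inner_sub_right,
      inner_smul_left, inner_smul_right, inner_smul_left, inner_smul_right, i0, i0', i0, b00]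
    have : inner ℝ u u = 2 * (r * r) := by rw [hrr]; linarith
    rw [this]
    simp only [conj_trivial]
    have hm : u 0 * u 0 = r * r := hrr.symm
    field_simp
    nlinarith
  have hne : (0 : Fin n) ≠ 1 := by
    intro h
    have hn1 : n = 1 := by
      by_contra hn
      have h2 : 1 < n := by have := NeZero.pos n; omega
      have := congrArg Fin.val h
      rw [Fin.val_zero, Fin.coe_ofNat_eq_mod, Nat.mod_eq_of_lt h2] at this
      omega
    subst hn1
    rw [PiLp.inner_apply] at hnull
    simp at hnull
    have : u 0 * u 0 = 0 := by nlinarith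
    exact hu0 (by simpa using this)
  refine ⟨hne, ?_⟩
  set v : Fin n → EuclideanSpace ℝ (Fin n) := fun i => if i = 0 then b0 else w with hv
  have hon : Orthonormal ℝ (({0, 1} : Set (Fin n)).domRestrict v) := by
    rw [orthonormal_iff_ite]
    rintro ⟨i, hi⟩ ⟨j, hj⟩
    simp only [Set.mem_insert_iff, Set.mem_singleton_iff] at hi hj
    simp only [Set.domRestrict_apply, Subtype.mk.injEq, hv]
    rcases hi with rfl | rfl <;> rcases hj with rfl | rfl
    · simp only [if_true]; rw [i0, b00]
    · simp [hne, hne.symm, w0]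
    · rw [if_neg hne.symm, if_pos rfl, if_neg hne.symm, real_inner_comm]; exact w0
    · simp only [hne.symm, if_false, if_true]; exact ww
  obtain ⟨B, hB⟩ := hon.exists_orthonormalBasis_extension_of_card_eq (by simp)
  have B0 : B 0 = b0 := by rw [hB 0 (by simp)]; simp [hv]
  have B1 : B 1 = w := by rw [hB 1 (by simp)]; simp [hv, hne.symm]
  have hu' : u = u 0 • B 0 + r • B 1 := by
    rw [B0, B1, hw, smul_smul, mul_inv_cancel₀ hr0, one_smul]; abel
  set nn : EuclideanSpace ℝ (Fin n) := (2 * (r * r))⁻¹ • (r • B 1 - u 0 • B 0) with hnn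
  have ite := orthonormal_iff_ite.1 B.orthonormal
  set f : Fin n → EuclideanSpace ℝ (Fin n) := fun a => if a = 0 then u else if a = 1 then nn else B a with hf
  have gE' : ∀ X Y : EuclideanSpace ℝ (Fin n), gdot g x (P.mulVec X.ofLp) (P.mulVec Y.ofLp)
      = inner ℝ X Y - 2 * (inner ℝ (B 0) X * inner ℝ (B 0) Y) := by
    intro X Y; rw [gE, B0, i0, i0]
  refine ⟨fun a => P.mulVec (f a).ofLp, ⟨?_, ?_⟩⟩
  · simp only [hf, if_true]; exact hPu
  have gsy : ∀ X Y : Fin n → ℝ, gdot g x X Y = gdot g x Y X := by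
    intro X Y
    unfold gdot
    rw [Finset.sum_comm]
    exact Finset.sum_congr rfl fun a _ => Finset.sum_congr rfl fun b _ => by rw [gsym H.hg]; ring
  have iu : ∀ i, inner ℝ (B i) u = u 0 * (if i = 0 then 1 else 0) + r * (if i = 1 then 1 else 0) := by
    intro i
    conv_lhs => rw [hu']
    rw [inner_add_right, inner_smul_right, inner_smul_right, ite, ite]
  have inn : ∀ i, inner ℝ (B i) nn = (2 * (r * r))⁻¹ * (r * (if i = 1 then 1 else 0) - u 0 * (if i = 0 then 1 else 0)) := by
    intro i
    rw [hnn, inner_smul_right, inner_sub_right, inner_smul_right, inner_smul_right, ite, ite]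
  have c01 : gdot g x (P.mulVec u.ofLp) (P.mulVec nn.ofLp) = 1 := by
    rw [gE', iu, inn]
    have : inner ℝ u nn = 0 := by
      conv_lhs => rw [hu']
      rw [inner_add_left, inner_smul_left, inner_smul_left, inn, inn]
      simp only [hne, hne.symm, if_true, if_false, conj_trivial]
      have : u 0 * u 0 = r * r := hrr.symm
      field_simp
      nlinarith
    rw [this]
    simp only [hne, if_true, if_false]
    have : u 0 * u 0 = r * r := hrr.symm
    field_simp
    nlinarith
  have c11 : gdot g x (P.mulVec nn.ofLp) (P.mulVec nn.ofLp) = 0 := by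
    rw [gE', inn]
    have : inner ℝ nn nn = (2 * (r * r))⁻¹ := by
      conv_lhs => arg 2; rw [hnn]
      rw [inner_smul_left, inner_sub_left, inner_smul_left, inner_smul_left, inn, inn]
      simp only [hne, hne.symm, if_true, if_false, conj_trivial]
      have : u 0 * u 0 = r * r := hrr.symm
      field_simp
      nlinarith
    rw [this]
    simp only [hne, if_true, if_false]
    have : u 0 * u 0 = r * r := hrr.symm
    field_simp
    nlinarith
  have c0i : ∀ i, i ≠ 0 → i ≠ 1 → gdot g x (P.mulVec u.ofLp) (P.mulVec (B i).ofLp) = 0 := by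
    intro i h0 h1
    rw [gE', ite, real_inner_comm, iu]
    simp [h0, h1, h0.symm]
  have c1i : ∀ i, i ≠ 0 → i ≠ 1 → gdot g x (P.mulVec nn.ofLp) (P.mulVec (B i).ofLp) = 0 := by
    intro i h0 h1
    rw [gE', ite, real_inner_comm, inn]
    simp [h0, h1, h0.symm]
  have bar0 : bar (0 : Fin n) = 1 := by simp [bar]
  have bar1 : bar (1 : Fin n) = 0 := by simp [bar]
  have bari : ∀ i : Fin n, i ≠ 0 → i ≠ 1 → bar i = i := fun i h0 h1 =>
    Equiv.swap_apply_of_ne_of_ne h0 h1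
  intro a b
  simp only [hf]
  by_cases a0 : a = 0
  · subst a0
    rw [bar0, if_pos rfl]
    by_cases b0 : b = 0
    · subst b0; rw [if_pos rfl, if_neg hne, hPu]; exact H.null x
    · rw [if_neg b0]
      by_cases b1 : b = 1
      · subst b1; rw [if_pos rfl, if_pos rfl]; exact c01
      · rw [if_neg b1, if_neg b1]; exact c0i b b0 b1
  · rw [if_neg a0]
    by_cases a1 : a = 1
    · subst a1
      rw [bar1, if_pos rfl]
      by_cases b0 : b = 0
      · subst b0; rw [if_pos rfl, if_pos rfl, gsy]; exact c01
      · rw [if_neg b0, if_neg b0]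
        by_cases b1 : b = 1
        · subst b1; rw [if_pos rfl]; exact c11
        · rw [if_neg b1]; exact c1i b b0 b1
    · rw [if_neg a1, bari a a0 a1]
      by_cases b0 : b = 0
      · subst b0; rw [if_pos rfl, if_neg (Ne.symm a0), gsy]; exact c0i a a0 a1
      · rw [if_neg b0]
        by_cases b1 : b = 1
        · subst b1; rw [if_pos rfl, if_neg (Ne.symm a1), gsy]; exact c1i a a0 a1
        · rw [if_neg b1, gE', ite, ite, ite]
          simp [Ne.symm a0, eq_comm]

lemma Bg.ne01 (H : Bg g ℓ) : (0 : Fin n) ≠ 1 := (H.frame_aux 0).1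

lemma Bg.frame (H : Bg g ℓ) (x : Pt n) : ∃ E, IsFr g ℓ x E := (H.frame_aux x).2

lemma val_one_of_ne (h : (0 : Fin n) ≠ 1) : ((1 : Fin n) : ℕ) = 1 := by
  have h2 : 1 < n := by
    by_contra hn
    have h1 : n = 1 := by have := NeZero.pos n; omega
    subst h1
    exact h rfl
  rw [Fin.coe_ofNat_eq_mod, Nat.mod_eq_of_lt h2]

lemma wt_zero : wt (0 : Fin n) = 1 := by simp [wt]
lemma wt_one (h : (0 : Fin n) ≠ 1) : wt (1 : Fin n) = -1 := by
  unfold wt; rw [val_one_of_ne h]; rfl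
lemma wt_else (h : (0 : Fin n) ≠ 1) {i : Fin n} (h0 : i ≠ 0) (h1 : i ≠ 1) : wt i = 0 := by
  have a : (i : ℕ) ≠ 0 := fun e => h0 (Fin.ext (by rw [e, Fin.val_zero]))
  have b : (i : ℕ) ≠ 1 := fun e => h1 (Fin.ext (by rw [e, val_one_of_ne h]))
  simp [wt, a, b]
lemma bar_zero : bar (0 : Fin n) = 1 := by simp [bar]
lemma bar_one : bar (1 : Fin n) = 0 := by simp [bar]
lemma bar_else {i : Fin n} (h0 : i ≠ 0) (h1 : i ≠ 1) : bar i = i := Equiv.swap_apply_of_ne_of_ne h0 h1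

lemma wt_bar (h : (0 : Fin n) ≠ 1) (i : Fin n) : wt (bar i) = - wt i := by
  by_cases h0 : i = 0
  · subst h0; rw [bar_zero, wt_zero, wt_one h]
  by_cases h1 : i = 1
  · subst h1; rw [bar_one, wt_zero, wt_one h]; rfl
  rw [bar_else h0 h1, wt_else h h0 h1]; rfl

lemma wt_eq_one (h : (0 : Fin n) ≠ 1) {i : Fin n} (hi : wt i = 1) : i = 0 := by
  by_contra h0
  by_cases h1 : i = 1
  · subst h1; rw [wt_one h] at hi; omega
  rw [wt_else h h0 h1] at hi; omega

lemma wt_le (i : Fin n) : wt i ≤ 1 := by unfold wt; split_ifs <;> omega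
lemma wt_ge (i : Fin n) : -1 ≤ wt i := by unfold wt; split_ifs <;> omega

lemma gdot_comm (hg : IsLorentzMetric g) (x : Pt n) (X Y : Fin n → ℝ) : gdot g x X Y = gdot g x Y X := by
  unfold gdot
  rw [Finset.sum_comm]
  exact Finset.sum_congr rfl fun a _ => Finset.sum_congr rfl fun b _ => by rw [gsym hg]; ring

lemma IsFr.ginv (hg : IsLorentzMetric g) {x : Pt n} {E : Fin n → Fin n → ℝ} (hE : IsFr g ℓ x E)
    (p q : Fin n) : (g x)⁻¹ p q = ∑ a, E a p * E (bar a) q := by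
  let M : Matrix (Fin n) (Fin n) ℝ := Matrix.of E
  let G : Matrix (Fin n) (Fin n) ℝ := Matrix.of fun a b => if b = bar a then 1 else 0
  have h1 : M * g x * M.transpose = G := by
    ext a b
    rw [Matrix.mul_apply]
    simp only [Matrix.mul_apply, Matrix.transpose_apply, M, G, Matrix.of_apply, ← hE.h a b, gdot,
      Finset.sum_mul]
    rw [Finset.sum_comm]
    exact Finset.sum_congr rfl fun _ _ => Finset.sum_congr rfl fun _ _ => by ring
  have h2 : G * G = 1 := by
    ext a b
    rw [Matrix.mul_apply, Matrix.one_apply]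
    simp only [G, Matrix.of_apply]
    rw [Finset.sum_eq_single (bar a)]
    · simp [bar_bar, eq_comm]
    · intro c _ hc; simp [hc]
    · simp
  have h3 : (G * M * g x) * M.transpose = 1 := by
    rw [Matrix.mul_assoc G, Matrix.mul_assoc G, h1, h2]
  have h4 : M.transpose * (G * M * g x) = 1 := mul_eq_one_comm.1 h3
  have h5 : (M.transpose * G * M) * g x = 1 := by
    rw [← h4]; simp only [Matrix.mul_assoc]
  have h6 : (g x)⁻¹ = M.transpose * G * M := Matrix.inv_eq_left_inv h5
  rw [h6, Matrix.mul_assoc, Matrix.mul_apply]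
  refine Finset.sum_congr rfl fun a _ => ?_
  rw [Matrix.mul_apply]
  simp [M, G]

lemma IsFr.expand (hg : IsLorentzMetric g) {x : Pt n} {E : Fin n → Fin n → ℝ} (hE : IsFr g ℓ x E)
    (Y : Fin n → ℝ) (q : Fin n) : Y q = ∑ a, gdot g x Y (E (bar a)) * E a q := by
  have h1 : Y q = ∑ r, ∑ p, Y r * g x r p * (g x)⁻¹ p q := by
    have : ∀ r, ∑ p, Y r * g x r p * (g x)⁻¹ p q = Y r * (if r = q then 1 else 0) := by
      intro r
      rw [← sum_g_ginv hg, Finset.mul_sum]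
      exact Finset.sum_congr rfl fun _ _ => by ring
    simp [this]
  rw [h1]
  have h2 : ∀ r p, Y r * g x r p * (g x)⁻¹ p q = ∑ a, (g x r p * Y r * E (bar a) p) * E a q := by
    intro r p
    rw [ginv_sym hg, hE.ginv hg, Finset.mul_sum]
    exact Finset.sum_congr rfl fun _ _ => by ring
  simp only [h2, gdot, Finset.sum_mul]
  rw [Finset.sum_congr rfl fun r _ => Finset.sum_comm, Finset.sum_comm]

/-! ## Part 8: the boost weight filtration -/

/-- The filtration of the tangent space defined by the null direction. -/
def InV (g : MetricField n) (ℓ : VecField n) (x : Pt n) (w : ℤ) (X : Fin n → ℝ) : Prop :=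
  (0 ≤ w → gdot g x X (ℓ x) = 0) ∧ (1 ≤ w → ∃ c : ℝ, X = fun e => c * ℓ x e) ∧ (2 ≤ w → X = 0)

lemma gdot_smul_left (x : Pt n) (c : ℝ) (X Y : Fin n → ℝ) :
    gdot g x (fun e => c * X e) Y = c * gdot g x X Y := by
  simp only [gdot, Finset.mul_sum]
  exact Finset.sum_congr rfl fun _ _ => Finset.sum_congr rfl fun _ _ => by ring

lemma gdot_zero_left (x : Pt n) (Y : Fin n → ℝ) : gdot g x 0 Y = 0 := by simp [gdot]

lemma InV.pair (H : Bg g ℓ) {x : Pt n} {u v : ℤ} {X Y : Fin n → ℝ} (hX : InV g ℓ x u X)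
    (hY : InV g ℓ x v Y) (h : 0 < u + v) : gdot g x X Y = 0 := by
  by_cases u2 : 2 ≤ u
  · rw [hX.2.2 u2, gdot_zero_left]
  by_cases v2 : 2 ≤ v
  · rw [hY.2.2 v2, gdot_comm H.hg, gdot_zero_left]
  by_cases u1 : 1 ≤ u
  · obtain ⟨c, rfl⟩ := hX.2.1 u1
    rw [gdot_smul_left, gdot_comm H.hg, hY.1 (by omega), mul_zero]
  · obtain ⟨c, rfl⟩ := hY.2.1 (by omega)
    rw [gdot_comm H.hg, gdot_smul_left, gdot_comm H.hg, hX.1 (by omega), mul_zero]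

lemma IsFr.inV (H : Bg g ℓ) {x : Pt n} {E : Fin n → Fin n → ℝ} (hE : IsFr g ℓ x E) (a : Fin n) :
    InV g ℓ x (wt a) (E a) := by
  refine ⟨fun h => ?_, fun h => ?_, fun h => ?_⟩
  · rw [← hE.e0, hE.h, if_neg]
    intro h0
    have : a = 1 := by rw [← bar_bar a, ← h0, bar_zero]
    rw [this, wt_one H.ne01] at h
    omega
  · have : wt a = 1 := le_antisymm (wt_le a) h
    rw [wt_eq_one H.ne01 this]
    exact ⟨1, by rw [hE.e0]; simp⟩
  · have := wt_le a; omega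

lemma InV.of_pair (H : Bg g ℓ) {x : Pt n} {w : ℤ} {Z : Fin n → ℝ}
    (h : ∀ v Y, InV g ℓ x v Y → 0 < w + v → gdot g x Z Y = 0) : InV g ℓ x w Z := by
  obtain ⟨E, hE⟩ := H.frame x
  refine ⟨fun hw => ?_, fun hw => ?_, fun hw => ?_⟩
  · rw [← hE.e0]
    exact h _ _ (hE.inV H 0) (by rw [wt_zero]; omega)
  · refine ⟨gdot g x Z (E (bar 0)), ?_⟩
    funext q
    rw [hE.expand H.hg Z q, Finset.sum_eq_single 0]
    · rw [hE.e0]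
    · intro a _ ha
      rw [h _ _ (hE.inV H (bar a)) ?_, zero_mul]
      have : wt a ≠ 1 := fun e => ha (wt_eq_one H.ne01 e)
      have := wt_le a
      rw [wt_bar H.ne01]; omega
    · simp
  · funext q
    rw [hE.expand H.hg Z q]
    refine Finset.sum_eq_zero fun a _ => ?_
    rw [h _ _ (hE.inV H (bar a)) ?_, zero_mul]
    have := wt_ge (bar a)
    omega

variable {ι κ : Type} [Fintype ι] [DecidableEq ι] [Fintype κ] [DecidableEq κ]

/-- Boost order at most `b` at a point. -/
def FAt (g : MetricField n) (ℓ : VecField n) (x : Pt n) (b : ℤ) (t : (ι → Fin n) → ℝ) : Prop :=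
  ∀ (Y : ι → Fin n → ℝ) (w : ι → ℤ), (∀ m, InV g ℓ x (w m) (Y m)) → b < ∑ m, w m → ev t Y = 0

lemma ev_expand (t : (ι → Fin n) → ℝ) (c : ι → Fin n → ℝ) (E : Fin n → Fin n → ℝ) :
    ev t (fun m q => ∑ a, c m a * E a q) = ∑ a : ι → Fin n, (∏ m, c m (a m)) * ev t (fun m => E (a m)) := by
  simp only [ev, Finset.prod_univ_sum, Fintype.piFinset_univ, Finset.mul_sum]
  rw [Finset.sum_comm]
  refine Finset.sum_congr rfl fun a _ => Finset.sum_congr rfl fun idx _ => ?_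
  rw [Finset.prod_mul_distrib]; ring

lemma FAt.of_frame (H : Bg g ℓ) {x : Pt n} {E : Fin n → Fin n → ℝ} (hE : IsFr g ℓ x E) {b : ℤ}
    {t : (ι → Fin n) → ℝ} (h : ∀ a : ι → Fin n, b < ∑ m, wt (a m) → ev t (fun m => E (a m)) = 0) :
    FAt g ℓ x b t := by
  intro Y w hY hw
  have hYe : Y = fun m q => ∑ a, gdot g x (Y m) (E (bar a)) * E a q := by
    funext m q; exact hE.expand H.hg _ _
  rw [hYe, ev_expand t (fun m a => gdot g x (Y m) (E (bar a)))]
  refine Finset.sum_eq_zero fun a _ => ?_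
  by_cases ha : b < ∑ m, wt (a m)
  · rw [h a ha, mul_zero]
  · have : ∃ m ∈ Finset.univ, wt (a m) < w m := by
      by_contra hc
      push Not at hc
      have := Finset.sum_le_sum hc
      omega
    obtain ⟨m, _, hm⟩ := this
    rw [Finset.prod_eq_zero (Finset.mem_univ m), zero_mul]
    exact (hY m).pair H (hE.inV H _) (by rw [wt_bar H.ne01]; omega)

lemma FAt.frame (H : Bg g ℓ) {x : Pt n} {E : Fin n → Fin n → ℝ} (hE : IsFr g ℓ x E) {b : ℤ}
    {t : (ι → Fin n) → ℝ} (h : FAt g ℓ x b t) (a : ι → Fin n) (ha : b < ∑ m, wt (a m)) :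
    ev t (fun m => E (a m)) = 0 :=
  h _ (fun m => wt (a m)) (fun m => hE.inV H (a m)) ha

/-- The components vanish if all frame components do. -/
lemma zero_of_frame (H : Bg g ℓ) {x : Pt n} {E : Fin n → Fin n → ℝ} (hE : IsFr g ℓ x E)
    {t : (ι → Fin n) → ℝ} (h : ∀ a : ι → Fin n, ev t (fun m => E (a m)) = 0) (idx : ι → Fin n) :
    t idx = 0 := by
  have h1 : ev t (fun m q => if q = idx m then 1 else 0) = t idx := by
    unfold ev
    rw [Finset.sum_eq_single idx]
    · simp
    · intro j _ hj
      obtain ⟨m, hm⟩ := Function.ne_iff.1 hj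
      rw [Finset.prod_eq_zero (Finset.mem_univ m), mul_zero]
      simp [hm]
    · simp
  rw [← h1]
  have hYe : (fun (m : ι) (q : Fin n) => if q = idx m then (1:ℝ) else 0)
      = fun m q => ∑ a, gdot g x (fun q => if q = idx m then (1:ℝ) else 0) (E (bar a)) * E a q := by
    funext m q; exact hE.expand H.hg (fun q => if q = idx m then (1:ℝ) else 0) q
  rw [hYe, ev_expand t (fun m a => gdot g x (fun q => if q = idx m then (1:ℝ) else 0) (E (bar a)))]
  exact Finset.sum_eq_zero fun a _ => by rw [h, mul_zero]

lemma ev_reix (e : ι ≃ κ) (t : (ι → Fin n) → ℝ) (Y : κ → Fin n → ℝ) :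
    ev (fun idx : κ → Fin n => t (fun i => idx (e i))) Y = ev t (fun i => Y (e i)) := by
  unfold ev
  refine Fintype.sum_equiv (Equiv.arrowCongr e.symm (Equiv.refl _)) _ _ fun idx => ?_
  have : (Equiv.arrowCongr e.symm (Equiv.refl (Fin n))) idx = fun i => idx (e i) := by
    funext i; simp [Equiv.arrowCongr]
  rw [this]
  congr 1
  exact (Equiv.prod_comp e (fun m => Y m (idx m))).symm

lemma ev_tens (t : (ι → Fin n) → ℝ) (u : (κ → Fin n) → ℝ) (Y : ι ⊕ κ → Fin n → ℝ) :
    ev (fun idx : ι ⊕ κ → Fin n => t (fun i => idx (Sum.inl i)) * u (fun k => idx (Sum.inr k))) Y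
      = ev t (fun i => Y (Sum.inl i)) * ev u (fun k => Y (Sum.inr k)) := by
  unfold ev
  rw [Fintype.sum_mul_sum, ← Fintype.sum_prod_type']
  refine Fintype.sum_equiv (Equiv.sumArrowEquivProdArrow ι κ (Fin n)) _ _ fun idx => ?_
  simp only [Equiv.sumArrowEquivProdArrow, Equiv.coe_fn_mk, Fintype.prod_sum_type, Function.comp_def]
  ring

lemma ev_elim (t : (ι ⊕ κ → Fin n) → ℝ) (Y : ι → Fin n → ℝ) (Z : κ → Fin n → ℝ) :
    ev t (Sum.elim Y Z) = ∑ idx : ι → Fin n, ∑ jdx : κ → Fin n, t (Sum.elim idx jdx) *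
      ((∏ m, Y m (idx m)) * ∏ m, Z m (jdx m)) := by
  unfold ev
  rw [← Fintype.sum_prod_type']
  refine Fintype.sum_equiv (Equiv.sumArrowEquivProdArrow ι κ (Fin n)) _ _ fun idx => ?_
  simp only [Equiv.sumArrowEquivProdArrow, Equiv.coe_fn_mk, Fintype.prod_sum_type,
    Sum.elim_comp_inl_inr, Sum.elim_inl, Sum.elim_inr, Function.comp_apply]

lemma sum_bool_fun (f : (Bool → Fin n) → ℝ) :
    ∑ j, f j = ∑ p, ∑ q, f (fun b => cond b q p) := by
  rw [← Fintype.sum_prod_type']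
  symm
  let e : Fin n × Fin n ≃ (Bool → Fin n) :=
    { toFun := fun p b => cond b p.2 p.1
      invFun := fun j => (j false, j true)
      left_inv := fun p => rfl
      right_inv := fun j => by funext b; cases b <;> rfl }
  exact Fintype.sum_equiv e _ _ fun p => rfl

lemma ev_contr (hg : IsLorentzMetric g) {x : Pt n} {E : Fin n → Fin n → ℝ} (hE : IsFr g ℓ x E)
    (T : TF n (ι ⊕ Bool)) (Y : ι → Fin n → ℝ) :
    ev (contr g T x) Y = ∑ a, ev (T x) (Sum.elim Y (fun b => cond b (E (bar a)) (E a))) := by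
  simp only [ev_elim, sum_bool_fun, Fintype.prod_bool, cond_true, cond_false]
  unfold ev contr
  rw [Finset.sum_comm]
  refine Finset.sum_congr rfl fun idx _ => ?_
  simp only [hE.ginv hg, Finset.sum_mul]
  conv_rhs => rw [Finset.sum_comm]
  refine Finset.sum_congr rfl fun p _ => ?_
  conv_rhs => rw [Finset.sum_comm]
  exact Finset.sum_congr rfl fun q _ => Finset.sum_congr rfl fun a _ => by ring

/-- Smooth tensor fields of boost order at most `b`. -/
def F (g : MetricField n) (ℓ : VecField n) (b : ℤ) (T : TF n ι) : Prop :=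
  Sm T ∧ ∀ x, FAt g ℓ x b (T x)

lemma F.mono {b c : ℤ} {T : TF n ι} (h : F g ℓ b T) (hbc : b ≤ c) : F g ℓ c T :=
  ⟨h.1, fun x Y w hY hw => h.2 x Y w hY (lt_of_le_of_lt hbc hw)⟩

lemma F.add {b : ℤ} {T U : TF n ι} (hT : F g ℓ b T) (hU : F g ℓ b U) :
    F g ℓ b (fun x i => T x i + U x i) :=
  ⟨fun i => (hT.1 i).add (hU.1 i), fun x Y w hY hw => by
    rw [ev_add, hT.2 x Y w hY hw, hU.2 x Y w hY hw, add_zero]⟩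

lemma F.neg {b : ℤ} {T : TF n ι} (hT : F g ℓ b T) : F g ℓ b (fun x i => - T x i) :=
  ⟨fun i => (hT.1 i).neg, fun x Y w hY hw => by rw [ev_neg, hT.2 x Y w hY hw, neg_zero]⟩

lemma F.zero (b : ℤ) : F g ℓ b (fun _ _ => 0 : TF n ι) :=
  ⟨fun i => contDiff_const, fun x Y w hY hw => by simp [ev]⟩

lemma F.reix {b : ℤ} {T : TF n ι} (e : ι ≃ κ) (hT : F g ℓ b T) : F g ℓ b (reix e T) :=
  ⟨hT.1.reix e, fun x Y w hY hw => by
    have := ev_reix e (T x) Y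
    unfold VSI.reix
    rw [this]
    exact hT.2 x _ (fun i => w (e i)) (fun i => hY _) (by rw [Equiv.sum_comp e]; exact hw)⟩

lemma F.tens {a b : ℤ} {T : TF n ι} {U : TF n κ} (hT : F g ℓ a T) (hU : F g ℓ b U) :
    F g ℓ (a + b) (tens T U) :=
  ⟨hT.1.tens hU.1, fun x Y w hY hw => by
    unfold VSI.tens
    rw [ev_tens]
    rw [Fintype.sum_sum_type] at hw
    by_cases h : a < ∑ i, w (Sum.inl i)
    · rw [hT.2 x _ _ (fun i => hY _) h, zero_mul]
    · rw [hU.2 x _ (fun k => w (Sum.inr k)) (fun i => hY _) (by omega), mul_zero]⟩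

lemma F.contr (H : Bg g ℓ) {b : ℤ} {T : TF n (ι ⊕ Bool)} (hT : F g ℓ b T) : F g ℓ b (contr g T) :=
  ⟨hT.1.contr H.hg, fun x Y w hY hw => by
    obtain ⟨E, hE⟩ := H.frame x
    rw [ev_contr H.hg hE]
    refine Finset.sum_eq_zero fun a _ => ?_
    refine hT.2 x _ (Sum.elim w (fun b => cond b (wt (bar a)) (wt a))) ?_ ?_
    · rintro (m | m)
      · exact hY m
      · cases m
        · exact hE.inV H a
        · exact hE.inV H (bar a)
    · rw [Fintype.sum_sum_type]
      simp only [Sum.elim_inl, Sum.elim_inr, Fintype.sum_bool, cond_true, cond_false, wt_bar H.ne01]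
      omega⟩

end frames

set_option linter.unusedSectionVars false
/-! ## Part 9: derivatives and the filtration -/

section derivs
variable {n : ℕ} [NeZero n] {g : MetricField n} {ℓ : VecField n}
variable {ι κ : Type} [Fintype ι] [DecidableEq ι] [Fintype κ] [DecidableEq κ]

lemma ev_cons {k : ℕ} (t : (Fin (k+1) → Fin n) → ℝ) (X : Fin n → ℝ) (Y : Fin k → Fin n → ℝ) :
    ev t (Fin.cons X Y : Fin (k+1) → Fin n → ℝ) = ∑ a, X a * ev (fun i => t (Fin.cons a i)) Y := by
  unfold ev
  rw [← (Fin.consEquiv (fun _ : Fin (k+1) => Fin n)).sum_comp, Fintype.sum_prod_type]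
  refine Finset.sum_congr rfl fun a _ => ?_
  rw [Finset.mul_sum]
  refine Finset.sum_congr rfl fun i _ => ?_
  rw [Fin.prod_univ_succ]
  have hc : (Fin.consEquiv (fun _ : Fin (k+1) => Fin n)) (a, i) = Fin.cons a i := rfl
  rw [hc]
  simp only [Fin.cons_zero, Fin.cons_succ]
  ring

lemma ev_nil (t : (Fin 0 → Fin n) → ℝ) (Y : Fin 0 → Fin n → ℝ) : ev t Y = t ![] := by
  unfold ev
  simp [Matrix.empty_eq]

lemma ev_one (t : (Fin 1 → Fin n) → ℝ) (X : Fin n → ℝ) : ev t ![X] = ∑ a, X a * t ![a] := by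
  have := ev_cons t X ![]
  simp only [ev_nil] at this
  exact this

lemma ev_two (t : (Fin 2 → Fin n) → ℝ) (X Y : Fin n → ℝ) :
    ev t ![X, Y] = ∑ a, X a * ∑ b, Y b * t ![a, b] := by
  have := ev_cons t X ![Y]
  simp only [ev_one] at this
  exact this

lemma ev_gT (x : Pt n) (X Y : Fin n → ℝ) : ev (gT g x) ![X, Y] = gdot g x X Y := by
  rw [ev_two]
  simp only [gdot, gT, Finset.mul_sum]
  exact Finset.sum_congr rfl fun a _ => Finset.sum_congr rfl fun b _ => by simp; ring

lemma gdot_sum_left {ξ : Type} (s : Finset ξ) (x : Pt n) (c : ξ → ℝ) (Z : ξ → Fin n → ℝ) (Y : Fin n → ℝ) :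
    gdot g x (fun e => ∑ z ∈ s, c z * Z z e) Y = ∑ z ∈ s, c z * gdot g x (Z z) Y := by
  simp only [gdot, Finset.mul_sum, Finset.sum_mul]
  rw [Finset.sum_congr rfl fun a _ => Finset.sum_comm, Finset.sum_comm]
  exact Finset.sum_congr rfl fun _ _ => Finset.sum_congr rfl fun _ _ => Finset.sum_congr rfl fun _ _ => by ring

lemma ev_zero (Y : ι → Fin n → ℝ) : ev (fun _ : ι → Fin n => (0:ℝ)) Y = 0 := by simp [ev]

/-- Metric compatibility. -/
lemma pd_gdot (hg : IsLorentzMetric g) {Y Z : VecField n} (hY : ∀ e, Cs fun y => Y y e)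
    (hZ : ∀ e, Cs fun y => Z y e) (a : Fin n) (x : Pt n) :
    pd (fun y => gdot g y (Y y) (Z y)) a x
      = gdot g x (nabV g a Y x) (Z x) + gdot g x (Y x) (nabV g a Z x) := by
  have h := leibniz g a (T := gT g) (fun idx => cs_g hg _ _) (Y := ![Y, Z])
    (by intro m e; fin_cases m; exact hY e; exact hZ e) x
  have e0 : ∀ y, (fun m => (![Y, Z] : Fin 2 → VecField n) m y) = ![Y y, Z y] := by
    intro y; funext m; fin_cases m <;> rfl
  simp only [e0, ev_gT, Fin.sum_univ_two] at h
  have z : nab g a (gT g) x = fun _ => 0 := funext fun i => nab_gT hg a x i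
  rw [z, ev_zero, zero_add] at h
  rw [h]
  have u0 : Function.update ![Y x, Z x] 0 (nabV g a Y x) = ![nabV g a Y x, Z x] := by
    funext m; fin_cases m <;> rfl
  have u1 : Function.update ![Y x, Z x] 1 (nabV g a Z x) = ![Y x, nabV g a Z x] := by
    funext m; fin_cases m <;> rfl
  simp only [Matrix.cons_val_zero, Matrix.cons_val_one]
  rw [u0, u1, ev_gT, ev_gT]

/-- Directional covariant derivative of a vector field. -/
def nabX (g : MetricField n) (X : Fin n → ℝ) (Y : VecField n) (x : Pt n) : Fin n → ℝ :=
  fun e => ∑ a, X a * nabV g a Y x e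

lemma sm_low (hg : IsLorentzMetric g) (hsm : IsSmoothVec ℓ) : Sm (ι := Fin 1) (lowerField g ℓ) :=
  fun idx => Cs.sum (s := Finset.univ) fun b => (cs_g hg (idx 0) b).mul (hsm b)

lemma sm_A (hg : IsLorentzMetric g) (hsm : IsSmoothVec ℓ) : Sm (ι := Fin 2) (covD g (lowerField g ℓ)) :=
  Sm.covD hg (sm_low hg hsm)

lemma ev_low (x : Pt n) (Z : Fin n → ℝ) : ev (lowerField g ℓ x) ![Z] = gdot g x Z (ℓ x) := by
  rw [ev_one]
  simp only [lowerField, lower, gdot, Finset.mul_sum]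
  exact Finset.sum_congr rfl fun a _ => Finset.sum_congr rfl fun b _ => by simp; ring

lemma ev_nab_low (hg : IsLorentzMetric g) (hsm : IsSmoothVec ℓ) (a : Fin n) (x : Pt n) (Y : Fin n → ℝ) :
    ev (nab g a (lowerField g ℓ) x) ![Y] = gdot g x (nabV g a ℓ x) Y := by
  have h := leibniz g a (T := lowerField g ℓ) (sm_low hg hsm) (Y := fun _ _ => Y)
    (fun m e => contDiff_const) x
  have e1 : (fun _ : Fin 1 => Y) = ![Y] := by funext m; fin_cases m; rfl
  have h2 := pd_gdot hg (Y := fun _ => Y) (Z := ℓ) (fun e => contDiff_const) hsm a x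
  have e2 : Function.update ![Y] 0 (nabV g a (fun _ => Y) x) = ![nabV g a (fun _ => Y) x] := by
    funext m; fin_cases m; rfl
  simp only [e1, ev_low, Fin.sum_univ_one] at h
  have h3 : ev (lowerField g ℓ x) (Function.update ![Y] 0 (nabV g a (fun _ => Y) x))
     = gdot g x (nabV g a (fun _ => Y) x) (ℓ x) := by rw [e2, ev_low]
  have h4 : gdot g x Y (nabV g a ℓ x) = gdot g x (nabV g a ℓ x) Y := gdot_comm hg _ _ _
  linarith

lemma ev_covD {k : ℕ} (T : TensorField n k) (x : Pt n) (X : Fin n → ℝ) (Y : Fin k → Fin n → ℝ) :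
    ev (covD g T x) (Fin.cons X Y : Fin (k+1) → Fin n → ℝ) = ∑ a, X a * ev (nab g a T x) Y := by
  rw [ev_cons]
  rfl

lemma ev_A (hg : IsLorentzMetric g) (hsm : IsSmoothVec ℓ) (x : Pt n) (X Y : Fin n → ℝ) :
    ev (covD g (lowerField g ℓ) x) ![X, Y] = gdot g x (nabX g X ℓ x) Y := by
  have := ev_covD (g := g) (lowerField g ℓ) x X ![Y]
  unfold nabX
  rw [gdot_sum_left]
  simp only [ev_nab_low hg hsm] at this
  exact this

lemma nabX_ell (H : Bg g ℓ) (hA : F g ℓ (-1) (ι := Fin 2) (covD g (lowerField g ℓ))) {x : Pt n}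
    {u : ℤ} {X : Fin n → ℝ} (hX : InV g ℓ x u X) : InV g ℓ x (u + 1) (nabX g X ℓ x) := by
  refine InV.of_pair H fun v Y hY huv => ?_
  rw [← ev_A H.hg H.hsm]
  refine hA.2 x _ ![u, v] ?_ (by simp [Fin.sum_univ_two]; omega)
  intro m; fin_cases m
  · exact hX
  · exact hY

lemma InV.low (x : Pt n) {w : ℤ} (hw : w ≤ -1) (X : Fin n → ℝ) : InV g ℓ x w X :=
  ⟨fun h => by omega, fun h => by omega, fun h => by omega⟩

lemma InV.zero (x : Pt n) (w : ℤ) : InV g ℓ x w 0 :=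
  ⟨fun _ => gdot_zero_left _ _, fun _ => ⟨0, by funext; simp⟩, fun _ => rfl⟩

lemma InV.mono {x : Pt n} {v w : ℤ} {X : Fin n → ℝ} (h : InV g ℓ x w X) (hv : v ≤ w) : InV g ℓ x v X :=
  ⟨fun h' => h.1 (by omega), fun h' => h.2.1 (by omega), fun h' => h.2.2 (by omega)⟩

lemma InV.smul (H : Bg g ℓ) {x : Pt n} {w : ℤ} {X : Fin n → ℝ} (c : ℝ) (h : InV g ℓ x w X) :
    InV g ℓ x w (fun e => c * X e) := by
  refine InV.of_pair H fun v Y hY hv => ?_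
  rw [gdot_smul_left, h.pair H hY hv, mul_zero]

lemma InV.ell (H : Bg g ℓ) (x : Pt n) : InV g ℓ x 1 (ℓ x) :=
  ⟨fun _ => H.null x, fun _ => ⟨1, by funext; simp⟩, fun h => by omega⟩

lemma cs_gdot (hg : IsLorentzMetric g) {Y Z : VecField n} (hY : ∀ e, Cs fun y => Y y e)
    (hZ : ∀ e, Cs fun y => Z y e) : Cs fun y => gdot g y (Y y) (Z y) :=
  Cs.sum fun a => Cs.sum fun b => ((cs_g hg a b).mul (hY a)).mul (hZ b)

/-- Extension of vectors to smooth fields compatible with the filtration. -/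
lemma ext_vec (H : Bg g ℓ) (hA : F g ℓ (-1) (ι := Fin 2) (covD g (lowerField g ℓ))) (x : Pt n)
    {w : ℤ} {Y0 : Fin n → ℝ} (hY0 : InV g ℓ x w Y0) :
    ∃ Y : VecField n, (∀ e, Cs fun y => Y y e) ∧ Y x = Y0 ∧ (∀ y, InV g ℓ y w (Y y)) ∧
      ∀ u X, InV g ℓ x u X → (0 ≤ u → InV g ℓ x w (nabX g X Y x)) ∧ InV g ℓ x (w - 1) (nabX g X Y x) := by
  by_cases h1 : w ≤ -1
  · exact ⟨fun _ => Y0, fun e => contDiff_const, rfl, fun y => InV.low y h1 _,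
      fun u X _ => ⟨fun _ => InV.low x h1 _, InV.low x (by omega) _⟩⟩
  by_cases h2 : 2 ≤ w
  · have z : ∀ X : Fin n → ℝ, nabX g X (fun _ => 0) x = 0 := by
      intro X; funext e; simp [nabX, nabV, pd_const]
    exact ⟨fun _ => 0, fun e => contDiff_const, (hY0.2.2 h2).symm, fun y => InV.zero y w,
      fun u X _ => ⟨fun _ => by rw [z]; exact InV.zero x w, by rw [z]; exact InV.zero x _⟩⟩
  by_cases h3 : w = 1
  · subst h3
    obtain ⟨c, rfl⟩ := hY0.2.1 le_rfl
    have z : ∀ X : Fin n → ℝ, nabX g X (fun y e => c * ℓ y e) x = fun e => c * nabX g X ℓ x e := by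
      intro X; funext e
      simp only [nabX, nabV, pd_const_mul c (H.hsm _), Finset.mul_sum]
      refine Finset.sum_congr rfl fun a _ => ?_
      have : ∑ d, christoffel g x e a d * (c * ℓ x d) = c * ∑ d, christoffel g x e a d * ℓ x d := by
        rw [Finset.mul_sum]; exact Finset.sum_congr rfl fun _ _ => by ring
      rw [this]; ring
    refine ⟨fun y e => c * ℓ y e, fun e => contDiff_const.mul (H.hsm e), rfl,
      fun y => (InV.ell H y).smul H c, fun u X hX => ?_⟩
    rw [z]
    exact ⟨fun hu => ((nabX_ell H hA hX).mono (by omega)).smul H c,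
      ((nabX_ell H hA (InV.low x (le_refl (-1)) X)).mono (by omega)).smul H c⟩
  · have hw : w = 0 := by omega
    subst hw
    obtain ⟨E, hE⟩ := H.frame x
    have hN : gdot g x (E 1) (ℓ x) = 1 := by
      rw [← hE.e0, hE.h, bar_one, if_pos rfl]
    let Y : VecField n := fun y e => gdot g y (E 1) (ℓ y) * Y0 e - gdot g y Y0 (ℓ y) * E 1 e
    have hsY : ∀ e, Cs fun y => Y y e := by
      have hc : ∀ Z : Fin n → ℝ, Cs fun y => gdot g y Z (ℓ y) := fun Z =>
        cs_gdot H.hg (Y := fun _ => Z) (fun e => contDiff_const) H.hsm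
      exact fun e => ((hc (E 1)).mul contDiff_const).sub ((hc Y0).mul contDiff_const)
    have hz : ∀ y, gdot g y (Y y) (ℓ y) = 0 := by
      intro y
      have : gdot g y (Y y) (ℓ y) = gdot g y (E 1) (ℓ y) * gdot g y Y0 (ℓ y)
          - gdot g y Y0 (ℓ y) * gdot g y (E 1) (ℓ y) := by
        rw [← gdot_smul_left, ← gdot_smul_left]
        simp only [gdot, ← Finset.sum_sub_distrib, Y]
        exact Finset.sum_congr rfl fun _ _ => Finset.sum_congr rfl fun _ _ => by ring
      rw [this]; ring
    have hx : Y x = Y0 := by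
      funext e
      simp only [Y, hN, hY0.1 le_rfl]; ring
    refine ⟨Y, hsY, hx, fun y => ⟨fun _ => hz y, fun h => by omega, fun h => by omega⟩, fun u X hX =>
      ⟨fun hu => ⟨fun _ => ?_, fun h => by omega, fun h => by omega⟩, InV.low x (by omega) _⟩⟩
    have hd : ∀ a, gdot g x (nabV g a Y x) (ℓ x) + gdot g x (Y x) (nabV g a ℓ x) = 0 := by
      intro a
      rw [← pd_gdot H.hg hsY H.hsm]
      simp only [hz, pd_const]
    have h5 : gdot g x (nabX g X Y x) (ℓ x) + gdot g x (nabX g X ℓ x) (Y x) = 0 := by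
      unfold nabX
      rw [gdot_sum_left, gdot_sum_left, ← Finset.sum_add_distrib]
      refine Finset.sum_eq_zero fun a _ => ?_
      rw [gdot_comm H.hg x (nabV g a ℓ x), ← mul_add, hd, mul_zero]
    have h6 : gdot g x (nabX g X ℓ x) (Y x) = 0 := by
      rw [hx]
      exact (nabX_ell H hA hX).pair H hY0 (by omega)
    linarith

lemma deriv_F (H : Bg g ℓ) (hA : F g ℓ (-1) (ι := Fin 2) (covD g (lowerField g ℓ))) {b : ℤ}
    {T : TF n ι} (hT : F g ℓ b T) {x : Pt n} {u : ℤ} {X : Fin n → ℝ} (hX : InV g ℓ x u X)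
    {Y : ι → Fin n → ℝ} {w : ι → ℤ} (hY : ∀ m, InV g ℓ x (w m) (Y m)) (hb : b < ∑ m, w m)
    (h : 0 ≤ u ∨ b + 1 < ∑ m, w m) : ∑ a, X a * ev (nab g a T x) Y = 0 := by
  choose Z hZs hZx hZ hZd using fun m => ext_vec H hA x (hY m)
  have hYx : (fun m => Z m x) = Y := funext hZx
  have h0 : ∀ y, ev (T y) (fun m => Z m y) = 0 := fun y => hT.2 y _ w (fun m => hZ m y) hb
  have h1 : ∀ a, ev (nab g a T x) Y + ∑ m, ev (T x) (Function.update Y m (nabV g a (Z m) x)) = 0 := by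
    intro a
    have := leibniz g a hT.1 hZs x
    rw [hYx] at this
    rw [← this]
    simp only [h0, pd_const]
  have h2 : ∀ m, ev (T x) (Function.update Y m (nabX g X (Z m) x)) = 0 := by
    intro m
    rcases h with h | h
    · refine hT.2 x _ w ?_ hb
      intro j
      by_cases hj : j = m
      · subst hj; rw [Function.update_self]; exact (hZd j u X hX).1 h
      · rw [Function.update_of_ne hj]; exact hY j
    · refine hT.2 x _ (Function.update w m (w m - 1)) ?_ ?_
      · intro j
        by_cases hj : j = m
        · subst hj; rw [Function.update_self, Function.update_self]; exact (hZd j u X hX).2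
        · rw [Function.update_of_ne hj, Function.update_of_ne hj]; exact hY j
      · rw [Finset.sum_update_of_mem (Finset.mem_univ m)]
        have := Finset.sum_sdiff (f := w) (Finset.subset_univ {m})
        rw [Finset.sum_singleton] at this
        omega
  have h3 : ∑ a, X a * ev (nab g a T x) Y
      = - ∑ m, ev (T x) (Function.update Y m (nabX g X (Z m) x)) := by
    unfold nabX
    simp only [ev_upd_sum]
    rw [Finset.sum_comm, ← Finset.sum_neg_distrib]
    refine Finset.sum_congr rfl fun a _ => ?_
    rw [← Finset.mul_sum]
    have := h1 a
    have h4 : ev (nab g a T x) Y = - ∑ m, ev (T x) (Function.update Y m (nabV g a (Z m) x)) := by linarith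
    rw [h4]; ring
  rw [h3]
  simp [h2]

/-- Covariant derivative along `ℓ`. -/
def D (g : MetricField n) (ℓ : VecField n) (T : TF n ι) : TF n ι := fun x idx =>
  ∑ a, ℓ x a * nab g a T x idx

lemma Sm.D (H : Bg g ℓ) {T : TF n ι} (hT : Sm T) : Sm (D g ℓ T) := fun idx =>
  Cs.sum fun a => (H.hsm a).mul (Sm.nab H.hg a hT idx)

lemma ev_D (T : TF n ι) (x : Pt n) (Y : ι → Fin n → ℝ) :
    ev (D g ℓ T x) Y = ∑ a, ℓ x a * ev (nab g a T x) Y := ev_sum _ _ _ _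

lemma F.D (H : Bg g ℓ) (hA : F g ℓ (-1) (ι := Fin 2) (covD g (lowerField g ℓ))) {b : ℤ}
    {T : TF n ι} (hT : F g ℓ b T) : F g ℓ b (D g ℓ T) :=
  ⟨hT.1.D H, fun x Y w hY hw => by
    rw [ev_D]
    exact deriv_F H hA hT (InV.ell H x) hY hw (Or.inl (by omega))⟩

lemma F.covD (H : Bg g ℓ) (hA : F g ℓ (-1) (ι := Fin 2) (covD g (lowerField g ℓ))) {b : ℤ} {k : ℕ}
    {T : TensorField n k} (hT : F g ℓ b (ι := Fin k) T) (hD : F g ℓ (b - 1) (ι := Fin k) (VSI.D (ι := Fin k) g ℓ T)) :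
    F g ℓ b (ι := Fin (k+1)) (covD g T) := by
  refine ⟨Sm.covD H.hg hT.1, fun x => ?_⟩
  obtain ⟨E, hE⟩ := H.frame x
  refine FAt.of_frame H hE fun a ha => ?_
  have hc : (fun m => E (a m)) = (Fin.cons (E (a 0)) (fun m => E (a m.succ)) : Fin (k+1) → Fin n → ℝ) := by
    funext m; refine Fin.cases ?_ (fun j => ?_) m <;> rfl
  rw [hc, ev_covD]
  rw [Fin.sum_univ_succ] at ha
  by_cases h0 : a 0 = 0
  · rw [h0, hE.e0, ← ev_D]
    rw [h0, wt_zero] at ha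
    exact (hD.2 x).frame H hE (fun m => a m.succ) (by omega)
  have hw1 : wt (a 0) ≤ 0 := by
    have h1 : wt (a 0) ≠ 1 := fun e => h0 (wt_eq_one H.ne01 e)
    have h2 := wt_le (a 0)
    omega
  have hw2 := wt_ge (a 0)
  exact deriv_F H hA hT (hE.inV H (a 0)) (w := fun m => wt (a m.succ)) (fun m => hE.inV H _) (by omega) (by omega)

/-! ### The refined filtration -/

/-- Boost order at most `b`, improving by one with every derivative along `ℓ`. -/
def Gm (g : MetricField n) (ℓ : VecField n) : ℕ → ℤ → TF n ι → Prop
  | 0, b, T => F g ℓ b T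
  | m + 1, b, T => F g ℓ b T ∧ Gm g ℓ m (b - 1) (D g ℓ T)

lemma Gm.F {m : ℕ} {b : ℤ} {T : TF n ι} (h : Gm g ℓ m b T) : F g ℓ b T := by
  cases m
  · exact h
  · exact h.1

lemma Gm.mono {m : ℕ} : ∀ {b c : ℤ} {T : TF n ι}, Gm g ℓ m b T → b ≤ c → Gm g ℓ m c T := by
  induction m with
  | zero => intro b c T h hbc; exact VSI.F.mono h hbc
  | succ m ih => intro b c T h hbc; exact ⟨h.1.mono hbc, ih h.2 (by omega)⟩

lemma Gm.pred {m : ℕ} : ∀ {b : ℤ} {T : TF n ι}, Gm g ℓ (m+1) b T → Gm g ℓ m b T := by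
  induction m with
  | zero => intro b T h; exact h.1
  | succ m ih => intro b T h; exact ⟨h.1, ih h.2⟩

lemma Gm.le {m k : ℕ} {b : ℤ} {T : TF n ι} (h : Gm g ℓ m b T) (hk : k ≤ m) : Gm g ℓ k b T := by
  induction hk with
  | refl => exact h
  | step _ ih => exact ih h.pred

lemma D_add {T U : TF n ι} (hT : Sm T) (hU : Sm U) :
    D g ℓ (fun x i => T x i + U x i) = fun x i => D g ℓ T x i + D g ℓ U x i := by
  funext x i
  simp only [D, nab_add _ hT hU, mul_add, Finset.sum_add_distrib]

lemma D_neg {T : TF n ι} : D g ℓ (fun x i => - T x i) = fun x i => - D g ℓ T x i := by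
  funext x i
  simp only [D, nab_neg, mul_neg, Finset.sum_neg_distrib]

lemma D_zero : D g ℓ (fun _ _ => 0 : TF n ι) = fun _ _ => 0 := by
  funext x i
  simp [D, nab, act, pd_const]

lemma D_reix (e : ι ≃ κ) {T : TF n ι} : D g ℓ (reix e T) = reix e (D g ℓ T) := by
  funext x i
  simp only [D, nab_reix]
  rfl

lemma D_tens {T : TF n ι} {U : TF n κ} (hT : Sm T) (hU : Sm U) :
    D g ℓ (tens T U) = fun x i => tens (D g ℓ T) U x i + tens T (D g ℓ U) x i := by
  funext x i
  simp only [D, nab_tens g _ hT hU, tens, mul_add, Finset.sum_add_distrib, Finset.sum_mul, Finset.mul_sum]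
  congr 1 <;> exact Finset.sum_congr rfl fun _ _ => by ring

lemma D_contr (hg : IsLorentzMetric g) {T : TF n (ι ⊕ Bool)} (hT : Sm T) :
    D g ℓ (contr g T) = contr g (D g ℓ T) := by
  funext x i
  simp only [D, nab_contr hg _ hT, contr, Finset.mul_sum]
  rw [Finset.sum_comm]
  refine Finset.sum_congr rfl fun p _ => ?_
  rw [Finset.sum_comm]
  exact Finset.sum_congr rfl fun q _ => Finset.sum_congr rfl fun a _ => by ring

lemma Gm.add {m : ℕ} : ∀ {b : ℤ} {T U : TF n ι}, Gm g ℓ m b T → Gm g ℓ m b U →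
    Gm g ℓ m b (fun x i => T x i + U x i) := by
  induction m with
  | zero => intro b T U hT hU; exact VSI.F.add hT hU
  | succ m ih =>
    intro b T U hT hU
    refine ⟨hT.1.add hU.1, ?_⟩
    rw [D_add hT.1.1 hU.1.1]
    exact ih hT.2 hU.2

lemma Gm.neg {m : ℕ} : ∀ {b : ℤ} {T : TF n ι}, Gm g ℓ m b T → Gm g ℓ m b (fun x i => - T x i) := by
  induction m with
  | zero => intro b T hT; exact VSI.F.neg hT
  | succ m ih =>
    intro b T hT
    refine ⟨hT.1.neg, ?_⟩
    rw [D_neg]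
    exact ih hT.2

lemma Gm.sub {m : ℕ} {b : ℤ} {T U : TF n ι} (hT : Gm g ℓ m b T) (hU : Gm g ℓ m b U) :
    Gm g ℓ m b (fun x i => T x i - U x i) := by
  simp only [sub_eq_add_neg]
  exact hT.add hU.neg

lemma Gm.zero {m : ℕ} : ∀ {b : ℤ}, Gm g ℓ m b (fun _ _ => 0 : TF n ι) := by
  induction m with
  | zero => intro b; exact VSI.F.zero b
  | succ m ih =>
    intro b
    refine ⟨VSI.F.zero b, ?_⟩
    rw [D_zero]; exact ih

lemma Gm.sum {m : ℕ} {b : ℤ} {ξ : Type} (s : Finset ξ) {T : ξ → TF n ι} (h : ∀ z, Gm g ℓ m b (T z)) :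
    Gm g ℓ m b (fun x i => ∑ z ∈ s, T z x i) := by
  classical
  induction s using Finset.induction_on with
  | empty => simp only [Finset.sum_empty]; exact Gm.zero
  | insert a s ha ih => simp only [Finset.sum_insert ha]; exact (h a).add ih

lemma Gm.reix {m : ℕ} (e : ι ≃ κ) : ∀ {b : ℤ} {T : TF n ι}, Gm g ℓ m b T → Gm g ℓ m b (reix e T) := by
  induction m with
  | zero => intro b T hT; exact VSI.F.reix e hT
  | succ m ih =>
    intro b T hT
    refine ⟨hT.1.reix e, ?_⟩
    rw [D_reix]
    exact ih hT.2

lemma Gm.contr (H : Bg g ℓ) {m : ℕ} : ∀ {b : ℤ} {T : TF n (ι ⊕ Bool)}, Gm g ℓ m b T →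
    Gm g ℓ m b (contr g T) := by
  induction m with
  | zero => intro b T hT; exact VSI.F.contr H hT
  | succ m ih =>
    intro b T hT
    refine ⟨hT.1.contr H, ?_⟩
    rw [D_contr H.hg hT.1.1]
    exact ih hT.2

lemma Gm.tens {m : ℕ} : ∀ {a b : ℤ} {T : TF n ι} {U : TF n κ}, Gm g ℓ m a T → Gm g ℓ m b U →
    Gm g ℓ m (a + b) (tens T U) := by
  induction m with
  | zero => intro a b T U hT hU; exact VSI.F.tens hT hU
  | succ m ih =>
    intro a b T U hT hU
    refine ⟨hT.1.tens hU.1, ?_⟩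
    rw [D_tens hT.1.1 hU.1.1]
    exact ((ih hT.2 hU.pred).mono (by omega)).add ((ih hT.pred hU.2).mono (by omega))

end derivs

set_option linter.unusedSectionVars false
/-! ## Part 10: contraction operations and the main identities -/

section idents
variable {n : ℕ} [NeZero n] {g : MetricField n} {ℓ : VecField n}

/-- Slot bookkeeping for the action of a 2-tensor on a slot. -/
def eA {k : ℕ} (j : Fin k) : Fin 2 ⊕ Fin k ≃ Fin k ⊕ Bool where
  toFun := Sum.elim (fun i => if i = 0 then Sum.inl j else Sum.inr false)
    (fun i => if i = j then Sum.inr true else Sum.inl i)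
  invFun := Sum.elim (fun i => if i = j then Sum.inl 0 else Sum.inr i)
    (fun b => cond b (Sum.inr j) (Sum.inl 1))
  left_inv := by
    rintro (i | i)
    · fin_cases i <;> simp
    · by_cases h : i = j <;> simp [h]
  right_inv := by
    rintro (i | i)
    · by_cases h : i = j <;> simp [h]
    · cases i <;> simp

/-- Slot bookkeeping for the action of a 3-tensor. -/
def eS {k : ℕ} (m : Fin k) : Fin 3 ⊕ Fin k ≃ Fin (k+1) ⊕ Bool where
  toFun := Sum.elim ![Sum.inl 0, Sum.inl m.succ, Sum.inr false]
    (fun i => if i = m then Sum.inr true else Sum.inl i.succ)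
  invFun := Sum.elim (Fin.cons (Sum.inl 0) (fun i => if i = m then Sum.inl 1 else Sum.inr i))
    (fun b => cond b (Sum.inr m) (Sum.inl 2))
  left_inv := by
    rintro (i | i)
    · fin_cases i <;> simp
    · by_cases h : i = m <;> simp [h]
  right_inv := by
    rintro (i | i)
    · refine Fin.cases ?_ (fun j => ?_) i
      · simp
      · by_cases h : j = m <;> simp [h]
    · cases i <;> simp

/-- Slot bookkeeping for the contraction of the first slot with a covector. -/
def eI (k : ℕ) : Fin 1 ⊕ Fin (k+1) ≃ Fin k ⊕ Bool where
  toFun := Sum.elim (fun _ => Sum.inr false) (Fin.cons (Sum.inr true) (fun i => Sum.inl i))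
  invFun := Sum.elim (fun i => Sum.inr i.succ) (fun b => cond b (Sum.inr 0) (Sum.inl 0))
  left_inv := by
    rintro (i | i)
    · fin_cases i; simp
    · refine Fin.cases ?_ (fun j => ?_) i <;> simp
  right_inv := by
    rintro (i | i)
    · simp
    · cases i <;> simp

/-- Slot bookkeeping for the contraction of the Riemann tensor with `ℓ`. -/
def eK : Fin 1 ⊕ Fin 4 ≃ Fin 3 ⊕ Bool where
  toFun := Sum.elim (fun _ => Sum.inr false) ![Sum.inl 2, Sum.inl 1, Sum.inr true, Sum.inl 0]
  invFun := Sum.elim ![Sum.inr 3, Sum.inr 1, Sum.inr 0] (fun b => cond b (Sum.inr 2) (Sum.inl 0))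
  left_inv := by
    rintro (i | i)
    · fin_cases i; simp
    · fin_cases i <;> simp
  right_inv := by
    rintro (i | i)
    · fin_cases i <;> simp
    · cases i <;> simp

/-- The action of a 2-tensor on slot `j`. -/
def starA (g : MetricField n) {k : ℕ} (A : TF n (Fin 2)) (j : Fin k) (U : TF n (Fin k)) : TF n (Fin k) :=
  contr g (reix (eA j) (tens A U))

/-- The action of a 3-tensor on slot `m`. -/
def starK (g : MetricField n) {k : ℕ} (K : TF n (Fin 3)) (m : Fin k) (T : TF n (Fin k)) : TF n (Fin (k+1)) :=
  contr g (reix (eS m) (tens K T))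

/-- Contraction of the first slot with a covector. -/
def iota (g : MetricField n) {k : ℕ} (l : TF n (Fin 1)) (T : TF n (Fin (k+1))) : TF n (Fin k) :=
  contr g (reix (eI k) (tens l T))

/-- Contraction of the Riemann tensor with a covector. -/
def iotaR (g : MetricField n) (l : TF n (Fin 1)) (R : TF n (Fin 4)) : TF n (Fin 3) :=
  contr g (reix eK (tens l R))

lemma starA_apply {k : ℕ} (A : TF n (Fin 2)) (j : Fin k) (U : TF n (Fin k)) (x : Pt n) (idx : Fin k → Fin n) :
    starA g A j U x idx = ∑ p, ∑ q, (g x)⁻¹ p q * (A x ![idx j, p] * U x (Function.update idx j q)) := by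
  unfold starA contr reix tens
  refine Finset.sum_congr rfl fun p _ => Finset.sum_congr rfl fun q _ => ?_
  congr 3
  · funext i; fin_cases i <;> simp [eA]
  · funext i
    by_cases h : i = j
    · subst h; simp [eA]
    · simp [eA, h]

lemma starK_apply {k : ℕ} (K : TF n (Fin 3)) (m : Fin k) (T : TF n (Fin k)) (x : Pt n) (b : Fin n)
    (idx : Fin k → Fin n) :
    starK g K m T x (Fin.cons b idx)
      = ∑ p, ∑ q, (g x)⁻¹ p q * (K x ![b, idx m, p] * T x (Function.update idx m q)) := by
  unfold starK contr reix tens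
  refine Finset.sum_congr rfl fun p _ => Finset.sum_congr rfl fun q _ => ?_
  congr 3
  · funext i; fin_cases i <;> simp [eS]
  · funext i
    by_cases h : i = m
    · subst h; simp [eS]
    · simp [eS, h]

lemma iota_apply {k : ℕ} (l : TF n (Fin 1)) (T : TF n (Fin (k+1))) (x : Pt n) (idx : Fin k → Fin n) :
    iota g l T x idx = ∑ p, ∑ q, (g x)⁻¹ p q * (l x ![p] * T x (Fin.cons q idx)) := by
  unfold iota contr reix tens
  refine Finset.sum_congr rfl fun p _ => Finset.sum_congr rfl fun q _ => ?_
  congr 3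
  · funext i; fin_cases i; simp [eI]
  · funext i
    refine Fin.cases ?_ (fun j => ?_) i <;> simp [eI]

lemma iotaR_apply (l : TF n (Fin 1)) (R : TF n (Fin 4)) (x : Pt n) (a c f : Fin n) :
    iotaR g l R x ![a, c, f] = ∑ p, ∑ q, (g x)⁻¹ p q * (l x ![p] * R x ![f, c, q, a]) := by
  unfold iotaR contr reix tens
  refine Finset.sum_congr rfl fun p _ => Finset.sum_congr rfl fun q _ => ?_
  congr 3
  · funext i; fin_cases i; simp [eK]
  · funext i; fin_cases i <;> simp [eK]

/-- Raising the index of `ℓ`. -/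
lemma sum_low (hg : IsLorentzMetric g) (x : Pt n) (f : Fin n → ℝ) :
    ∑ p, ∑ q, (g x)⁻¹ p q * (lowerField g ℓ x ![p] * f q) = ∑ q, ℓ x q * f q := by
  rw [Finset.sum_comm]
  refine Finset.sum_congr rfl fun q _ => ?_
  have : ∀ p, (g x)⁻¹ p q * (lowerField g ℓ x ![p] * f q)
      = ∑ b, ((g x)⁻¹ q p * g x p b) * (ℓ x b * f q) := by
    intro p
    simp only [lowerField, lower, Matrix.cons_val_zero, Finset.mul_sum, Finset.sum_mul]
    exact Finset.sum_congr rfl fun b _ => by rw [ginv_sym hg]; ring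
  simp only [this]
  rw [Finset.sum_comm]
  simp only [← Finset.sum_mul, sum_ginv_g hg]
  simp

/-- The covariant derivative of `ℓ` with index raised. -/
lemma sum_A (H : Bg g ℓ) (x : Pt n) (b : Fin n) (f : Fin n → ℝ) :
    ∑ p, ∑ q, (g x)⁻¹ p q * (covD g (lowerField g ℓ) x ![b, p] * f q) = ∑ q, nabV g b ℓ x q * f q := by
  have hA : ∀ p, covD g (lowerField g ℓ) x ![b, p] = ∑ e, g x p e * nabV g b ℓ x e := by
    intro p
    have h := ev_nab_low H.hg H.hsm b x (Pi.single p 1)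
    rw [ev_one, gdot_comm H.hg] at h
    simp only [Pi.single_apply, ite_mul, one_mul, zero_mul, Finset.sum_ite_eq', Finset.mem_univ, if_true] at h
    have h2 : covD g (lowerField g ℓ) x ![b, p] = nab g b (lowerField g ℓ) x ![p] := rfl
    rw [h2, h]
    simp only [gdot]
    rw [Finset.sum_eq_single p]
    · exact Finset.sum_congr rfl fun e _ => by simp
    · intro c _ hc
      exact Finset.sum_eq_zero fun e _ => by simp [hc]
    · simp
  rw [Finset.sum_comm]
  refine Finset.sum_congr rfl fun q _ => ?_
  have : ∀ p, (g x)⁻¹ p q * (covD g (lowerField g ℓ) x ![b, p] * f q)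
      = ∑ e, ((g x)⁻¹ q p * g x p e) * (nabV g b ℓ x e * f q) := by
    intro p
    simp only [hA, Finset.mul_sum, Finset.sum_mul]
    exact Finset.sum_congr rfl fun e _ => by rw [ginv_sym H.hg]; ring
  simp only [this]
  rw [Finset.sum_comm]
  simp only [← Finset.sum_mul, sum_ginv_g H.hg]
  simp

/-- The one-form `ℓ`. -/
abbrev lam (g : MetricField n) (ℓ : VecField n) : TF n (Fin 1) := lowerField g ℓ
/-- The covariant derivative of `ℓ`. -/
abbrev Af (g : MetricField n) (ℓ : VecField n) : TF n (Fin 2) := covD g (lowerField g ℓ)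
/-- The Riemann tensor. -/
abbrev Rf (g : MetricField n) : TF n (Fin 4) := riemann g
/-- The Riemann tensor contracted once with `ℓ`. -/
def Kf (g : MetricField n) (ℓ : VecField n) : TF n (Fin 3) := iotaR g (lam g ℓ) (Rf g)
/-- The covariant derivative as an operation on tensor fields. -/
abbrev cd (g : MetricField n) {k : ℕ} (T : TF n (Fin k)) : TF n (Fin (k+1)) := covD g T

lemma Kf_apply (hg : IsLorentzMetric g) (x : Pt n) (a c f : Fin n) :
    Kf g ℓ x ![a, c, f] = ∑ b, ℓ x b * riemann g x ![f, c, b, a] := by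
  unfold Kf
  rw [iotaR_apply, sum_low hg]

lemma D_iota (hg : IsLorentzMetric g) {k : ℕ} (T : TF n (Fin k)) :
    D g ℓ T = iota g (lam g ℓ) (cd g T) := by
  funext x idx
  rw [iota_apply, sum_low hg]
  rfl

/-- The commutator of `D` and the covariant derivative. -/
lemma D_cd (H : Bg g ℓ) {k : ℕ} {T : TF n (Fin k)} (hT : Sm T) :
    D g ℓ (cd g T) = fun x idx => (cd g (D g ℓ T) x idx - starA g (Af g ℓ) 0 (cd g T) x idx)
      - ∑ m, starK g (Kf g ℓ) m T x idx := by
  funext x idx0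
  obtain ⟨b, idx, rfl⟩ : ∃ b idx, idx0 = (Fin.cons b idx : Fin (k+1) → Fin n) :=
    ⟨idx0 0, fun m => idx0 m.succ, (Fin.cons_self_tail idx0).symm⟩
  have h1 : D g ℓ (cd g T) x (Fin.cons b idx) = ∑ a, ℓ x a * (covD g (covD g T) x (Fin.cons b (Fin.cons a idx))
      - act (fun e c => Rm g x a b e c) (T x) idx) := by
    unfold D
    refine Finset.sum_congr rfl fun a _ => ?_
    rw [← covD_covD_comm H.hg hT]
    rfl
  have h2 : cd g (D g ℓ T) x (Fin.cons b idx) = ∑ a, (nabV g b ℓ x a * nab g a T x idx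
      + ℓ x a * covD g (covD g T) x (Fin.cons b (Fin.cons a idx))) := by
    have e1 : cd g (D g ℓ T) x (Fin.cons b idx) = nab g b (D g ℓ T) x idx := rfl
    rw [e1]
    unfold nab D
    rw [pd_sum _ (fun a => (H.hsm a).mul (Sm.nab H.hg a hT idx)), act_sum]
    simp only [covD_covD]
    have e2 : ∀ a, act (fun e c => christoffel g x e b c) (fun i => ℓ x a * nab g a T x i) idx
        = ℓ x a * act (fun e c => christoffel g x e b c) (nab g a T x) idx := by
      intro a
      simp only [act, Finset.mul_sum]
      exact Finset.sum_congr rfl fun _ _ => Finset.sum_congr rfl fun _ _ => by ring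
    have e3 : ∑ a, (nabV g b ℓ x a * nab g a T x idx + ℓ x a * (nab g b (nab g a T) x idx
          - ∑ e, christoffel g x e b a * nab g e T x idx))
        = ∑ a, (pd (fun y => ℓ y a) b x * nab g a T x idx + ℓ x a * nab g b (nab g a T) x idx) := by
      have s1 : ∑ a, (∑ c, christoffel g x a b c * ℓ x c) * nab g a T x idx
          = ∑ a, ℓ x a * ∑ e, christoffel g x e b a * nab g e T x idx := by
        simp only [Finset.sum_mul, Finset.mul_sum]
        rw [Finset.sum_comm]
        exact Finset.sum_congr rfl fun _ _ => Finset.sum_congr rfl fun _ _ => by ring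
      have s2 : ∀ a, nabV g b ℓ x a * nab g a T x idx + ℓ x a * (nab g b (nab g a T) x idx
          - ∑ e, christoffel g x e b a * nab g e T x idx)
          = (pd (fun y => ℓ y a) b x * nab g a T x idx + ℓ x a * nab g b (nab g a T) x idx)
            + ((∑ c, christoffel g x a b c * ℓ x c) * nab g a T x idx
              - ℓ x a * ∑ e, christoffel g x e b a * nab g e T x idx) := by
        intro a; unfold nabV; ring
      rw [Finset.sum_congr rfl fun a _ => s2 a, Finset.sum_add_distrib, Finset.sum_sub_distrib, s1]
      ring
    have e4 : ∑ a, (nabV g b ℓ x a * nab g a T x idx + ℓ x a * (nab g b (nab g a T) x idx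
          - ∑ e, christoffel g x e b a * nab g e T x idx))
      = ∑ i, pd (fun y => ℓ y i * nab g i T y idx) b x
        - ∑ z, act (fun e c => christoffel g x e b c) (fun i => ℓ x z * nab g z T x i) idx := by
      rw [e3, ← Finset.sum_sub_distrib]
      refine Finset.sum_congr rfl fun a _ => ?_
      rw [pd_mul (H.hsm a) (Sm.nab H.hg a hT idx), e2]
      have : nab g b (nab g a T) x idx = pd (fun y => nab g a T y idx) b x
        - act (fun e c => christoffel g x e b c) (nab g a T x) idx := rfl
      rw [this]; ring
    exact e4.symm
  have h3 : starA g (Af g ℓ) 0 (cd g T) x (Fin.cons b idx) = ∑ a, nabV g b ℓ x a * nab g a T x idx := by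
    rw [starA_apply]
    simp only [Fin.cons_zero]
    rw [sum_A H]
    refine Finset.sum_congr rfl fun a _ => ?_
    rw [Fin.update_cons_zero]
    rfl
  have h4 : ∑ m, starK g (Kf g ℓ) m T x (Fin.cons b idx)
      = ∑ a, ℓ x a * act (fun e c => Rm g x a b e c) (T x) idx := by
    simp only [act, Finset.mul_sum]
    rw [Finset.sum_comm]
    refine Finset.sum_congr rfl fun m _ => ?_
    rw [starK_apply, Finset.sum_comm]
    have s1 : ∀ q, ∑ p, (g x)⁻¹ p q * (Kf g ℓ x ![b, idx m, p] * T x (Function.update idx m q))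
       = ∑ a, ℓ x a * (Rm g x a b q (idx m) * T x (Function.update idx m q)) := by
      intro q
      have s2 : ∀ p, (g x)⁻¹ p q * (Kf g ℓ x ![b, idx m, p] * T x (Function.update idx m q))
          = ∑ e, ((g x)⁻¹ q p * g x p e) * ∑ a, ℓ x a * (Rm g x a b e (idx m) * T x (Function.update idx m q)) := by
        intro p
        rw [Kf_apply H.hg, ginv_sym H.hg x p q]
        simp only [riem_eq, Finset.mul_sum, Finset.sum_mul]
        rw [Finset.sum_comm]
        exact Finset.sum_congr rfl fun e _ => Finset.sum_congr rfl fun a _ => by ring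
      simp only [s2]
      rw [Finset.sum_comm]
      simp only [← Finset.sum_mul, sum_ginv_g H.hg]
      simp
    rw [Finset.sum_congr rfl fun q _ => s1 q, Finset.sum_comm]
  rw [h1, h2, h3, h4]
  simp only [mul_sub, Finset.sum_add_distrib, Finset.sum_sub_distrib]
  ring

/-- `K` in terms of the second derivative of `ℓ`. -/
lemma Kf_eq (H : Bg g ℓ) (x : Pt n) (a c f : Fin n) :
    Kf g ℓ x ![a, c, f] = cd g (Af g ℓ) x ![c, f, a] - cd g (Af g ℓ) x ![f, c, a] := by
  have h := covD_covD_comm H.hg (sm_low H.hg H.hsm) x c f ![a]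
  have h1 : cd g (Af g ℓ) x ![c, f, a] = cd g (Af g ℓ) x ![f, c, a]
      - act (fun e c' => Rm g x c f e c') (lowerField g ℓ x) ![a] := h
  rw [h1, Kf_apply H.hg]
  have h2 : act (fun e c' => Rm g x c f e c') (lowerField g ℓ x) ![a] = ∑ b, ℓ x b * riemann g x ![b, a, c, f] := by
    unfold act
    rw [Fin.sum_univ_one]
    simp only [riem_eq, lowerField, lower, upd1, Matrix.cons_val_zero, Finset.mul_sum]
    rw [Finset.sum_comm]
    refine Finset.sum_congr rfl fun e _ => Finset.sum_congr rfl fun b _ => ?_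
    rw [gsym H.hg x b e]; ring
  rw [h2]
  have h3 : ∀ b, ℓ x b * riemann g x ![b, a, c, f] = - (ℓ x b * riemann g x ![f, c, b, a]) := by
    intro b
    rw [riem_pair H.hg x b a c f, riem_first H.hg x c f b a]; ring
  rw [Finset.sum_congr rfl fun b _ => h3 b, Finset.sum_neg_distrib]
  ring

/-- The contracted Bianchi identity. -/
lemma D_Rf (H : Bg g ℓ) (x : Pt n) (f c d a : Fin n) :
    D g ℓ (Rf g) x ![f, c, d, a] = cd g (Kf g ℓ) x ![d, a, c, f] - cd g (Kf g ℓ) x ![a, d, c, f]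
      - starA g (Af g ℓ) 2 (Rf g) x ![f, c, d, a] - starA g (Af g ℓ) 3 (Rf g) x ![f, c, d, a] := by
  have hK : ∀ d a c f, cd g (Kf g ℓ) x ![d, a, c, f]
      = ∑ b, nabV g d ℓ x b * riemann g x ![f, c, b, a] + ∑ b, ℓ x b * nab g d (Rf g) x ![f, c, b, a] := by
    intro d a c f
    have e1 : cd g (Kf g ℓ) x ![d, a, c, f] = nab g d (Kf g ℓ) x ![a, c, f] := rfl
    have hl := sm_low H.hg H.hsm
    have hR := sm_riem H.hg
    rw [e1]
    unfold Kf iotaR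
    rw [nab_contr H.hg _ ((hl.tens hR).reix eK)]
    have e2 : nab g d (reix eK (tens (lam g ℓ) (Rf g)))
        = fun y i => reix eK (tens (nab g d (lam g ℓ)) (Rf g)) y i + reix eK (tens (lam g ℓ) (nab g d (Rf g))) y i := by
      funext y i
      rw [nab_reix]
      unfold reix
      rw [nab_tens g d hl hR]
    rw [e2]
    have e3 : ∀ U V : TF n (Fin 3 ⊕ Bool), contr g (fun y i => U y i + V y i) x ![a, c, f]
        = contr g U x ![a, c, f] + contr g V x ![a, c, f] := by
      intro U V
      simp only [contr, mul_add, Finset.sum_add_distrib]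
    rw [e3]
    have e4 := iotaR_apply (g := g) (nab g d (lam g ℓ)) (Rf g) x a c f
    have e5 := iotaR_apply (g := g) (lam g ℓ) (nab g d (Rf g)) x a c f
    unfold iotaR at e4 e5
    rw [e4, e5, sum_low H.hg]
    congr 1
    exact sum_A H x d (fun q => riemann g x ![f, c, q, a])
  rw [hK, hK]
  have hB : D g ℓ (Rf g) x ![f, c, d, a] = ∑ b, ℓ x b * nab g d (Rf g) x ![f, c, b, a]
      - ∑ b, ℓ x b * nab g a (Rf g) x ![f, c, b, d] := by
    unfold D
    rw [← Finset.sum_sub_distrib]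
    refine Finset.sum_congr rfl fun b _ => ?_
    have h := riem_bianchi2 H.hg x f c a b d
    have e : nab g d (Rf g) x ![f, c, a, b] = - nab g d (Rf g) x ![f, c, b, a] := by
      have z : (Rf g) = fun y i => - reix (Equiv.swap 2 3) (Rf g) y i := by
        funext y i
        have hi : ∀ j : Fin 4 → Fin n, j = ![j 0, j 1, j 2, j 3] := by
          intro j; funext m; fin_cases m <;> rfl
        have h1 := riem_last (g := g) y (i 0) (i 1) (i 2) (i 3)
        rw [hi i]
        have h2 : reix (Equiv.swap 2 3) (Rf g) y ![i 0, i 1, i 2, i 3] = riemann g y ![i 0, i 1, i 3, i 2] := by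
          unfold reix Rf
          congr 1
          funext m; fin_cases m <;> rfl
        rw [h2]
        exact h1
      have hidx : (fun m : Fin 4 => (![f, c, a, b] : Fin 4 → Fin n) (Equiv.swap 2 3 m)) = ![f, c, b, a] := by
        funext m; fin_cases m <;> rfl
      have h3 : nab g d (Rf g) x ![f, c, a, b]
          = nab g d (fun y i => - reix (Equiv.swap 2 3) (Rf g) y i) x ![f, c, a, b] :=
        congrArg (fun T => nab g d T x ![f, c, a, b]) z
      have h4 : reix (Equiv.swap 2 3) (nab g d (Rf g)) x ![f, c, a, b] = nab g d (Rf g) x ![f, c, b, a] :=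
        congrArg (nab g d (Rf g) x) hidx
      rw [h3, nab_neg, nab_reix]
      exact congrArg Neg.neg h4
    rw [e] at h
    have h' : nab g b (Rf g) x ![f, c, d, a] = nab g d (Rf g) x ![f, c, b, a] - nab g a (Rf g) x ![f, c, b, d] := by
      linarith
    rw [h']; ring
  rw [hB, starA_apply, starA_apply]
  simp only [upd42, upd43]
  have c2 : (![f, c, d, a] : Fin 4 → Fin n) 2 = d := rfl
  have c3 : (![f, c, d, a] : Fin 4 → Fin n) 3 = a := rfl
  rw [c2, c3, sum_A H, sum_A H]
  have e6 : ∑ q, nabV g a ℓ x q * Rf g x ![f, c, d, q] = - ∑ q, nabV g a ℓ x q * riemann g x ![f, c, q, d] := by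
    rw [← Finset.sum_neg_distrib]
    refine Finset.sum_congr rfl fun q _ => ?_
    have := riem_last (g := g) x f c d q
    have e7 : Rf g x ![f, c, d, q] = - riemann g x ![f, c, q, d] := this
    rw [e7]; ring
  rw [e6]; ring

/-- The twice contracted Riemann tensor. -/
def Jf (g : MetricField n) (ℓ : VecField n) : TF n (Fin 2) := starK g (Kf g ℓ) 0 (lam g ℓ)

lemma Jf_apply (hg : IsLorentzMetric g) (x : Pt n) (a c : Fin n) :
    Jf g ℓ x ![a, c] = ∑ f, ℓ x f * Kf g ℓ x ![a, c, f] := by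
  have h := starK_apply (g := g) (Kf g ℓ) 0 (lam g ℓ) x a ![c]
  have h' : Jf g ℓ x ![a, c] = ∑ p, ∑ q, (g x)⁻¹ p q * (Kf g ℓ x ![a, c, p] * lam g ℓ x ![q]) := by
    refine Eq.trans h ?_
    refine Finset.sum_congr rfl fun p _ => Finset.sum_congr rfl fun q _ => ?_
    rw [upd1]; rfl
  rw [h', Finset.sum_comm, ← sum_low hg]
  refine Finset.sum_congr rfl fun p _ => Finset.sum_congr rfl fun q _ => ?_
  rw [ginv_sym hg]; ring

lemma Jf_symm (hg : IsLorentzMetric g) (x : Pt n) (a c : Fin n) :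
    Jf g ℓ x ![a, c] = Jf g ℓ x ![c, a] := by
  rw [Jf_apply hg, Jf_apply hg]
  simp only [Kf_apply hg, Finset.mul_sum]
  rw [Finset.sum_comm]
  refine Finset.sum_congr rfl fun b _ => Finset.sum_congr rfl fun f _ => ?_
  rw [riem_pair hg x f c b a]; ring

lemma D_Af (H : Bg g ℓ) (hl : D g ℓ (lam g ℓ) = fun _ _ => 0) :
    D g ℓ (Af g ℓ) = fun x idx => - (starA g (Af g ℓ) 0 (Af g ℓ) x idx + Jf g ℓ x idx) := by
  have h := D_cd H (sm_low H.hg H.hsm)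
  have h0 : cd g (D g ℓ (lam g ℓ)) = fun _ _ => 0 := by
    rw [hl]
    funext x i
    unfold cd
    rw [covD_eq]
    simp [nab, act, pd_const]
  refine Eq.trans h ?_
  funext x idx
  have h1 := congrFun (congrFun h0 x) idx
  rw [Fin.sum_univ_one]
  have h2 : starK g (Kf g ℓ) 0 (lowerField g ℓ) x idx = Jf g ℓ x idx := rfl
  rw [h1, h2]; ring

end idents

section closure
set_option linter.unusedSectionVars false
variable {n : ℕ} [NeZero n] {g : MetricField n} {ℓ : VecField n}

lemma Gm.starA (H : Bg g ℓ) {m k : ℕ} {a b : ℤ} {A : TF n (Fin 2)} {U : TF n (Fin k)} (hA : Gm g ℓ m a A)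
    (hU : Gm g ℓ m b U) (j : Fin k) : Gm g ℓ m (a + b) (VSI.starA g A j U) :=
  ((hA.tens hU).reix _).contr H

lemma Gm.starK (H : Bg g ℓ) {m k : ℕ} {a b : ℤ} {K : TF n (Fin 3)} {U : TF n (Fin k)} (hK : Gm g ℓ m a K)
    (hU : Gm g ℓ m b U) (j : Fin k) : Gm g ℓ m (a + b) (VSI.starK g K j U) :=
  ((hK.tens hU).reix _).contr H

lemma Gm.iota (H : Bg g ℓ) {m k : ℕ} {a b : ℤ} {l : TF n (Fin 1)} {U : TF n (Fin (k+1))} (hl : Gm g ℓ m a l)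
    (hU : Gm g ℓ m b U) : Gm g ℓ m (a + b) (VSI.iota g l U) :=
  ((hl.tens hU).reix _).contr H

lemma Gm.iotaR (H : Bg g ℓ) {m : ℕ} {a b : ℤ} {l : TF n (Fin 1)} {U : TF n (Fin 4)} (hl : Gm g ℓ m a l)
    (hU : Gm g ℓ m b U) : Gm g ℓ m (a + b) (VSI.iotaR g l U) :=
  ((hl.tens hU).reix _).contr H

/-- The covariant derivative preserves balanced tensors. -/
lemma Gm.cd (H : Bg g ℓ) (m : ℕ) (hA : ∀ m, Gm g ℓ m (-1) (Af g ℓ)) (hK : ∀ j, j < m → Gm g ℓ j (-1) (Kf g ℓ)) :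
    ∀ {k : ℕ} {b : ℤ} {T : TF n (Fin k)}, Gm g ℓ (m+1) b T → Gm g ℓ m b (cd g T) := by
  induction m with
  | zero =>
    intro k b T hT
    exact VSI.F.covD H (hA 0) hT.1 hT.2
  | succ m ih =>
    intro k b T hT
    have ih' := @ih (fun j hj => hK j (by omega))
    have h1 : Gm g ℓ m b (VSI.cd g T) := ih' hT.pred
    refine ⟨h1.F, ?_⟩
    rw [D_cd H hT.1.1]
    refine Gm.sub (Gm.sub (ih' hT.2) ?_) (Gm.sum Finset.univ fun z => ?_)
    · exact (Gm.starA H (hA m) h1 0).mono (by omega)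
    · exact (Gm.starK H (hK m (by omega)) hT.pred.pred z).mono (by omega)

lemma Kf_eq' (H : Bg g ℓ) : Kf g ℓ = fun x i =>
    reix (finRotate 3) (cd g (Af g ℓ)) x i - reix (Equiv.swap 0 2) (cd g (Af g ℓ)) x i := by
  funext x i
  have hi : i = ![i 0, i 1, i 2] := by funext m; fin_cases m <;> rfl
  rw [hi, Kf_eq H]
  unfold reix
  congr 2
  · funext m; fin_cases m <;> rfl
  · funext m; fin_cases m <;> rfl

lemma Gm.Kf_of_A (H : Bg g ℓ) (hA : ∀ m, Gm g ℓ m (-1) (Af g ℓ)) (m : ℕ) : Gm g ℓ m (-1) (Kf g ℓ) := by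
  induction m using Nat.strong_induction_on with
  | _ m ih =>
    rw [Kf_eq' H]
    have h := Gm.cd H m hA ih (hA (m+1))
    exact (h.reix _).sub (h.reix _)

lemma Gm.cd_of_A (H : Bg g ℓ) (hA : ∀ m, Gm g ℓ m (-1) (Af g ℓ)) {k : ℕ} {b : ℤ} {T : TF n (Fin k)}
    (hT : ∀ m, Gm g ℓ m b T) (m : ℕ) : Gm g ℓ m b (VSI.cd g T) :=
  Gm.cd H m hA (fun j _ => Gm.Kf_of_A H hA j) (hT (m+1))

lemma Gm.iter (H : Bg g ℓ) (hA : ∀ m, Gm g ℓ m (-1) (Af g ℓ)) {k : ℕ} {b : ℤ} {T : TF n (Fin k)}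
    (hT : ∀ m, Gm g ℓ m b T) (i : ℕ) : ∀ m, Gm g ℓ m b (ι := Fin (k+i)) (covDIter g T i) := by
  induction i with
  | zero => exact hT
  | succ i ih => intro m; exact Gm.cd_of_A H hA ih m

/-- If `J` is balanced of order `-2`, so is `A` of order `-1`. -/
lemma Gm.A_of_J (H : Bg g ℓ) (hl : D g ℓ (lam g ℓ) = fun _ _ => 0) (hA : VSI.F g ℓ (-1) (Af g ℓ))
    (hJ : ∀ m, Gm g ℓ m (-2) (Jf g ℓ)) (m : ℕ) : Gm g ℓ m (-1) (Af g ℓ) := by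
  induction m with
  | zero => exact hA
  | succ m ih =>
    refine ⟨hA, ?_⟩
    rw [D_Af H hl]
    exact ((Gm.starA H ih ih 0).add (hJ m)).neg

lemma F_lam (H : Bg g ℓ) : F g ℓ (-1) (lam g ℓ) := by
  refine ⟨sm_low H.hg H.hsm, fun x => ?_⟩
  obtain ⟨E, hE⟩ := H.frame x
  refine FAt.of_frame H hE fun a ha => ?_
  have e : (fun m => E (a m)) = ![E (a 0)] := by funext m; fin_cases m; rfl
  rw [e, ev_low, ← hE.e0, hE.h, if_neg]
  intro h
  have h1 : a 0 = bar 0 := by rw [h, bar_bar]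
  rw [Fin.sum_univ_one, h1, bar_zero, wt_one H.ne01] at ha
  omega

lemma Gm_lam (H : Bg g ℓ) (hl : D g ℓ (lam g ℓ) = fun _ _ => 0) (m : ℕ) : Gm g ℓ m (-1) (lam g ℓ) := by
  cases m with
  | zero => exact F_lam H
  | succ m => exact ⟨F_lam H, by rw [hl]; exact Gm.zero⟩

/-- Boost order zero of all derivatives of the curvature implies balance. -/
lemma Gm_riem (H : Bg g ℓ) (hl : D g ℓ (lam g ℓ) = fun _ _ => 0)
    (hR : ∀ i, F g ℓ 0 (ι := Fin (4+i)) (covDIter g (riemann g) i)) (m : ℕ) :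
    ∀ i, Gm g ℓ m 0 (ι := Fin (4+i)) (covDIter g (riemann g) i) := by
  induction m with
  | zero => exact hR
  | succ m ih =>
    intro i
    refine ⟨hR i, ?_⟩
    rw [D_iota H.hg]
    exact (Gm.iota H (Gm_lam H hl m) (ih (i+1))).mono (by omega)

/-- Half of the theorem: all derivatives of `ℓ` have negative boost order. -/
lemma F_iter (H : Bg g ℓ) (hl : D g ℓ (lam g ℓ) = fun _ _ => 0) (hA : VSI.F g ℓ (-1) (Af g ℓ))
    (hR : ∀ i, F g ℓ 0 (ι := Fin (4+i)) (covDIter g (riemann g) i)) (i : ℕ) :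
    F g ℓ (-1) (ι := Fin (1+i)) (covDIter g (lowerField g ℓ) i) := by
  have hK : ∀ m, Gm g ℓ m (-1) (Kf g ℓ) := fun m =>
    (Gm.iotaR H (Gm_lam H hl m) (Gm_riem H hl hR m 0)).mono (by omega)
  have hJ : ∀ m, Gm g ℓ m (-2) (Jf g ℓ) := fun m =>
    (Gm.starK H (hK m) (Gm_lam H hl m) 0).mono (by omega)
  exact (Gm.iter H (Gm.A_of_J H hl hA hJ) (Gm_lam H hl) i 0).F

end closure

section schemes
set_option linter.unusedSectionVars false
variable {n : ℕ} [NeZero n] {g : MetricField n} {ℓ : VecField n}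

lemma sum_prod_ev {P J : Type} [Fintype P] [DecidableEq P] [Fintype J] [DecidableEq J] {K : J → Type}
    [∀ j, Fintype (K j)] [∀ j, DecidableEq (K j)] (e : P ≃ Σ j, K j)
    (t : ∀ j, (K j → Fin n) → ℝ) (Z : P → Fin n → ℝ) :
    ∑ φ : P → Fin n, (∏ p, Z p (φ p)) * ∏ j, t j (fun s => φ (e.symm ⟨j, s⟩))
      = ∏ j, ev (t j) (fun s => Z (e.symm ⟨j, s⟩)) := by
  unfold ev
  rw [Finset.prod_univ_sum, Fintype.piFinset_univ]
  let E : (P → Fin n) ≃ (∀ j, K j → Fin n) :=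
    (Equiv.arrowCongr e (Equiv.refl _)).trans (Equiv.piCurry (fun _ _ => Fin n))
  refine Fintype.sum_equiv E _ _ fun φ => ?_
  have hE : ∀ j s, E φ j s = φ (e.symm ⟨j, s⟩) := fun j s => rfl
  rw [Finset.prod_mul_distrib, mul_comm]
  congr 1
  rw [← Equiv.prod_comp e.symm, Fintype.prod_sigma]
  rfl

/-- Frame labels of a contracted slot. -/
def lab {m : ℕ} (c : Fin m → Fin n) (p : Fin m × Bool) : Fin n := cond p.2 (bar (c p.1)) (c p.1)

lemma value_frame (hg : IsLorentzMetric g) {x : Pt n} {E : Fin n → Fin n → ℝ} (hE : IsFr g ℓ x E) {k : ℕ}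
    (S : ConcomScheme k 0) (T : TensorField n k) (v : Fin 0 → Fin n) :
    S.value g T x v = ∑ c : Fin S.m → Fin n, ∏ j, ev (covDIter g T (S.ord j) x)
      (fun s => E (lab c (Equiv.sumEmpty _ _ (S.slots.symm ⟨j, s⟩)))) := by
  have h := fun c : Fin S.m → Fin n => sum_prod_ev ((Equiv.sumEmpty (Fin S.m × Bool) (Fin 0)).symm.trans S.slots)
    (fun j => covDIter g T (S.ord j) x) (fun p => E (lab c p))
  have h2 : ∀ c : Fin S.m → Fin n, ∏ j, ev (covDIter g T (S.ord j) x)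
      (fun s => E (lab c (Equiv.sumEmpty _ _ (S.slots.symm ⟨j, s⟩)))) = _ := fun c => (h c).symm
  rw [Finset.sum_congr rfl fun c _ => h2 c, Finset.sum_comm]
  unfold ConcomScheme.value
  refine Finset.sum_congr rfl fun φ _ => ?_
  rw [← Finset.sum_mul]
  congr 1
  · rw [Finset.prod_congr rfl fun i _ => hE.ginv hg (φ (i, false)) (φ (i, true)), Finset.prod_univ_sum,
      Fintype.piFinset_univ]
    refine Finset.sum_congr rfl fun c _ => ?_
    rw [Fintype.prod_prod_type]
    refine Finset.prod_congr rfl fun i _ => ?_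
    rw [Fintype.prod_bool, mul_comm]
    rfl
  · refine Finset.prod_congr rfl fun j _ => ?_
    congr 1
    funext s
    have : ∀ y : (Fin S.m × Bool) ⊕ Fin 0, Sum.elim φ v y = φ (Equiv.sumEmpty _ _ y) := by
      rintro (y | y)
      · rfl
      · exact y.elim0
    exact this _

/-- Negative boost order of all derivatives gives the VSI property. -/
lemma vsi_of_F (H : Bg g ℓ) {k : ℕ} {T : TensorField n k}
    (hT : ∀ i, F g ℓ (-1) (ι := Fin (k+i)) (covDIter g T i)) : IsVSI g T := by
  intro I S _ x v
  obtain ⟨E, hE⟩ := H.frame x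
  rw [value_frame H.hg hE]
  refine Finset.sum_eq_zero fun c _ => ?_
  let w : ∀ j : Fin S.N, Fin (k + S.ord j) → ℤ :=
    fun j s => wt (lab c (Equiv.sumEmpty _ _ (S.slots.symm ⟨j, s⟩)))
  have htot : ∑ j, ∑ s, w j s = 0 := by
    have h1 : ∑ j, ∑ s, w j s = ∑ p : Fin S.m × Bool, wt (lab c p) := by
      have := Equiv.sum_comp ((Equiv.sumEmpty (Fin S.m × Bool) (Fin 0)).symm.trans S.slots).symm
        (fun p => wt (lab c p))
      rw [← this, Fintype.sum_sigma]
      rfl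
    rw [h1, Fintype.sum_prod_type]
    refine Finset.sum_eq_zero fun i _ => ?_
    rw [Fintype.sum_bool]
    show wt (bar (c i)) + wt (c i) = 0
    rw [wt_bar H.ne01]; ring
  have hex : ∃ j, -1 < ∑ s, w j s := by
    by_contra hcon
    push Not at hcon
    have h2 : ∑ j, ∑ s, w j s < 0 := by
      have : Nonempty (Fin S.N) := ⟨⟨0, S.hN⟩⟩
      refine Finset.sum_neg (fun j _ => ?_) Finset.univ_nonempty
      have := hcon j
      omega
    omega
  obtain ⟨j, hj⟩ := hex
  refine Finset.prod_eq_zero (Finset.mem_univ j) ?_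
  exact (((hT (S.ord j)).2 x).frame H hE _ hj)

/-- The scheme contracting two copies of the `k`-th derivative. -/
def sch2 (k : ℕ) (σ : Equiv.Perm (Fin (1+k))) : ConcomScheme 1 0 where
  N := 2
  hN := by norm_num
  ord := fun _ => k
  m := 1 + k
  slots :=
    { toFun := Sum.elim (fun p => cond p.2 ⟨1, σ p.1⟩ ⟨0, p.1⟩) (fun i => i.elim0)
      invFun := fun q => Sum.inl (if q.1 = 0 then (q.2, false) else (σ.symm q.2, true))
      left_inv := by
        rintro (⟨i, b⟩ | i)
        · cases b <;> simp
        · exact i.elim0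
      right_inv := by
        rintro ⟨j, s⟩
        fin_cases j <;> simp }

lemma sch2_value (hg : IsLorentzMetric g) {x : Pt n} {E : Fin n → Fin n → ℝ} (hE : IsFr g ℓ x E) {k : ℕ}
    (σ : Equiv.Perm (Fin (1+k))) (T : TensorField n 1) (v : Fin 0 → Fin n) :
    (sch2 k σ).value g T x v = ∑ c : Fin (1+k) → Fin n, ev (covDIter g T k x) (fun s => E (c s)) *
      ev (covDIter g T k x) (fun s => E (bar (c (σ.symm s)))) := by
  rw [value_frame hg hE]
  refine Finset.sum_congr rfl fun c _ => ?_
  exact Fin.prod_univ_two _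

/-- Consequence of the vanishing of a two factor invariant. -/
lemma sch2_zero (hg : IsLorentzMetric g) {x : Pt n} {E : Fin n → Fin n → ℝ} (hE : IsFr g ℓ x E) {k : ℕ}
    (σ : Equiv.Perm (Fin (1+k))) {T : TensorField n 1} (hV : IsVSI g T)
    (h : ∀ c : Fin (1+k) → Fin n, ev (covDIter g T k x) (fun s => E (c s)) ≠ 0 →
      ev (covDIter g T k x) (fun s => E (bar (c (σ.symm s)))) ≠ 0 → ∀ s, bar (c (σ.symm s)) = c s)
    (c : Fin (1+k) → Fin n) (hc : ∀ s, bar (c (σ.symm s)) = c s) :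
    ev (covDIter g T k x) (fun s => E (c s)) = 0 := by
  have h1 := hV k (sch2 k σ) (fun _ => le_refl k) x (fun i => i.elim0)
  rw [sch2_value hg hE, Finset.sum_eq_zero_iff_of_nonneg] at h1
  · have h2 := h1 c (Finset.mem_univ c)
    simp only [hc] at h2
    exact mul_self_eq_zero.mp h2
  · intro c _
    by_cases h3 : ev (covDIter g T k x) (fun s => E (c s)) = 0
    · rw [h3, zero_mul]
    by_cases h4 : ev (covDIter g T k x) (fun s => E (bar (c (σ.symm s)))) = 0
    · rw [h4, mul_zero]
    have h5 := h c h3 h4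
    simp only [h5]
    exact mul_self_nonneg _

/-- The quartic scheme giving the norm of the acceleration. -/
def sch4 : ConcomScheme 1 0 where
  N := 4
  hN := by norm_num
  ord := ![1, 1, 0, 0]
  m := 3
  slots :=
    { toFun := Sum.elim (fun p =>
        if p.1 = 0 then cond p.2 ⟨2, 0⟩ ⟨0, ⟨0, by decide⟩⟩
        else if p.1 = 1 then cond p.2 ⟨1, ⟨1, by decide⟩⟩ ⟨0, ⟨1, by decide⟩⟩
        else cond p.2 ⟨3, 0⟩ ⟨1, ⟨0, by decide⟩⟩) (fun i => i.elim0)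
      invFun := fun q => Sum.inl (
        if q.1 = 0 then (if (q.2 : ℕ) = 0 then (0, false) else (1, false))
        else if q.1 = 1 then (if (q.2 : ℕ) = 0 then (2, false) else (1, true))
        else if q.1 = 2 then (0, true) else (2, true))
      left_inv := by decide
      right_inv := by decide }

lemma sch4_value (hg : IsLorentzMetric g) {x : Pt n} {E : Fin n → Fin n → ℝ} (hE : IsFr g ℓ x E)
    (T : TensorField n 1) (v : Fin 0 → Fin n) :
    sch4.value g T x v = ∑ c : Fin 3 → Fin n, ev (covD g T x) ![E (c 0), E (c 1)] *
      ev (covD g T x) ![E (c 2), E (bar (c 1))] * ev (T x) ![E (bar (c 0))] * ev (T x) ![E (bar (c 2))] := by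
  rw [value_frame hg hE]
  refine Finset.sum_congr rfl fun c _ => ?_
  refine (Fin.prod_univ_four _).trans ?_
  congr 1

end schemes

section forward
set_option linter.unusedSectionVars false
variable {n : ℕ} [NeZero n] {g : MetricField n} {ℓ : VecField n}

lemma null_of_vsi (hg : IsLorentzMetric g) (hV : IsVSI g (lowerField g ℓ)) (x : Pt n) :
    gdot g x (ℓ x) (ℓ x) = 0 := by
  have h := hV 0 (sch2 0 1) (fun _ => le_refl 0) x (fun i => i.elim0)
  have h1 : (sch2 0 1).value g (lowerField g ℓ) x (fun i => i.elim0)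
      = ∑ f : Bool → Fin n, (g x)⁻¹ (f false) (f true) * (lowerField g ℓ x ![f false] * lowerField g ℓ x ![f true]) := by
    unfold ConcomScheme.value
    let e : (Fin 1 × Bool → Fin n) ≃ (Bool → Fin n) :=
      Equiv.arrowCongr (Equiv.uniqueProd Bool (Fin 1)) (Equiv.refl _)
    refine Fintype.sum_equiv e _ _ fun φ => ?_
    have h2 : ∀ b, e φ b = φ (0, b) := fun b => rfl
    rw [h2, h2]
    congr 1
    · exact Fin.prod_univ_one _
    · refine (Fin.prod_univ_two _).trans ?_
      congr 1
  rw [h1] at h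
  have h3 : ∑ p, ∑ q, (g x)⁻¹ p q * (lowerField g ℓ x ![p] * lowerField g ℓ x ![q]) = 0 := by
    rw [← h]
    exact (sum_bool_fun (fun f : Bool → Fin n => (g x)⁻¹ (f false) (f true) *
      (lowerField g ℓ x ![f false] * lowerField g ℓ x ![f true]))).symm
  rw [sum_low hg x (fun q => lowerField g ℓ x ![q])] at h3
  rw [← ev_low, ev_one]
  exact h3

lemma A_null (H : Bg g ℓ) (x : Pt n) (X : Fin n → ℝ) : ev (covD g (lowerField g ℓ) x) ![X, ℓ x] = 0 := by
  rw [ev_A H.hg H.hsm]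
  unfold nabX
  rw [gdot_sum_left]
  refine Finset.sum_eq_zero fun a _ => ?_
  have h := pd_gdot H.hg H.hsm H.hsm a x
  simp only [H.null, pd_const] at h
  rw [gdot_comm H.hg x (ℓ x)] at h
  have h2 : gdot g x (nabV g a ℓ x) (ℓ x) = 0 := by linarith
  rw [h2, mul_zero]

lemma vec2 (E : Fin n → Fin n → ℝ) (c : Fin 2 → Fin n) : (fun s => E (c s)) = ![E (c 0), E (c 1)] := by
  funext s; fin_cases s <;> rfl

lemma vec3 (E : Fin n → Fin n → ℝ) (c : Fin 3 → Fin n) : (fun s => E (c s)) = ![E (c 0), E (c 1), E (c 2)] := by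
  funext s; fin_cases s <;> rfl

lemma wt_cases (h : (0 : Fin n) ≠ 1) (i : Fin n) :
    (i = 0 ∧ wt i = 1 ∧ bar i = 1) ∨ (i = 1 ∧ wt i = -1 ∧ bar i = 0) ∨ (i ≠ 0 ∧ i ≠ 1 ∧ wt i = 0 ∧ bar i = i) := by
  by_cases h0 : i = 0
  · subst h0; exact Or.inl ⟨rfl, wt_zero, bar_zero⟩
  by_cases h1 : i = 1
  · subst h1; exact Or.inr (Or.inl ⟨rfl, wt_one h, bar_one⟩)
  exact Or.inr (Or.inr ⟨h0, h1, wt_else h h0 h1, bar_else h0 h1⟩)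

/-- Step 1: the acceleration vanishes in the transverse directions. -/
lemma step1a (H : Bg g ℓ) (hV : IsVSI g (lowerField g ℓ)) {x : Pt n} {E : Fin n → Fin n → ℝ} (hE : IsFr g ℓ x E)
    {i : Fin n} (h1 : i ≠ 1) : ev (covD g (lowerField g ℓ) x) ![E 0, E i] = 0 := by
  have hn : ∀ b, ev (covD g (lowerField g ℓ) x) ![E b, E 0] = 0 := fun b => by rw [hE.e0]; exact A_null H x _
  by_cases h0 : i = 0
  · rw [h0]; exact hn 0
  have hl : ∀ b, b ≠ 0 → ev (lowerField g ℓ x) ![E (bar b)] = 0 := by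
    intro b hb
    rw [ev_low, ← hE.e0, hE.h, bar_bar, if_neg (Ne.symm hb)]
  have h := hV 1 sch4 (by decide) x (fun i => i.elim0)
  rw [sch4_value H.hg hE, Finset.sum_eq_zero_iff_of_nonneg] at h
  · have h2 := h ![0, i, 0] (Finset.mem_univ _)
    have h3 : ev (lowerField g ℓ x) ![E (bar 0)] = 1 := by
      rw [ev_low, ← hE.e0, hE.h, bar_bar, if_pos rfl]
    have h4 : ev (covD g (lowerField g ℓ) x) ![E 0, E i] * ev (covD g (lowerField g ℓ) x) ![E 0, E (bar i)]
        * ev (lowerField g ℓ x) ![E (bar 0)] * ev (lowerField g ℓ x) ![E (bar 0)] = 0 := h2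
    rw [h3, bar_else h0 h1, mul_one, mul_one] at h4
    exact mul_self_eq_zero.mp h4
  · intro c _
    by_cases c0 : c 0 = 0
    swap
    · rw [hl _ c0]; simp
    by_cases c2 : c 2 = 0
    swap
    · rw [hl _ c2]; simp
    rw [c0, c2]
    rcases wt_cases H.ne01 (c 1) with ⟨e, -, -⟩ | ⟨-, -, e⟩ | ⟨-, -, -, e⟩
    · rw [e, hn]; simp
    · rw [e, hn]; simp
    · rw [e]
      have := mul_nonneg (mul_self_nonneg (ev (covD g (lowerField g ℓ) x) ![E 0, E (c 1)]))
        (mul_self_nonneg (ev (lowerField g ℓ x) ![E (bar 0)]))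
      linarith

lemma step1b (H : Bg g ℓ) (hV : IsVSI g (lowerField g ℓ)) {x : Pt n} {E : Fin n → Fin n → ℝ} (hE : IsFr g ℓ x E)
    {i j : Fin n} (hi0 : i ≠ 0) (hi1 : i ≠ 1) (hj0 : j ≠ 0) (hj1 : j ≠ 1) :
    ev (covD g (lowerField g ℓ) x) ![E i, E j] = 0 := by
  have hn : ∀ b, ev (covD g (lowerField g ℓ) x) ![E b, E 0] = 0 := fun b => by rw [hE.e0]; exact A_null H x _
  have h := sch2_zero (k := 1) H.hg hE 1 hV (fun c hc hc' => ?_) ![i, j] (fun s => ?_)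
  · rw [← h]
    exact congrArg (ev (covD g (lowerField g ℓ) x)) (vec2 E ![i, j]).symm
  · have hc : ev (covD g (lowerField g ℓ) x) (fun s => E (c s)) ≠ 0 := hc
    have hc' : ev (covD g (lowerField g ℓ) x) (fun s => E (bar (c s))) ≠ 0 := hc'
    rw [vec2] at hc
    rw [vec2 E (fun s => bar (c s))] at hc'
    have z1 : c 1 ≠ 0 := fun e => hc (by rw [e, hn])
    have z1' : bar (c 1) ≠ 0 := fun e => hc' (by rw [e, hn])
    have w1 : c 1 ≠ 1 := fun e => z1' (by rw [e, bar_one])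
    have b1 : bar (c 1) = c 1 := bar_else z1 w1
    have z0 : c 0 ≠ 0 := fun e => hc (by rw [e, step1a H hV hE w1])
    have w0 : c 0 ≠ 1 := fun e => hc' (by rw [e, bar_one, step1a H hV hE (by rw [b1]; exact w1)])
    intro s
    fin_cases s
    · exact bar_else z0 w0
    · exact b1
  · fin_cases s
    · exact bar_else hi0 hi1
    · exact bar_else hj0 hj1

lemma step1c (H : Bg g ℓ) (hV : IsVSI g (lowerField g ℓ)) {x : Pt n} {E : Fin n → Fin n → ℝ} (hE : IsFr g ℓ x E) :
    ev (covD g (lowerField g ℓ) x) ![E 0, E 1] = 0 := by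
  have hn : ∀ b, ev (covD g (lowerField g ℓ) x) ![E b, E 0] = 0 := fun b => by rw [hE.e0]; exact A_null H x _
  have h := sch2_zero (k := 1) H.hg hE (Equiv.swap 0 1) hV (fun c hc hc' => ?_) ![0, 1] (fun s => ?_)
  · rw [← h]
    exact congrArg (ev (covD g (lowerField g ℓ) x)) (vec2 E ![0, 1]).symm
  · have hc : ev (covD g (lowerField g ℓ) x) (fun s => E (c s)) ≠ 0 := hc
    have hc' : ev (covD g (lowerField g ℓ) x) (fun s => E (bar (c ((Equiv.swap (0 : Fin 2) 1).symm s)))) ≠ 0 := hc'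
    rw [vec2] at hc
    rw [vec2 E (fun s => bar (c ((Equiv.swap (0 : Fin 2) 1).symm s)))] at hc'
    have hc' : ev (covD g (lowerField g ℓ) x) ![E (bar (c 1)), E (bar (c 0))] ≠ 0 := hc'
    have z1 : c 1 ≠ 0 := fun e => hc (by rw [e, hn])
    have w0 : c 0 ≠ 1 := fun e => hc' (by rw [e, bar_one, hn])
    have z0 : c 0 = 0 := by
      by_contra z0
      have w1 : c 1 = 1 := by
        by_contra w1
        exact hc (step1b H hV hE z0 w0 z1 w1)
      rw [w1, bar_one, bar_else z0 w0] at hc'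
      exact hc' (step1a H hV hE w0)
    have w1 : c 1 = 1 := by
      by_contra w1
      rw [z0] at hc
      exact hc (step1a H hV hE w1)
    intro s
    fin_cases s
    · show bar (c 1) = c 0
      rw [w1, z0, bar_one]
    · show bar (c 0) = c 1
      rw [w1, z0, bar_zero]
  · fin_cases s
    · exact bar_one
    · exact bar_zero

lemma F_A (H : Bg g ℓ) (hacc : ∀ x E, IsFr g ℓ x E → ∀ i, ev (covD g (lowerField g ℓ) x) ![E 0, E i] = 0)
    (hopt : ∀ x E, IsFr g ℓ x E → ∀ i j, i ≠ 0 → i ≠ 1 → j ≠ 0 → j ≠ 1 →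
      ev (covD g (lowerField g ℓ) x) ![E i, E j] = 0) : F g ℓ (-1) (Af g ℓ) := by
  refine ⟨sm_A H.hg H.hsm, fun x => ?_⟩
  obtain ⟨E, hE⟩ := H.frame x
  refine FAt.of_frame H hE fun a ha => ?_
  rw [vec2]
  rw [Fin.sum_univ_two] at ha
  rcases wt_cases H.ne01 (a 1) with ⟨e, -, -⟩ | ⟨e, e', -⟩ | ⟨e, e', e3, -⟩
  · rw [e, hE.e0]; exact A_null H x _
  · rcases wt_cases H.ne01 (a 0) with ⟨f, -, -⟩ | ⟨f, f', -⟩ | ⟨f, f', f3, -⟩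
    · rw [f]; exact hacc x E hE _
    · omega
    · omega
  · rcases wt_cases H.ne01 (a 0) with ⟨f, -, -⟩ | ⟨f, f', -⟩ | ⟨f, f', f3, -⟩
    · rw [f]; exact hacc x E hE _
    · omega
    · exact hopt x E hE _ _ f f' e e'

lemma ev_D_cd {k : ℕ} (T : TF n (Fin k)) (x : Pt n) (Y : Fin k → Fin n → ℝ) :
    ev (D g ℓ T x) Y = ev (covD g T x) (Fin.cons (ℓ x) Y : Fin (k+1) → Fin n → ℝ) := by
  rw [ev_D, ev_covD]

lemma D_lam (H : Bg g ℓ) (hA : F g ℓ (-1) (Af g ℓ)) : D g ℓ (lam g ℓ) = fun _ _ => 0 := by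
  funext x idx
  obtain ⟨E, hE⟩ := H.frame x
  refine zero_of_frame H hE (t := D g ℓ (lam g ℓ) x) (fun a => ?_) idx
  rw [ev_D_cd, ← hE.e0]
  have h := (hA.2 x).frame H hE ![0, a 0] (by
    rw [Fin.sum_univ_two]
    have := wt_ge (a 0)
    show -1 < wt (0 : Fin n) + wt (a 0)
    rw [wt_zero]; omega)
  rw [← h]
  congr 1
  funext s; fin_cases s <;> rfl

lemma deriv_frame (H : Bg g ℓ) (hA : F g ℓ (-1) (Af g ℓ)) {x : Pt n} {E : Fin n → Fin n → ℝ} (hE : IsFr g ℓ x E)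
    {k : ℕ} {b : ℤ} {T : TF n (Fin k)} (hT : F g ℓ b T) (c : Fin (k+1) → Fin n)
    (hc : ev (covD g T x) (fun s => E (c s)) ≠ 0) :
    ∑ m : Fin k, wt (c m.succ) ≤ b ∨ (wt (c 0) = -1 ∧ ∑ m : Fin k, wt (c m.succ) = b + 1) := by
  by_contra hcon
  apply hc
  have e : (fun s => E (c s)) = (Fin.cons (E (c 0)) (fun m : Fin k => E (c m.succ)) : Fin (k+1) → Fin n → ℝ) := by
    funext s; refine Fin.cases ?_ (fun j => ?_) s <;> rfl
  rw [e, ev_covD]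
  push Not at hcon
  obtain ⟨h1, h2⟩ := hcon
  refine deriv_F H hA hT (hE.inV H (c 0)) (fun m => hE.inV H (c m.succ)) h1 ?_
  by_cases h3 : wt (c 0) = -1
  · right; have := h2 h3; omega
  · left; have := wt_ge (c 0); omega

end forward

section forward2
set_option linter.unusedSectionVars false
variable {n : ℕ} [NeZero n] {g : MetricField n} {ℓ : VecField n}

lemma F.starA (H : Bg g ℓ) {k : ℕ} {a b : ℤ} {A : TF n (Fin 2)} {U : TF n (Fin k)} (hA : F g ℓ a A)
    (hU : F g ℓ b U) (j : Fin k) : F g ℓ (a + b) (VSI.starA g A j U) :=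
  Gm.starA (m := 0) H hA hU j

lemma F.starK (H : Bg g ℓ) {k : ℕ} {a b : ℤ} {K : TF n (Fin 3)} {U : TF n (Fin k)} (hK : F g ℓ a K)
    (hU : F g ℓ b U) (j : Fin k) : F g ℓ (a + b) (VSI.starK g K j U) :=
  Gm.starK (m := 0) H hK hU j

lemma F.sub {ι : Type} [Fintype ι] [DecidableEq ι] {b : ℤ} {T U : TF n ι} (hT : F g ℓ b T) (hU : F g ℓ b U) :
    F g ℓ b (fun x i => T x i - U x i) :=
  Gm.sub (m := 0) hT hU

lemma J_eq (H : Bg g ℓ) (hl : D g ℓ (lam g ℓ) = fun _ _ => 0) :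
    Jf g ℓ = fun x i => - (D g ℓ (Af g ℓ) x i + starA g (Af g ℓ) 0 (Af g ℓ) x i) := by
  funext x i
  rw [D_Af H hl]; ring

lemma ev_J_symm (H : Bg g ℓ) (x : Pt n) (X Y : Fin n → ℝ) :
    ev (Jf g ℓ x) ![X, Y] = ev (Jf g ℓ x) ![Y, X] := by
  rw [ev_two, ev_two]
  simp only [Finset.mul_sum]
  rw [Finset.sum_comm]
  refine Finset.sum_congr rfl fun a _ => Finset.sum_congr rfl fun b _ => ?_
  rw [Jf_symm H.hg]; ring

/-- Step 2, the key component. -/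
lemma step2a (H : Bg g ℓ) (hV : IsVSI g (lowerField g ℓ)) (hA : F g ℓ (-1) (Af g ℓ)) {x : Pt n}
    {E : Fin n → Fin n → ℝ} (hE : IsFr g ℓ x E) {i : Fin n} (hi0 : i ≠ 0) (hi1 : i ≠ 1) :
    ev (covD g (Af g ℓ) x) ![E 0, E 1, E i] = 0 := by
  have key : ∀ c : Fin 3 → Fin n, ev (covD g (Af g ℓ) x) (fun s => E (c s)) ≠ 0 →
      wt (c 1) + wt (c 2) ≤ -1 ∨ (wt (c 0) = -1 ∧ wt (c 1) + wt (c 2) = 0) := by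
    intro c hc
    have := deriv_frame H hA hE hA c hc
    rw [Fin.sum_univ_two] at this
    exact this
  have h := sch2_zero (k := 2) H.hg hE (Equiv.swap 0 1) hV (fun c hc hc' => ?_) ![0, 1, i] (fun s => ?_)
  · rw [← h]
    exact congrArg (ev (covD g (Af g ℓ) x)) (vec3 E ![0, 1, i]).symm
  · have k1 := key c hc
    have k2 : wt (bar (c 0)) + wt (bar (c 2)) ≤ -1 ∨ (wt (bar (c 1)) = -1 ∧ wt (bar (c 0)) + wt (bar (c 2)) = 0) :=
      key (fun s => bar (c ((Equiv.swap (0 : Fin 3) 1).symm s))) hc'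
    simp only [wt_bar H.ne01] at k2
    intro s
    rcases wt_cases H.ne01 (c 0) with ⟨e0, f0, g0⟩ | ⟨e0, f0, g0⟩ | ⟨e0, e0', f0, g0⟩ <;>
    rcases wt_cases H.ne01 (c 1) with ⟨e1, f1, g1⟩ | ⟨e1, f1, g1⟩ | ⟨e1, e1', f1, g1⟩ <;>
    rcases wt_cases H.ne01 (c 2) with ⟨e2, f2, g2⟩ | ⟨e2, f2, g2⟩ | ⟨e2, e2', f2, g2⟩ <;>
    first
    | (exfalso; omega)
    | (fin_cases s
       · show bar (c 1) = c 0
         rw [g1, e0]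
       · show bar (c 0) = c 1
         rw [g0, e1]
       · exact g2)
  · fin_cases s
    · exact bar_one
    · exact bar_zero
    · exact bar_else hi0 hi1

/-- Step 2. -/
lemma step2 (H : Bg g ℓ) (hV : IsVSI g (lowerField g ℓ)) (hA : F g ℓ (-1) (Af g ℓ)) :
    F g ℓ (-2) (D g ℓ (Af g ℓ)) := by
  have hl := D_lam H hA
  have hD1 : F g ℓ (-1) (D g ℓ (Af g ℓ)) := F.D H hA hA
  have hAA : F g ℓ (-2) (starA g (Af g ℓ) 0 (Af g ℓ)) := F.starA H hA hA 0
  refine ⟨hD1.1, fun x => ?_⟩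
  obtain ⟨E, hE⟩ := H.frame x
  have h1 : ∀ i, i ≠ 0 → i ≠ 1 → ev (D g ℓ (Af g ℓ) x) ![E 1, E i] = 0 := by
    intro i hi0 hi1
    rw [ev_D_cd, ← hE.e0]
    exact step2a H hV hA hE hi0 hi1
  have hJ : ∀ X Y, ev (Jf g ℓ x) ![X, Y]
      = - (ev (D g ℓ (Af g ℓ) x) ![X, Y] + ev (starA g (Af g ℓ) 0 (Af g ℓ) x) ![X, Y]) := by
    intro X Y
    rw [J_eq H hl, ev_neg, ev_add]
  have hz : ∀ b c, -2 < wt b + wt c → ev (starA g (Af g ℓ) 0 (Af g ℓ) x) ![E b, E c] = 0 := by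
    intro b c hbc
    have := (hAA.2 x).frame H hE ![b, c] (by rw [Fin.sum_univ_two]; exact hbc)
    rw [vec2] at this
    exact this
  have h2 : ∀ i, i ≠ 0 → i ≠ 1 → ev (D g ℓ (Af g ℓ) x) ![E i, E 1] = 0 := by
    intro i hi0 hi1
    have w := wt_else H.ne01 hi0 hi1
    have w1 := wt_one H.ne01
    have s := ev_J_symm H x (E i) (E 1)
    rw [hJ, hJ, h1 i hi0 hi1, hz i 1 (by omega), hz 1 i (by omega)] at s
    linarith
  refine FAt.of_frame H hE fun a ha => ?_
  by_cases hw : -1 < ∑ m, wt (a m)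
  · exact (hD1.2 x).frame H hE a hw
  rw [vec2]
  rw [Fin.sum_univ_two] at ha hw
  rcases wt_cases H.ne01 (a 0) with ⟨e0, f0, g0⟩ | ⟨e0, f0, g0⟩ | ⟨e0, e0', f0, g0⟩ <;>
  rcases wt_cases H.ne01 (a 1) with ⟨e1, f1, g1⟩ | ⟨e1, f1, g1⟩ | ⟨e1, e1', f1, g1⟩ <;>
  first
  | (exfalso; omega)
  | (rw [e0]; exact h1 _ e1 e1')
  | (rw [e1]; exact h2 _ e0 e0')

lemma F_zero_of (H : Bg g ℓ) {T : TF n (Fin 2)} (hT : F g ℓ (-3) T) : T = fun _ _ => 0 := by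
  funext x idx
  obtain ⟨E, hE⟩ := H.frame x
  refine zero_of_frame H hE (t := T x) (fun a => (hT.2 x).frame H hE a ?_) idx
  rw [Fin.sum_univ_two]
  have := wt_ge (a 0)
  have := wt_ge (a 1)
  omega

/-- Step 3. -/
lemma step3 (H : Bg g ℓ) (hV : IsVSI g (lowerField g ℓ)) (hA : F g ℓ (-1) (Af g ℓ)) :
    F g ℓ (-3) (D g ℓ (D g ℓ (Af g ℓ))) := by
  have hDA := step2 H hV hA
  have hH : F g ℓ (-1) (cd g (Af g ℓ)) := F.covD H hA hA hDA
  have hK : F g ℓ (-1) (Kf g ℓ) := by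
    rw [Kf_eq' H]
    exact (hH.reix _).sub (hH.reix _)
  have hDD : F g ℓ (-2) (D g ℓ (D g ℓ (Af g ℓ))) := F.D H hA hDA
  refine ⟨hDD.1, fun x => ?_⟩
  obtain ⟨E, hE⟩ := H.frame x
  -- components of `D H` of weight at least `-1`
  have hDH : ∀ Y : Fin 3 → Fin n, -2 < ∑ m, wt (Y m) → ev (D g ℓ (cd g (Af g ℓ)) x) (fun s => E (Y s))
      = ev (cd g (D g ℓ (Af g ℓ)) x) (fun s => E (Y s)) := by
    intro Y hY
    rw [D_cd H (sm_A H.hg H.hsm)]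
    rw [ev_sub, ev_sub]
    have z1 := ((F.starA H hA hH 0).2 x).frame H hE Y hY
    have z2 : ev (fun i => ∑ m, starK g (Kf g ℓ) m (Af g ℓ) x i) (fun s => E (Y s)) = 0 := by
      have := Gm.sum (g := g) (ℓ := ℓ) (m := 0) (b := -1 + -1) Finset.univ (T := fun m => starK g (Kf g ℓ) m (Af g ℓ))
        (fun m => Gm.starK (m := 0) H hK hA m)
      exact (this.F.2 x).frame H hE Y hY
    rw [z1, z2, sub_zero, sub_zero]
  have key : ∀ c : Fin 4 → Fin n, ev (covD g (cd g (Af g ℓ)) x) (fun s => E (c s)) ≠ 0 →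
      wt (c 1) + wt (c 2) + wt (c 3) ≤ -1 ∨ (wt (c 0) = -1 ∧ wt (c 1) + wt (c 2) + wt (c 3) = 0) := by
    intro c hc
    have := deriv_frame H hA hE hH c hc
    rw [Fin.sum_univ_three] at this
    exact this
  have key2 : ∀ c : Fin 4 → Fin n, ev (covD g (cd g (Af g ℓ)) x) (fun s => E (c s)) ≠ 0 → c 0 = 0 →
      wt (c 1) + wt (c 2) + wt (c 3) = -1 →
      wt (c 2) + wt (c 3) ≤ -2 ∨ (wt (c 1) = -1 ∧ wt (c 2) + wt (c 3) = -1) := by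
    intro c hc hc0 hw
    have e : (fun s => E (c s)) = (Fin.cons (ℓ x) (fun m : Fin 3 => E (c m.succ)) : Fin 4 → Fin n → ℝ) := by
      funext s
      refine Fin.cases ?_ (fun j => ?_) s
      · show E (c 0) = ℓ x
        rw [hc0, hE.e0]
      · rfl
    rw [e, ← ev_D_cd, hDH (fun m => c m.succ) (by
      rw [Fin.sum_univ_three]
      show -2 < wt (c 1) + wt (c 2) + wt (c 3)
      omega)] at hc
    have := deriv_frame H hA hE hDA (fun m => c m.succ) hc
    rw [Fin.sum_univ_two] at this
    exact this
  let σ : Equiv.Perm (Fin 4) := Equiv.swap 0 2 * Equiv.swap 1 3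
  have h := sch2_zero (k := 3) H.hg hE σ hV (fun c hc hc' => ?_) ![0, 0, 1, 1] (fun s => ?_)
  · -- conclusion
    have h11 : ev (D g ℓ (D g ℓ (Af g ℓ)) x) ![E 1, E 1] = 0 := by
      have w1 := wt_one H.ne01
      have w0 := wt_zero (n := n)
      have t := hDH ![0, 1, 1] (by
        rw [Fin.sum_univ_three]
        show -2 < wt (0 : Fin n) + wt 1 + wt 1
        omega)
      rw [vec3] at t
      have t2 : ev (D g ℓ (D g ℓ (Af g ℓ)) x) ![E 1, E 1] = ev (cd g (D g ℓ (Af g ℓ)) x) ![E 0, E 1, E 1] := by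
        rw [ev_D_cd, ← hE.e0]; rfl
      have t3 : ev (D g ℓ (cd g (Af g ℓ)) x) ![E 0, E 1, E 1] = 0 := by
        rw [ev_D_cd, ← hE.e0, ← h]
        refine congrArg (ev (covD g (cd g (Af g ℓ)) x)) ?_
        funext s; fin_cases s <;> rfl
      rw [t2, ← t3]
      exact t.symm
    refine FAt.of_frame H hE fun a ha => ?_
    by_cases hw : -2 < ∑ m, wt (a m)
    · exact (hDD.2 x).frame H hE a hw
    rw [vec2]
    rw [Fin.sum_univ_two] at ha hw
    rcases wt_cases H.ne01 (a 0) with ⟨e0, f0, g0⟩ | ⟨e0, f0, g0⟩ | ⟨e0, e0', f0, g0⟩ <;>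
    rcases wt_cases H.ne01 (a 1) with ⟨e1, f1, g1⟩ | ⟨e1, f1, g1⟩ | ⟨e1, e1', f1, g1⟩ <;>
    first
    | (exfalso; omega)
    | (rw [e0, e1]; exact h11)
  · let c' : Fin 4 → Fin n := fun s => bar (c (σ.symm s))
    have q0 : c' 0 = bar (c 2) := rfl
    have q1 : c' 1 = bar (c 3) := rfl
    have q2 : c' 2 = bar (c 0) := rfl
    have q3 : c' 3 = bar (c 1) := rfl
    have k1 := key c hc
    have k2 := key c' hc'
    have l1 := key2 c hc
    have l2 := key2 c' hc'
    rw [q0, q1, q2, q3] at k2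
    simp only [wt_bar H.ne01] at k2
    have b0 := wt_ge (c 0)
    have b0' := wt_le (c 0)
    have b2 := wt_ge (c 2)
    have b2' := wt_le (c 2)
    have hw0 : wt (c 0) = 1 := by omega
    have hw2 : wt (bar (c 2)) = 1 := by rw [wt_bar H.ne01]; omega
    have e0 : c 0 = 0 := wt_eq_one H.ne01 hw0
    have e2 : c 2 = 1 := by rw [← bar_bar (c 2), wt_eq_one H.ne01 hw2, bar_zero]
    have l1' := l1 e0 (by rw [wt_bar H.ne01] at hw2; omega)
    rw [wt_bar H.ne01] at hw2
    have l2' := l2 (by rw [q0, e2, bar_one]) (by rw [q1, q2, q3]; simp only [wt_bar H.ne01]; omega)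
    rw [q1, q2, q3] at l2'
    simp only [wt_bar H.ne01] at l2'
    have b1 := wt_ge (c 1)
    have b1' := wt_le (c 1)
    have b3 := wt_ge (c 3)
    have b3' := wt_le (c 3)
    have hw1 : wt (c 1) = 1 := by omega
    have hw3 : wt (bar (c 3)) = 1 := by rw [wt_bar H.ne01]; omega
    have e1 : c 1 = 0 := wt_eq_one H.ne01 hw1
    have e3 : c 3 = 1 := by rw [← bar_bar (c 3), wt_eq_one H.ne01 hw3, bar_zero]
    intro s
    show c' s = c s
    fin_cases s
    · exact q0.trans (by rw [e2, bar_one]; exact e0.symm)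
    · exact q1.trans (by rw [e3, bar_one]; exact e1.symm)
    · exact q2.trans (by rw [e0, bar_zero]; exact e2.symm)
    · exact q3.trans (by rw [e1, bar_zero]; exact e3.symm)
  · fin_cases s
    · exact bar_one
    · exact bar_one
    · exact bar_zero
    · exact bar_zero

/-- The VSI property makes the covariant derivative of `ℓ` balanced. -/
lemma Gm_A_of_vsi (H : Bg g ℓ) (hV : IsVSI g (lowerField g ℓ)) (hA : F g ℓ (-1) (Af g ℓ)) (m : ℕ) :
    Gm g ℓ m (-1) (Af g ℓ) := by
  have hl := D_lam H hA
  have h2 : Gm g ℓ 2 (-1) (Af g ℓ) := ⟨hA, step2 H hV hA, step3 H hV hA⟩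
  have hJ1 : Gm g ℓ 1 (-2) (Jf g ℓ) := by
    rw [J_eq H hl]
    exact (Gm.add h2.2 (Gm.starA H h2.pred h2.pred 0)).neg
  refine Gm.A_of_J H hl hA (fun m => ?_) m
  cases m with
  | zero => exact hJ1.F
  | succ m =>
    refine ⟨hJ1.F, ?_⟩
    rw [F_zero_of H hJ1.2]
    exact Gm.zero

end forward2

section final
set_option linter.unusedSectionVars false
variable {n : ℕ} [NeZero n] {g : MetricField n} {ℓ : VecField n}

lemma vec4 {α : Type} (c : Fin 4 → α) : c = ![c 0, c 1, c 2, c 3] := by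
  funext s; fin_cases s <;> rfl

lemma ev_R_last (x : Pt n) (X Y Z W : Fin n → ℝ) :
    ev (riemann g x) ![X, Y, Z, W] = - ev (riemann g x) ![X, Y, W, Z] := by
  have h : riemann g x = fun i => - (fun i : Fin 4 → Fin n => riemann g x (fun m => i (Equiv.swap 2 3 m))) i := by
    funext i
    have e : (fun m => i (Equiv.swap 2 3 m)) = ![i 0, i 1, i 3, i 2] := by
      funext s; fin_cases s <;> rfl
    show riemann g x i = - riemann g x (fun m => i (Equiv.swap 2 3 m))
    rw [e, ← riem_last, ← vec4]
  have e : (fun m => (![X, Y, Z, W] : Fin 4 → Fin n → ℝ) (Equiv.swap 2 3 m)) = ![X, Y, W, Z] := by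
    funext s; fin_cases s <;> rfl
  have h2 := congrArg (fun t => ev t ![X, Y, Z, W]) h
  refine h2.trans ?_
  show ev (fun i => - (fun i : Fin 4 → Fin n => riemann g x (fun m => i (Equiv.swap 2 3 m))) i) ![X, Y, Z, W] = _
  rw [ev_neg, ev_reix, e]

lemma ev_R_pair (hg : IsLorentzMetric g) (x : Pt n) (X Y Z W : Fin n → ℝ) :
    ev (riemann g x) ![X, Y, Z, W] = ev (riemann g x) ![Z, W, X, Y] := by
  have h : riemann g x = fun i : Fin 4 → Fin n => riemann g x
      (fun m => i ((Equiv.swap 0 2 * Equiv.swap 1 3 : Equiv.Perm (Fin 4)) m)) := by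
    funext i
    have e : (fun m => i ((Equiv.swap 0 2 * Equiv.swap 1 3 : Equiv.Perm (Fin 4)) m)) = ![i 2, i 3, i 0, i 1] := by
      funext s; fin_cases s <;> rfl
    rw [e, ← riem_pair hg, ← vec4]
  have e : (fun m => (![X, Y, Z, W] : Fin 4 → Fin n → ℝ) ((Equiv.swap 0 2 * Equiv.swap 1 3 : Equiv.Perm (Fin 4)) m))
      = ![Z, W, X, Y] := by
    funext s; fin_cases s <;> rfl
  have h2 := congrArg (fun t => ev t ![X, Y, Z, W]) h
  refine h2.trans ?_
  show ev (fun i : Fin 4 → Fin n => riemann g x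
      (fun m => i ((Equiv.swap 0 2 * Equiv.swap 1 3 : Equiv.Perm (Fin 4)) m))) ![X, Y, Z, W] = _
  rw [ev_reix, e]

/-- Slot permutation relating the curvature and its contraction. -/
def pK : Equiv.Perm (Fin 4) where
  toFun := ![3, 2, 0, 1]
  invFun := ![2, 3, 1, 0]
  left_inv := by decide
  right_inv := by decide

lemma ev_R_K (hg : IsLorentzMetric g) (x : Pt n) (X Y Z : Fin n → ℝ) :
    ev (riemann g x) ![Z, Y, ℓ x, X] = ev (Kf g ℓ x) ![X, Y, Z] := by
  have e : (fun m => (Fin.cons (ℓ x) ![X, Y, Z] : Fin 4 → Fin n → ℝ) (pK m)) = ![Z, Y, ℓ x, X] := by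
    funext s; fin_cases s <;> rfl
  rw [← e, ← ev_reix pK (riemann g x), ev_cons, ← ev_sum]
  refine congrArg (fun t => ev t ![X, Y, Z]) ?_
  funext i
  have hi : i = ![i 0, i 1, i 2] := by funext m; fin_cases m <;> rfl
  have hK := Kf_apply (ℓ := ℓ) hg x (i 0) (i 1) (i 2)
  rw [← hi] at hK
  rw [hK]
  refine Finset.sum_congr rfl fun b _ => ?_
  have e2 : (fun m => (Fin.cons b i : Fin 4 → Fin n) (pK m)) = ![i 2, i 1, b, i 0] := by
    funext s; fin_cases s <;> rfl
  rw [e2]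

lemma F_riem (H : Bg g ℓ) (hK : F g ℓ (-1) (Kf g ℓ)) : F g ℓ 0 (Rf g) := by
  refine ⟨sm_riem H.hg, fun x => ?_⟩
  obtain ⟨E, hE⟩ := H.frame x
  have h2 : ∀ p q r, -1 < wt p + wt q + wt r → ev (riemann g x) ![E p, E q, E 0, E r] = 0 := by
    intro p q r h
    rw [hE.e0, ev_R_K H.hg]
    have := (hK.2 x).frame H hE ![r, q, p] (by
      rw [Fin.sum_univ_three]
      show -1 < wt r + wt q + wt p
      omega)
    rw [vec3] at this
    exact this
  have h3 : ∀ p q r, -1 < wt p + wt q + wt r → ev (riemann g x) ![E p, E q, E r, E 0] = 0 := by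
    intro p q r h
    rw [ev_R_last, h2 p q r h, neg_zero]
  refine FAt.of_frame H hE fun a ha => ?_
  have hv : (fun m => E (a m)) = ![E (a 0), E (a 1), E (a 2), E (a 3)] := vec4 (fun m => E (a m))
  rw [hv]
  rw [Fin.sum_univ_four] at ha
  have b0 := wt_le (a 0)
  have b1 := wt_le (a 1)
  have b2 := wt_le (a 2)
  have b3 := wt_le (a 3)
  by_cases z2 : wt (a 2) = 1
  · rw [wt_eq_one H.ne01 z2]; exact h2 _ _ _ (by omega)
  by_cases z3 : wt (a 3) = 1
  · rw [wt_eq_one H.ne01 z3]; exact h3 _ _ _ (by omega)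
  show ev (riemann g x) _ = 0
  rw [ev_R_pair H.hg]
  by_cases z0 : wt (a 0) = 1
  · rw [wt_eq_one H.ne01 z0]; exact h2 _ _ _ (by omega)
  · have z1 : wt (a 1) = 1 := by omega
    rw [wt_eq_one H.ne01 z1]; exact h3 _ _ _ (by omega)

/-- Slot permutations appearing in the contracted Bianchi identity. -/
def pB : Equiv.Perm (Fin 4) where
  toFun := ![2, 3, 1, 0]
  invFun := ![3, 2, 0, 1]
  left_inv := by decide
  right_inv := by decide

lemma D_Rf' (H : Bg g ℓ) : D g ℓ (Rf g) = fun x i => ((reix pB (cd g (Kf g ℓ)) x i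
    - reix (pB.trans (Equiv.swap 2 3)) (cd g (Kf g ℓ)) x i)
      - starA g (Af g ℓ) 2 (Rf g) x i) - starA g (Af g ℓ) 3 (Rf g) x i := by
  funext x i
  have h := D_Rf H x (i 0) (i 1) (i 2) (i 3)
  have e1 : (fun m => i (pB m)) = ![i 2, i 3, i 1, i 0] := by funext s; fin_cases s <;> rfl
  have e2 : (fun m => i ((pB.trans (Equiv.swap 2 3)) m)) = ![i 3, i 2, i 1, i 0] := by
    funext s; fin_cases s <;> rfl
  rw [← vec4] at h
  rw [h]
  show _ = ((cd g (Kf g ℓ) x (fun m => i (pB m)) - cd g (Kf g ℓ) x (fun m => i ((pB.trans (Equiv.swap 2 3)) m)))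
      - starA g (Af g ℓ) 2 (Rf g) x i) - starA g (Af g ℓ) 3 (Rf g) x i
  rw [e1, e2]

lemma Gm_Rf (H : Bg g ℓ) (hA : ∀ m, Gm g ℓ m (-1) (Af g ℓ)) (m : ℕ) : Gm g ℓ m 0 (Rf g) := by
  have hR := F_riem H (Gm.Kf_of_A H hA 0)
  induction m with
  | zero => exact hR
  | succ m ih =>
    refine ⟨hR, ?_⟩
    rw [D_Rf' H]
    have hc : Gm g ℓ m (0 - 1) (cd g (Kf g ℓ)) := Gm.cd_of_A H hA (Gm.Kf_of_A H hA) m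
    exact (((hc.reix _).sub (hc.reix _)).sub (Gm.starA H (hA m) ih 2)).sub (Gm.starA H (hA m) ih 3)

lemma fr_of_null (H : Bg g ℓ) {x : Pt n} (fr : NullFrameAt g x) (h : fr.e 0 = ℓ x) : IsFr g ℓ x fr.e := by
  have two : ∀ i : Fin n, i ≠ 0 → i ≠ 1 → 2 ≤ (i : ℕ) := by
    intro i h0 h1
    have a : (i : ℕ) ≠ 0 := fun e => h0 (Fin.ext (by rw [e, Fin.val_zero]))
    have b : (i : ℕ) ≠ 1 := fun e => h1 (Fin.ext (by rw [e, val_one_of_ne H.ne01]))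
    omega
  refine ⟨h, fun a b => ?_⟩
  rcases wt_cases H.ne01 a with ⟨ea, -, fa⟩ | ⟨ea, -, fa⟩ | ⟨ea, ea', -, fa⟩ <;> rw [fa] <;>
  rcases wt_cases H.ne01 b with ⟨eb, -, fb⟩ | ⟨eb, -, fb⟩ | ⟨eb, eb', -, fb⟩
  · rw [ea, eb, fr.h00, if_neg H.ne01]
  · rw [ea, eb, fr.h01, if_pos rfl]
  · rw [ea, if_neg eb', fr.h0i b (two b eb eb')]
  · rw [ea, eb, gdot_comm H.hg, fr.h01, if_pos rfl]
  · rw [ea, eb, fr.h11, if_neg H.ne01.symm]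
  · rw [ea, if_neg eb, fr.h1i b (two b eb eb')]
  · rw [eb, gdot_comm H.hg, fr.h0i a (two a ea ea'), if_neg (Ne.symm ea)]
  · rw [eb, gdot_comm H.hg, fr.h1i a (two a ea ea'), if_neg (Ne.symm ea')]
  · rw [fr.hij a b (two a ea ea') (two b eb eb')]
    simp only [eq_comm]

lemma boost_of_F (H : Bg g ℓ) {k : ℕ} {b : ℤ} {T : TensorField n k} (hT : F g ℓ b (ι := Fin k) T) :
    BoostOrderLE g ℓ T b := by
  intro x fr h a ha
  rw [bw_eq] at ha
  exact (hT.2 x).frame H (fr_of_null H fr h) a ha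

lemma F_of_boost (H : Bg g ℓ) {k : ℕ} {b : ℤ} {T : TensorField n k} (hs : Sm (ι := Fin k) T)
    (hT : BoostOrderLE g ℓ T b) : F g ℓ b (ι := Fin k) T := by
  refine ⟨hs, fun x => ?_⟩
  obtain ⟨E, hE⟩ := H.frame x
  refine FAt.of_frame H hE fun a ha => ?_
  have hne : ∀ i : Fin n, 2 ≤ (i : ℕ) → i ≠ 0 ∧ i ≠ 1 := by
    intro i hi
    refine ⟨fun e => ?_, fun e => ?_⟩
    · rw [e, Fin.val_zero] at hi; omega
    · rw [e, val_one_of_ne H.ne01] at hi; omega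
  let fr : NullFrameAt g x :=
    { e := E
      h00 := by rw [hE.h, bar_zero, if_neg H.ne01]
      h11 := by rw [hE.h, bar_one, if_neg H.ne01.symm]
      h01 := by rw [hE.h, bar_zero, if_pos rfl]
      h0i := fun i hi => by rw [hE.h, bar_zero, if_neg (hne i hi).2]
      h1i := fun i hi => by rw [hE.h, bar_one, if_neg (hne i hi).1]
      hij := fun i j hi hj => by
        rw [hE.h, bar_else (hne i hi).1 (hne i hi).2]
        simp only [eq_comm] }
  rw [← bw_eq] at ha
  exact hT x fr hE.e0 a ha

lemma sm_iter (hg : IsLorentzMetric g) (i : ℕ) : Sm (ι := Fin (4+i)) (covDIter g (riemann g) i) := by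
  induction i with
  | zero => exact sm_riem hg
  | succ i ih => exact Sm.covD hg ih

lemma backward (hg : IsLorentzMetric g) (hsm : IsSmoothVec ℓ) (h0 : ∀ x, ℓ x ≠ 0)
    (hk : IsKundt g ℓ) (ha : IsAffinelyParam g ℓ) (hd : IsDegenerateKundt g ℓ) :
    IsVSI g (lowerField g ℓ) := by
  have H : Bg g ℓ := ⟨hg, hsm, h0, hk.1.2.2⟩
  have hA : F g ℓ (-1) (Af g ℓ) := by
    refine F_A H (fun x E hE i => ?_) (fun x E hE i j hi0 hi1 hj0 hj1 => ?_)
    · rw [ev_two, hE.e0]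
      simp only [Finset.mul_sum]
      rw [Finset.sum_comm]
      refine Finset.sum_eq_zero fun b _ => ?_
      have := ha x b
      have e : ∑ a, ℓ x a * (E i b * covD g (lowerField g ℓ) x ![a, b])
          = E i b * ∑ a, ℓ x a * nablaLow g ℓ x a b := by
        rw [Finset.mul_sum]
        refine Finset.sum_congr rfl fun a _ => ?_
        show _ = E i b * (ℓ x a * covD g (lowerField g ℓ) x ![a, b])
        ring
      rw [e, this, mul_zero]
    · have h := hk.2.2 x (E j) (E i)
        (by rw [← hE.e0, hE.h, bar_else hj0 hj1, if_neg (Ne.symm hj0)])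
        (by rw [← hE.e0, hE.h, bar_else hi0 hi1, if_neg (Ne.symm hi0)])
      rw [ev_two, ← h, Finset.sum_comm]
      refine Finset.sum_congr rfl fun a _ => ?_
      rw [Finset.mul_sum]
      refine Finset.sum_congr rfl fun b _ => ?_
      show _ = E j b * E i a * covD g (lowerField g ℓ) x ![a, b]
      ring
  have hl := D_lam H hA
  have hR : ∀ i, F g ℓ 0 (ι := Fin (4+i)) (covDIter g (riemann g) i) := fun i =>
    F_of_boost H (sm_iter hg i) (hd.2 i)
  exact vsi_of_F H (F_iter H hl hA hR)

lemma forward (hg : IsLorentzMetric g) (hsm : IsSmoothVec ℓ) (h0 : ∀ x, ℓ x ≠ 0)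
    (hV : IsVSI g (lowerField g ℓ)) : IsKundt g ℓ ∧ IsAffinelyParam g ℓ ∧ IsDegenerateKundt g ℓ := by
  have hnull := null_of_vsi hg hV
  have H : Bg g ℓ := ⟨hg, hsm, h0, hnull⟩
  have hA : F g ℓ (-1) (Af g ℓ) := by
    refine F_A H (fun x E hE i => ?_) (fun x E hE i j hi0 hi1 hj0 hj1 => step1b H hV hE hi0 hi1 hj0 hj1)
    by_cases h1 : i = 1
    · rw [h1]; exact step1c H hV hE
    · exact step1a H hV hE h1
  have hl := D_lam H hA
  have haff : IsAffinelyParam g ℓ := by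
    intro x a
    exact congrFun (congrFun hl x) ![a]
  have hk : IsKundt g ℓ := by
    refine ⟨⟨hsm, h0, hnull⟩, fun x => ⟨0, fun a => by rw [zero_mul]; exact haff x a⟩, fun x X Y hX hY => ?_⟩
    have hX' : InV g ℓ x 0 X := ⟨fun _ => hX, fun h => by omega, fun h => by omega⟩
    have hY' : InV g ℓ x 0 Y := ⟨fun _ => hY, fun h => by omega, fun h => by omega⟩
    have h := hA.2 x ![Y, X] (fun _ => 0) (by intro m; fin_cases m; exact hY'; exact hX') (by simp)
    rw [ev_two] at h
    rw [← h, Finset.sum_comm]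
    refine Finset.sum_congr rfl fun a _ => ?_
    rw [Finset.mul_sum]
    refine Finset.sum_congr rfl fun b _ => ?_
    show X b * Y a * covD g (lowerField g ℓ) x ![a, b] = _
    ring
  have hAm := Gm_A_of_vsi H hV hA
  exact ⟨hk, haff, hk, fun I => boost_of_F H (Gm.iter H hAm (Gm_Rf H hAm) I 0).F⟩

end final

/-- the `p = 1` case of the VSI theorem: a (nowhere vanishing,
smooth) vector field `ℓ` is VSI iff `ℓ` is a Kundt null vector field which is affinely
parameterized, and `g` is a degenerate Kundt metric with respect to `ℓ`. -/
theorem vsi_vector_field_iff {n : ℕ} [NeZero n]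
    (g : MetricField n) (hg : IsLorentzMetric g)
    (ℓ : VecField n) (hsm : IsSmoothVec ℓ) (h0 : ∀ x, ℓ x ≠ 0) :
    IsVSI g (lowerField g ℓ) ↔
      (IsKundt g ℓ ∧ IsAffinelyParam g ℓ ∧ IsDegenerateKundt g ℓ) := by
  exact ⟨forward hg hsm h0, fun h => backward hg hsm h0 h.1 h.2.1 h.2.2⟩

end VSI
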